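/- arXiv:2008.01011 — 6 statements merged into one kernel-verified Lean document; each statement's English description precedes it below -/
import Mathlib

section
/- Let d ∈ ℕ, let 𝒫 = (I_m)_{m∈ℕ} be a d-regular partition of a countably infinite index set I, let p, q ∈ (0,∞] and α ∈ (0,∞) with α > d·(1/2 − 1/p)_+. Then: (i) every x ∈ ℝ^I with ‖x‖_{𝒫,α}^{p,q} < ∞ belongs to ℓ²(I), and there is C > 0 with ‖x‖_{ℓ²} ≤ C·‖x‖_{𝒫,α}^{p,q} for all such x; (ii) the unit ball S := S_{𝒫,α}^{p,q} is a compact subset of ℓ²(I); (iii) there exist a codec (E_R, D_R)_{R∈ℕ} for S in ℓ²(I) and K > 0 such that δ(E_R, D_R) ≤ K·R^{−(α/d − (1/2 − 1/p))} for all R ∈ ℕ; in particular s*(S, ℓ²(I)) ≥ α/d − (1/2 − 1/p). -/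
open MeasureTheory Metric Set ENNReal

noncomputable section

/-- `‖x|_F‖_{ℓ^p(F)} ∈ [0,∞]` for a finset `F ⊆ I`. -/
def finsetLpNorm {I : Type*} (p : ℝ≥0∞) (F : Finset I) (x : I → ℝ) : ℝ≥0∞ :=
  if p = ∞ then ⨆ i ∈ F, ENNReal.ofReal |x i|
  else (∑ i ∈ F, ENNReal.ofReal |x i| ^ p.toReal) ^ (1 / p.toReal)

/-- `‖u‖_{ℓ^q(ℕ)} ∈ [0,∞]` for a sequence `u : ℕ → [0,∞]`. -/
def seqLqNorm (q : ℝ≥0∞) (u : ℕ → ℝ≥0∞) : ℝ≥0∞ :=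
  if q = ∞ then ⨆ m, u m else (∑' m, u m ^ q.toReal) ^ (1 / q.toReal)

/-- The mixed norm `‖x‖_{Pt,α,θ}^{p,q} ∈ [0,∞]`; the blocks are indexed by
`m + 1`, `m : ℕ`, realizing the index set `ℕ = {1, 2, …}` of the paper. -/
def mixedNorm {I : Type*} (Pt : ℕ → Finset I) (p q : ℝ≥0∞) (α θ : ℝ) (x : I → ℝ) : ℝ≥0∞ :=
  seqLqNorm q fun m =>
    ENNReal.ofReal ((2 : ℝ) ^ (α * ((m + 1 : ℕ) : ℝ)) * ((m + 1 : ℕ) : ℝ) ^ θ) *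
      finsetLpNorm p (Pt (m + 1)) x

/-- `Pt` is a `d`-regular partition of `I` with constants `0 < a < A`:
the sets `(Pt m)_{m ≥ 1}` partition `I` and `a·2^(dm) ≤ |Pt m| ≤ A·2^(dm)` for `m ≥ 1`. -/
structure IsRegularPartition {I : Type*} (d : ℕ) (Pt : ℕ → Finset I) (a A : ℝ) : Prop where
  a_pos : 0 < a
  a_lt_A : a < A
  partition : ∀ i : I, ∃! m : ℕ, 0 < m ∧ i ∈ Pt m
  card_lower : ∀ m : ℕ, 0 < m → a * 2 ^ (d * m) ≤ ((Pt m).card : ℝ)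
  card_upper : ∀ m : ℕ, 0 < m → ((Pt m).card : ℝ) ≤ A * 2 ^ (d * m)

variable {X : Type*}

/-- `CompressibleAt S s`: there is a codec `(E_R, D_R)_{R ∈ ℕ}` for `S` with
`sup_{R ∈ ℕ} R^s · δ(E_R, D_R) < ∞`. -/
def CompressibleAt [NormedAddCommGroup X] (S : Set X) (s : ℝ) : Prop :=
  ∃ (E : (R : ℕ) → S → (Fin R → Bool)) (D : (R : ℕ) → (Fin R → Bool) → X) (K : ℝ),
    ∀ R : ℕ, 0 < R → ∀ x : S, (R : ℝ) ^ s * ‖(x : X) - D R (E R x)‖ ≤ K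

/-- The optimal compression rate `s*(S, X) ∈ [0,∞]`. -/
def optRate [NormedAddCommGroup X] (S : Set X) : ℝ≥0∞ :=
  sSup (ENNReal.ofReal '' {s : ℝ | 0 ≤ s ∧ CompressibleAt S s})

/-- The approximation class `A^s(C)` of a codec `C = (E, D)`. -/
def approxClass [NormedAddCommGroup X] (S : Set X)
    (E : (R : ℕ) → S → (Fin R → Bool)) (D : (R : ℕ) → (Fin R → Bool) → X)
    (s : ℝ) : Set S :=
  {x : S | ∃ K : ℝ, ∀ R : ℕ, 0 < R → (R : ℝ) ^ s * ‖(x : X) - D R (E R x)‖ ≤ K}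

/-- `P` has (logarithmic) growth order `s₀`. -/
def HasGrowthOrder [NormedAddCommGroup X] [MeasurableSpace X] (S : Set X)
    (P : Measure S) (s₀ : ℝ) : Prop :=
  ∀ s : ℝ, s₀ < s → ∃ ε₀ c : ℝ, 0 < ε₀ ∧ 0 < c ∧
    ∀ (x : X) (ε : ℝ), 0 < ε → ε < ε₀ →
      P {y : S | (y : X) ∈ Metric.closedBall x ε} ≤
        ENNReal.ofReal ((2 : ℝ) ^ (-(c * ε ^ (-(1 : ℝ) / s))))

/-!
By Hölder's inequality on each block one may replace `p` by `min p 2` and `q` by `∞`: this lowers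
the smoothness `α` but changes neither its sign nor the rate. A block of size `≲ 2 ^ (d * m)` is
quantized by rounding its coordinates to multiples of a step `η`. The exponential Chebyshev
inequality bounds the number of lattice points that occur, and so gives the squared error in
terms of the number of nats spent on the block.

With about `R = 2 ^ (d * M)` bits at hand, `R * 2 ^ (-c * |m - M|)` of them go to level `m`. If
`c > 0` is small, the squared error at level `m` is then at most a constant times
`R ^ (-2 * s) * 2 ^ (-c * |m - M|)`, where `s` is the rate, so both series over `m` converge. As
`s > 0`, these codecs make the unit ball totally bounded; it is closed because the mixed norm is
lower semicontinuous.
-/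

local notation "ℓ²(" I ")" => lp (fun _ : I => ℝ) 2

section LatticeCounting

lemma exp_neg_le_factorial_div_pow {t : ℝ} (ht : 0 < t) (r : ℕ) :
    Real.exp (-t) ≤ r.factorial / t ^ r := by
  rw [Real.exp_neg, ← inv_div]
  exact inv_anti₀ (by positivity) (Real.pow_div_factorial_le_exp t ht.le r)

lemma exists_sum_exp_neg_mul_rpow_le_one_add {p : ℝ} {r : ℕ} (hr : 2 ≤ r * p) :
    ∃ K : ℝ, 0 < K ∧ ∀ l : ℝ, 0 < l → ∀ s : Finset ℤ,
      ∑ z ∈ s, Real.exp (-(l * |(z : ℝ)| ^ p)) ≤ 1 + K / l ^ r := by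
  have hsum : Summable fun z : ℤ => 1 / (z : ℝ) ^ 2 := Real.summable_one_div_int_pow.2 one_lt_two
  have hpos : 0 < ∑' z : ℤ, 1 / (z : ℝ) ^ 2 := hsum.tsum_pos (fun z => by positivity) 1 (by simp)
  refine ⟨r.factorial * ∑' z : ℤ, 1 / (z : ℝ) ^ 2, by positivity, fun l hl s => ?_⟩
  have hterm : ∀ z : ℤ, Real.exp (-(l * |(z : ℝ)| ^ p))
      ≤ (if z = 0 then 1 else 0) + r.factorial / l ^ r * (1 / (z : ℝ) ^ 2) := by
    intro z
    split_ifs with hz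
    · have hexp : Real.exp (-(l * |(z : ℝ)| ^ p)) ≤ 1 := Real.exp_le_one_iff.2 (by
        rw [neg_nonpos]
        positivity)
      exact hexp.trans (le_add_of_nonneg_right (by positivity))
    · have hz1 : (1 : ℝ) ≤ |(z : ℝ)| := by exact_mod_cast Int.one_le_abs hz
      have hpow : (z : ℝ) ^ 2 ≤ (|(z : ℝ)| ^ p) ^ r := by
        rw [← Real.rpow_mul_natCast (abs_nonneg _), ← sq_abs, ← Real.rpow_natCast]
        exact Real.rpow_le_rpow_of_exponent_le hz1 (by push_cast; linarith)
      calc Real.exp (-(l * |(z : ℝ)| ^ p)) ≤ r.factorial / (l * |(z : ℝ)| ^ p) ^ r :=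
            exp_neg_le_factorial_div_pow (by positivity) r
        _ ≤ r.factorial / (l ^ r * (z : ℝ) ^ 2) := by
            rw [mul_pow]
            gcongr
        _ = 0 + r.factorial / l ^ r * (1 / (z : ℝ) ^ 2) := by field_simp; ring
  calc ∑ z ∈ s, Real.exp (-(l * |(z : ℝ)| ^ p))
      ≤ (∑ z ∈ s, if z = 0 then (1 : ℝ) else 0)
          + r.factorial / l ^ r * ∑ z ∈ s, 1 / (z : ℝ) ^ 2 := by
        rw [Finset.mul_sum, ← Finset.sum_add_distrib]
        exact Finset.sum_le_sum fun z _ => hterm z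
    _ ≤ 1 + r.factorial / l ^ r * ∑' z : ℤ, 1 / (z : ℝ) ^ 2 := by
        gcongr
        · rw [Finset.sum_ite_eq']
          split_ifs <;> norm_num
        · exact hsum.sum_le_tsum _ fun z _ => by positivity
    _ = 1 + r.factorial * (∑' z : ℤ, 1 / (z : ℝ) ^ 2) / l ^ r := by ring

lemma log_one_add_le_rpow_div {y ε : ℝ} (hy : 0 ≤ y) (hε : 0 < ε) (hε1 : ε ≤ 1) :
    Real.log (1 + y) ≤ y ^ ε / ε := by
  rw [le_div_iff₀' hε, ← Real.log_rpow (by positivity)]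
  calc Real.log ((1 + y) ^ ε) ≤ (1 + y) ^ ε - 1 := Real.log_le_sub_one_of_pos (by positivity)
    _ ≤ y ^ ε := by
        have := Real.rpow_add_le_add_rpow zero_le_one hy hε.le hε1
        rw [Real.one_rpow] at this
        linarith

/-- The exponent `u` is at our disposal, so that, after raising to the power `N`, the bound stays
useful both for `l` large and for `l` small compared with `1`. -/
lemma exists_sum_exp_neg_mul_rpow_le {p u : ℝ} (hp : 0 < p) (hu : 0 < u) :
    ∃ C : ℝ, 0 < C ∧ ∀ l : ℝ, 0 < l → ∀ s : Finset ℤ,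
      ∑ z ∈ s, Real.exp (-(l * |(z : ℝ)| ^ p)) ≤ Real.exp (C * l ^ (-u)) := by
  obtain ⟨r, hr⟩ := exists_nat_ge (max (2 / p) u)
  have hrp : 2 ≤ r * p := (div_le_iff₀ hp).1 ((le_max_left _ _).trans hr)
  have hur : u ≤ r := (le_max_right _ _).trans hr
  have hr0 : (0 : ℝ) < r := hu.trans_le hur
  obtain ⟨K, hK, hsum⟩ := exists_sum_exp_neg_mul_rpow_le_one_add hrp
  refine ⟨K ^ (u / r) / (u / r), by positivity, fun l hl s => (hsum l hl s).trans ?_⟩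
  rw [← Real.log_le_iff_le_exp (by positivity)]
  calc Real.log (1 + K / l ^ r) ≤ (K / l ^ r) ^ (u / r) / (u / r) :=
        log_one_add_le_rpow_div (by positivity) (by positivity) ((div_le_one hr0).2 hur)
    _ = K ^ (u / r) / (u / r) * l ^ (-u) := by
        rw [Real.div_rpow hK.le (by positivity), ← Real.rpow_natCast l, ← Real.rpow_mul hl.le,
          mul_div_cancel₀ u hr0.ne', Real.rpow_neg hl.le]
        ring

/-- Exponential Chebyshev inequality for the counting measure: every point of `Y` contributes at
least `exp (-T)` to the product partition function. -/
lemma card_le_exp_mul_pow_of_sum_le {ι κ : Type*} [Fintype ι] {φ : κ → ℝ} {Z : ℝ}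
    (hZ : ∀ s : Finset κ, ∑ z ∈ s, Real.exp (-φ z) ≤ Z) {T : ℝ} {Y : Finset (ι → κ)}
    (hY : ∀ y ∈ Y, ∑ i, φ (y i) ≤ T) :
    (Y.card : ℝ) ≤ Real.exp T * Z ^ Fintype.card ι := by
  classical
  set t : ι → Finset κ := fun i => Y.image fun y => y i
  have hYt : Y ⊆ Fintype.piFinset t := fun y hy =>
    Fintype.mem_piFinset.2 fun i => Finset.mem_image_of_mem (fun y : ι → κ => y i) hy
  calc (Y.card : ℝ) = ∑ y ∈ Y, 1 := by simp
    _ ≤ ∑ y ∈ Y, Real.exp T * ∏ i, Real.exp (-φ (y i)) := by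
        refine Finset.sum_le_sum fun y hy => ?_
        rw [← Real.exp_sum, ← Real.exp_add, Finset.sum_neg_distrib]
        exact Real.one_le_exp (by linarith [hY y hy])
    _ ≤ ∑ y ∈ Fintype.piFinset t, Real.exp T * ∏ i, Real.exp (-φ (y i)) :=
        Finset.sum_le_sum_of_subset_of_nonneg hYt fun y _ _ => by positivity
    _ = Real.exp T * ∏ i, ∑ z ∈ t i, Real.exp (-φ z) := by
        rw [← Finset.mul_sum, Finset.prod_univ_sum]
    _ ≤ Real.exp T * Z ^ Fintype.card ι := by
        gcongr
        calc ∏ i, ∑ z ∈ t i, Real.exp (-φ z) ≤ ∏ _i : ι, Z :=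
              Finset.prod_le_prod (fun i _ => by positivity) fun i _ => hZ (t i)
          _ = Z ^ Fintype.card ι := Finset.prod_const Z

end LatticeCounting

section BlockQuantization

variable {I : Type*}

/-- The ball of radius `ρ` of the `ℓ^p` quasi-norm of the coordinates in `F`, for a real exponent
`p > 0`; the coordinates outside `F` are unrestricted. -/
def finsetLpBall (p : ℝ) (F : Finset I) (ρ : ℝ) : Set (I → ℝ) :=
  {x | ∑ i ∈ F, |x i| ^ p ≤ ρ ^ p}

/-- With `b` nats of information about a point of `T`, its coordinates in `F` are known up to a
squared Euclidean error `e`. Encoded by a quantizer with at most `exp b` cells, each of squared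
diameter at most `e` on `F`. -/
def BlockQuantizable (F : Finset I) (T : Set (I → ℝ)) (b e : ℝ) : Prop :=
  ∃ (n : ℕ) (Q : T → Fin n), (n : ℝ) ≤ Real.exp b ∧
    ∀ x y : T, Q x = Q y → ∑ i ∈ F, (x.1 i - y.1 i) ^ 2 ≤ e

lemma BlockQuantizable.mono {F : Finset I} {T : Set (I → ℝ)} {b b' e e' : ℝ}
    (h : BlockQuantizable F T b e) (hb : b ≤ b') (he : e ≤ e') : BlockQuantizable F T b' e' := by
  obtain ⟨n, Q, hn, hQ⟩ := h
  exact ⟨n, Q, hn.trans (Real.exp_le_exp.2 hb), fun x y hxy => (hQ x y hxy).trans he⟩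

lemma blockQuantizable_of_card_le {κ : Type*} {F : Finset I} {T : Set (I → ℝ)} {b e : ℝ}
    (Q : (I → ℝ) → κ) (hcard : ∀ Y : Finset κ, ↑Y ⊆ Q '' T → (Y.card : ℝ) ≤ Real.exp b)
    (hcell : ∀ x ∈ T, ∀ y ∈ T, Q x = Q y → ∑ i ∈ F, (x i - y i) ^ 2 ≤ e) :
    BlockQuantizable F T b e := by
  have hfin : (Q '' T).Finite := by
    by_contra hinf
    obtain ⟨n, hn⟩ := exists_nat_gt (Real.exp b)
    obtain ⟨Y, hY, hYn⟩ := Set.Infinite.exists_subset_card_eq hinf n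
    exact (hcard Y hY).not_gt (hYn ▸ hn)
  have : Fintype (Q '' T) := hfin.fintype
  refine ⟨Fintype.card (Q '' T),
    fun x => Fintype.equivFin (Q '' T) ⟨Q x, Set.mem_image_of_mem Q x.2⟩, ?_,
    fun x y hxy => hcell x x.2 y y.2 (by simpa using hxy)⟩
  rw [← Set.toFinset_card]
  exact hcard _ (Set.coe_toFinset _).subset

lemma abs_round_le_two_mul_abs (z : ℝ) : |(round z : ℝ)| ≤ 2 * |z| := by
  by_cases hz : round z = 0
  · simp [hz]
  · have hone : (1 : ℝ) ≤ |(round z : ℝ)| := by exact_mod_cast Int.one_le_abs hz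
    have hsub := abs_sub_abs_le_abs_sub (round z : ℝ) z
    rw [abs_sub_comm] at hsub
    linarith [abs_sub_round z]

lemma abs_sub_le_of_round_div_eq {x y η : ℝ} (hη : 0 < η) (h : round (x / η) = round (y / η)) :
    |x - y| ≤ η := by
  have hdiv : |x / η - y / η| ≤ 1 := by
    calc |x / η - y / η|
        ≤ |x / η - round (x / η)| + |(round (x / η) : ℝ) - y / η| := abs_sub_le _ _ _
      _ ≤ 1 / 2 + 1 / 2 := by
          gcongr
          · exact abs_sub_round _
          · rw [h, abs_sub_comm]
            exact abs_sub_round _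
      _ = 1 := by norm_num
  rwa [← sub_div, abs_div, abs_of_pos hη, div_le_one hη] at hdiv

lemma sum_sq_le_rpow_mul_sum_rpow {p h : ℝ} (hp : 0 < p) (hp2 : p ≤ 2) {F : Finset I} {z : I → ℝ}
    (hz : ∀ i ∈ F, |z i| ≤ h) : ∑ i ∈ F, z i ^ 2 ≤ h ^ (2 - p) * ∑ i ∈ F, |z i| ^ p := by
  rw [Finset.mul_sum]
  refine Finset.sum_le_sum fun i hi => ?_
  calc z i ^ 2 = |z i| ^ (2 - p) * |z i| ^ p := by
        rw [← Real.rpow_add_of_nonneg (abs_nonneg _) (sub_nonneg.2 hp2) hp.le, sub_add_cancel,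
          Real.rpow_two, sq_abs]
    _ ≤ h ^ (2 - p) * |z i| ^ p := by
        gcongr
        exact hz i hi

lemma abs_sub_rpow_le {p : ℝ} (hp : 0 ≤ p) (x y : ℝ) :
    |x - y| ^ p ≤ 2 ^ p * (|x| ^ p + |y| ^ p) := by
  have hmax : |x - y| ≤ 2 * max |x| |y| := by
    linarith [abs_sub x y, le_max_left |x| |y|, le_max_right |x| |y|]
  calc |x - y| ^ p ≤ (2 * max |x| |y|) ^ p := by gcongr
    _ = 2 ^ p * max |x| |y| ^ p := Real.mul_rpow (by norm_num) (by positivity)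
    _ ≤ 2 ^ p * (|x| ^ p + |y| ^ p) := by
        gcongr
        rcases max_choice |x| |y| with h | h <;> rw [h]
        · exact le_add_of_nonneg_right (by positivity)
        · exact le_add_of_nonneg_left (by positivity)

lemma sum_sq_sub_le_of_mem_finsetLpBall {p η ρ : ℝ} (hp : 0 < p) (hp2 : p ≤ 2) (hη : 0 < η)
    {F : Finset I} {x y : I → ℝ} (hx : x ∈ finsetLpBall p F ρ) (hy : y ∈ finsetLpBall p F ρ)
    (hxy : ∀ i ∈ F, |x i - y i| ≤ η) :
    ∑ i ∈ F, (x i - y i) ^ 2 ≤ min (F.card * η ^ 2) (2 ^ (p + 1) * η ^ (2 - p) * ρ ^ p) := by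
  refine le_min ?_ ?_
  · rw [← nsmul_eq_mul]
    refine Finset.sum_le_card_nsmul _ _ _ fun i hi => ?_
    rw [← sq_abs]
    gcongr
    exact hxy i hi
  · calc ∑ i ∈ F, (x i - y i) ^ 2 ≤ η ^ (2 - p) * ∑ i ∈ F, |x i - y i| ^ p :=
          sum_sq_le_rpow_mul_sum_rpow hp hp2 hxy
      _ ≤ η ^ (2 - p) * ∑ i ∈ F, 2 ^ p * (|x i| ^ p + |y i| ^ p) := by
          gcongr with i
          exact abs_sub_rpow_le hp.le _ _
      _ = η ^ (2 - p) * (2 ^ p * (∑ i ∈ F, |x i| ^ p + ∑ i ∈ F, |y i| ^ p)) := by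
          rw [← Finset.mul_sum, Finset.sum_add_distrib]
      _ ≤ η ^ (2 - p) * (2 ^ p * (ρ ^ p + ρ ^ p)) := by
          gcongr
          · exact hx
          · exact hy
      _ = 2 ^ (p + 1) * η ^ (2 - p) * ρ ^ p := by
          rw [Real.rpow_add_one two_ne_zero]
          ring

lemma sum_abs_round_div_rpow_le {p η ρ : ℝ} (hp : 0 ≤ p) (hη : 0 < η) (hρ : 0 ≤ ρ)
    {F : Finset I} {x : I → ℝ} (hx : x ∈ finsetLpBall p F ρ) :
    ∑ i : F, |(round (x i / η) : ℝ)| ^ p ≤ (2 * ρ / η) ^ p := by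
  calc ∑ i : F, |(round (x i / η) : ℝ)| ^ p = ∑ i ∈ F, |(round (x i / η) : ℝ)| ^ p :=
        Finset.sum_coe_sort F fun i => |(round (x i / η) : ℝ)| ^ p
    _ ≤ ∑ i ∈ F, (2 / η) ^ p * |x i| ^ p := by
        refine Finset.sum_le_sum fun i _ => ?_
        rw [← Real.mul_rpow (by positivity) (abs_nonneg _)]
        refine Real.rpow_le_rpow (abs_nonneg _) ?_ hp
        calc |(round (x i / η) : ℝ)| ≤ 2 * |x i / η| := abs_round_le_two_mul_abs _
          _ = 2 / η * |x i| := by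
              rw [abs_div, abs_of_pos hη]
              ring
    _ = (2 / η) ^ p * ∑ i ∈ F, |x i| ^ p := (Finset.mul_sum ..).symm
    _ ≤ (2 / η) ^ p * ρ ^ p := by
        gcongr
        exact hx
    _ = (2 * ρ / η) ^ p := by
        rw [← Real.mul_rpow (by positivity) hρ, div_mul_eq_mul_div]

lemma blockQuantizable_finsetLpBall_of_step {p η ρ l K : ℝ} (hp : 0 < p) (hp2 : p ≤ 2)
    (hη : 0 < η) (hρ : 0 ≤ ρ) (hl : 0 ≤ l)
    (hK : ∀ s : Finset ℤ, ∑ z ∈ s, Real.exp (-(l * |(z : ℝ)| ^ p)) ≤ Real.exp K) (F : Finset I) :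
    BlockQuantizable F (finsetLpBall p F ρ) (l * (2 * ρ / η) ^ p + F.card * K)
      (min (F.card * η ^ 2) (2 ^ (p + 1) * η ^ (2 - p) * ρ ^ p)) := by
  refine blockQuantizable_of_card_le (fun x (i : F) => round (x i / η)) (fun Y hY => ?_)
    fun x hx y hy hxy => sum_sq_sub_le_of_mem_finsetLpBall hp hp2 hη hx hy fun i hi =>
      abs_sub_le_of_round_div_eq hη (congr_fun hxy ⟨i, hi⟩)
  have hweight : ∀ y ∈ Y, ∑ i, l * |(y i : ℝ)| ^ p ≤ l * (2 * ρ / η) ^ p := by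
    intro y hy
    obtain ⟨x, hx, rfl⟩ := hY hy
    rw [← Finset.mul_sum]
    gcongr
    exact sum_abs_round_div_rpow_le hp.le hη hρ hx
  calc (Y.card : ℝ) ≤ Real.exp (l * (2 * ρ / η) ^ p) * Real.exp K ^ Fintype.card F :=
        card_le_exp_mul_pow_of_sum_le (φ := fun z : ℤ => l * |(z : ℝ)| ^ p) hK hweight
    _ = Real.exp (l * (2 * ρ / η) ^ p + F.card * K) := by
        rw [Fintype.card_coe, ← Real.exp_nat_mul, ← Real.exp_add]

/-- Of the two error bounds, the first is sharp for `k ≥ N` and the second for `k ≤ N`; the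
exponent `v` can be chosen to turn the factor `(N / k) ^ v` into decay of either of them. -/
lemma exists_blockQuantizable_finsetLpBall {p v A : ℝ} (hp : 0 < p) (hp2 : p ≤ 2) (hv : 0 < v)
    (hA : 0 < A) : ∃ C : ℝ, 0 < C ∧ ∀ (F : Finset I) (N k ρ : ℝ), 0 < N → 0 < k → 0 < ρ →
      (F.card : ℝ) ≤ A * N →
      BlockQuantizable F (finsetLpBall p F ρ) (C * k) (C * (ρ ^ 2 *
        min (N * ((N / k) ^ v / k) ^ (2 / p)) (((N / k) ^ v / k) ^ (2 / p - 1)))) := by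
  obtain ⟨C, hC, hsum⟩ := exists_sum_exp_neg_mul_rpow_le hp (one_div_pos.2 hv)
  refine ⟨2 ^ p + A * C + (A + 2 ^ (p + 1)), by positivity, fun F N k ρ hN hk hρ hcard => ?_⟩
  set l : ℝ := (N / k) ^ v with hl
  have hl0 : 0 < l := by positivity
  have hη0 : 0 < ρ * (l / k) ^ (1 / p) := by positivity
  refine (blockQuantizable_finsetLpBall_of_step hp hp2 hη0 hρ.le hl0.le (hsum l hl0) F).mono ?_ ?_
  · have hstep : l * (2 * ρ / (ρ * (l / k) ^ (1 / p))) ^ p = 2 ^ p * k := by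
      rw [mul_comm ρ, mul_div_mul_right _ _ hρ.ne', Real.div_rpow (by norm_num) (by positivity),
        ← Real.rpow_mul (by positivity), one_div_mul_cancel hp.ne', Real.rpow_one]
      field_simp
    have hcount : F.card * (C * l ^ (-(1 / v))) ≤ A * C * k := by
      rw [hl, ← Real.rpow_mul (by positivity), mul_neg, mul_one_div_cancel hv.ne',
        Real.rpow_neg_one, inv_div]
      calc F.card * (C * (k / N)) ≤ A * N * (C * (k / N)) := by gcongr
        _ = A * C * k := by field_simp
    have hrest : 0 ≤ (A + 2 ^ (p + 1)) * k := by positivity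
    linarith
  · have hsq : (ρ * (l / k) ^ (1 / p)) ^ 2 = ρ ^ 2 * (l / k) ^ (2 / p) := by
      rw [mul_pow, ← Real.rpow_mul_natCast (by positivity), Nat.cast_two, one_div_mul_eq_div]
    have hmix : (ρ * (l / k) ^ (1 / p)) ^ (2 - p) * ρ ^ p = ρ ^ 2 * (l / k) ^ (2 / p - 1) := by
      rw [Real.mul_rpow hρ.le (by positivity), ← Real.rpow_mul (by positivity), mul_right_comm,
        ← Real.rpow_add hρ, sub_add_cancel, Real.rpow_two, one_div_mul_eq_div, sub_div,
        div_self hp.ne']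
    have hAC : 0 < 2 ^ p + A * C := by positivity
    have hAp : (0 : ℝ) < 2 ^ (p + 1) := by positivity
    rw [mul_min_of_nonneg _ _ (by positivity), mul_min_of_nonneg _ _ (by positivity), hsq,
      mul_assoc, hmix]
    refine min_le_min ?_ (mul_le_mul_of_nonneg_right (by linarith) (by positivity))
    calc F.card * (ρ ^ 2 * (l / k) ^ (2 / p)) ≤ A * N * (ρ ^ 2 * (l / k) ^ (2 / p)) := by gcongr
      _ = A * (ρ ^ 2 * (N * (l / k) ^ (2 / p))) := by ring
      _ ≤ (2 ^ p + A * C + (A + 2 ^ (p + 1))) * (ρ ^ 2 * (N * (l / k) ^ (2 / p))) := by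
          gcongr
          linarith

end BlockQuantization

section Levels

variable {I : Type*}

lemma exists_blockQuantizable_finsetLpBall_two_rpow {p v A B : ℝ} (hp : 0 < p) (hp2 : p ≤ 2)
    (hv : 0 < v) (hA : 0 < A) (hB : 0 < B) :
    ∃ C : ℝ, 0 < C ∧ ∀ (F : Finset I) (n k r : ℝ), (F.card : ℝ) ≤ A * 2 ^ n →
      BlockQuantizable F (finsetLpBall p F (B * 2 ^ r)) (C * 2 ^ k)
        (C * 2 ^ (2 * r +
          min (n + (v * (n - k) - k) * (2 / p)) ((v * (n - k) - k) * (2 / p - 1)))) := by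
  obtain ⟨C, hC, hquant⟩ := exists_blockQuantizable_finsetLpBall (I := I) hp hp2 hv hA
  refine ⟨C * max 1 (B ^ 2), by positivity, fun F n k r hcard => ?_⟩
  refine (hquant F (2 ^ n) (2 ^ k) (B * 2 ^ r) (by positivity) (by positivity) (by positivity)
    hcard).mono ?_ ?_
  · gcongr
    exact le_mul_of_one_le_right hC.le (le_max_left _ _)
  · have hratio : ((2 : ℝ) ^ n / 2 ^ k) ^ v / 2 ^ k = 2 ^ (v * (n - k) - k) := by
      rw [← Real.rpow_sub two_pos, ← Real.rpow_mul two_pos.le, ← Real.rpow_sub two_pos,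
        mul_comm v]
    have hmin (a b : ℝ) : min ((2 : ℝ) ^ a) (2 ^ b) = 2 ^ min a b :=
      ((Real.monotone_rpow_of_base_ge_one one_le_two).map_min).symm
    rw [hratio, ← Real.rpow_mul two_pos.le, ← Real.rpow_mul two_pos.le, ← Real.rpow_add two_pos,
      hmin, mul_pow, ← Real.rpow_mul_natCast two_pos.le, Nat.cast_two, mul_comm r, mul_assoc,
      ← Real.rpow_add two_pos, ← mul_assoc]
    gcongr
    exact le_max_right _ _

lemma exists_blockQuantizable_finsetLpBall_of_le {d p α c A B : ℝ} (hd : 0 < d) (hp : 0 < p)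
    (hp2 : p ≤ 2) (hα : 0 < α) (hcd : c ≤ d / 2) (hcp : c ≤ α * p / 4) (hA : 0 < A) (hB : 0 < B) :
    ∃ C : ℝ, 0 < C ∧ ∀ (M m : ℝ) (F : Finset I), M ≤ m → (F.card : ℝ) ≤ A * 2 ^ (d * m) →
      BlockQuantizable F (finsetLpBall p F (B * 2 ^ (-(α * m)))) (C * 2 ^ (d * M - c * (m - M)))
        (C * 2 ^ (-(d * M * (2 * (α / d - (1 / 2 - 1 / p)))) - c * (m - M))) := by
  obtain ⟨C, hC, hquant⟩ := exists_blockQuantizable_finsetLpBall_two_rpow (I := I)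
    (v := α * p / (6 * d)) hp hp2 (by positivity) hA hB
  refine ⟨C, hC, fun M m F hMm hcard => (hquant F (d * m) (d * M - c * (m - M)) (-(α * m))
    hcard).mono le_rfl ?_⟩
  have hexp : (2 / p - 1) * (α * p / (6 * d) * (d + c) + c) + c ≤ 2 * α := by
    have hp1 : 1 ≤ 2 / p := (one_le_div hp).2 hp2
    have hv : α * p / (6 * d) * (d + c) ≤ α * p / 4 := by
      calc α * p / (6 * d) * (d + c) ≤ α * p / (6 * d) * (d + d / 2) := by gcongr
        _ = α * p / 4 := by field_simp; ring
    calc (2 / p - 1) * (α * p / (6 * d) * (d + c) + c) + c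
        ≤ (2 / p - 1) * (α * p / 4 + α * p / 4) + α * p / 4 := by gcongr
      _ = α - α * p / 4 := by field_simp; ring
      _ ≤ 2 * α := by linarith [mul_pos hα hp]
  have hdecay := mul_le_mul_of_nonneg_right hexp (sub_nonneg.2 hMm)
  gcongr
  · exact one_le_two
  refine (add_le_add_right (min_le_right _ _) _).trans ?_
  have hds : d * (α / d) = α := mul_div_cancel₀ _ hd.ne'
  linear_combination hdecay + 2 * M * hds

lemma exists_blockQuantizable_finsetLpBall_of_ge {d p α c A B : ℝ} (hd : 0 < d) (hp : 0 < p)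
    (hp2 : p ≤ 2) (hα : 0 < α) (hcd : c ≤ d / 2) (hcp : c ≤ α * p / 4) (hA : 0 < A) (hB : 0 < B) :
    ∃ C : ℝ, 0 < C ∧ ∀ (M m : ℝ) (F : Finset I), m ≤ M → (F.card : ℝ) ≤ A * 2 ^ (d * m) →
      BlockQuantizable F (finsetLpBall p F (B * 2 ^ (-(α * m)))) (C * 2 ^ (d * M - c * (M - m)))
        (C * 2 ^ (-(d * M * (2 * (α / d - (1 / 2 - 1 / p)))) - c * (M - m))) := by
  obtain ⟨C, hC, hquant⟩ := exists_blockQuantizable_finsetLpBall_two_rpow (I := I)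
    (v := 3 * α * p / d) hp hp2 (by positivity) hA hB
  refine ⟨C, hC, fun M m F hmM hcard => (hquant F (d * m) (d * M - c * (M - m)) (-(α * m))
    hcard).mono le_rfl ?_⟩
  have hexp : 2 * α + 2 / p * c + c ≤ d + 2 / p * (3 * α * p / d * (d - c)) := by
    have hv : 2 / p * (3 * α * p / d * (d - c)) ≥ 3 * α := by
      calc 2 / p * (3 * α * p / d * (d - c)) ≥ 2 / p * (3 * α * p / d * (d - d / 2)) := by gcongr
        _ = 3 * α := by field_simp; ring
    have hcα : 2 / p * c ≤ α / 2 := by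
      calc 2 / p * c ≤ 2 / p * (α * p / 4) := by gcongr
        _ = α / 2 := by field_simp; ring
    linarith
  have hdecay := mul_le_mul_of_nonneg_right hexp (sub_nonneg.2 hmM)
  gcongr
  · exact one_le_two
  refine (add_le_add_right (min_le_left _ _) _).trans ?_
  have hds : d * (α / d) = α := mul_div_cancel₀ _ hd.ne'
  linear_combination hdecay + 2 * M * hds

/-- At the critical level `M` the nats spent match the size `2 ^ (d * M)` of the block; away from it
both the nats and the error are small enough to be summed over all levels. -/
lemma exists_blockQuantizable_finsetLpBall_level {d p α A B : ℝ} (hd : 0 < d) (hp : 0 < p)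
    (hp2 : p ≤ 2) (hα : 0 < α) (hA : 0 < A) (hB : 0 < B) :
    ∃ c C : ℝ, 0 < c ∧ 0 < C ∧ ∀ (M m : ℝ) (F : Finset I), (F.card : ℝ) ≤ A * 2 ^ (d * m) →
      BlockQuantizable F (finsetLpBall p F (B * 2 ^ (-(α * m))))
        (C * (2 ^ (d * M) * 2 ^ (-(c * |m - M|))))
        (C * ((2 ^ (d * M)) ^ (-(2 * (α / d - (1 / 2 - 1 / p)))) * 2 ^ (-(c * |m - M|)))) := by
  have hcd := min_le_left (d / 2) (α * p / 4)
  have hcp := min_le_right (d / 2) (α * p / 4)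
  obtain ⟨C, hC, hhigh⟩ := exists_blockQuantizable_finsetLpBall_of_le (I := I) hd hp hp2 hα hcd hcp
    hA hB
  obtain ⟨C', -, hlow⟩ := exists_blockQuantizable_finsetLpBall_of_ge (I := I) hd hp hp2 hα hcd hcp
    hA hB
  refine ⟨min (d / 2) (α * p / 4), max C C', by positivity, by positivity, fun M m F hcard => ?_⟩
  rw [← Real.rpow_mul two_pos.le, ← Real.rpow_add two_pos, ← Real.rpow_add two_pos, mul_neg,
    ← sub_eq_add_neg, ← sub_eq_add_neg]
  rcases le_total M m with h | h
  · rw [abs_of_nonneg (sub_nonneg.2 h)]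
    exact (hhigh M m F h hcard).mono (by gcongr; exact le_max_left _ _)
      (by gcongr; exact le_max_left _ _)
  · rw [abs_sub_comm, abs_of_nonneg (sub_nonneg.2 h)]
    exact (hlow M m F h hcard).mono (by gcongr; exact le_max_right _ _)
      (by gcongr; exact le_max_right _ _)

lemma exists_sum_two_rpow_neg_abs_sub_le {c : ℝ} (hc : 0 < c) :
    ∃ C : ℝ, 0 < C ∧ ∀ (M : ℝ) (s : Finset ℕ),
      ∑ m ∈ s, (2 : ℝ) ^ (-(c * |(m : ℝ) - M|)) ≤ C := by
  have hgeom : Summable fun n : ℕ => (2 : ℝ) ^ (-(c * n)) := by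
    have hpow (n : ℕ) : (2 : ℝ) ^ (-(c * n)) = (2 ^ (-c)) ^ n := by
      rw [← Real.rpow_mul_natCast two_pos.le, neg_mul]
    simp only [hpow]
    exact summable_geometric_of_lt_one (by positivity)
      (Real.rpow_lt_one_of_one_lt_of_neg one_lt_two (neg_lt_zero.2 hc))
  have hsum : Summable fun z : ℤ => (2 : ℝ) ^ (-(c * |(z : ℝ)|)) :=
    .of_nat_of_neg (by simpa using hgeom) (by simpa using hgeom)
  have hpos : 0 < ∑' z : ℤ, (2 : ℝ) ^ (-(c * |(z : ℝ)|)) :=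
    hsum.tsum_pos (fun z => by positivity) 0 (by positivity)
  refine ⟨2 ^ c * ∑' z : ℤ, (2 : ℝ) ^ (-(c * |(z : ℝ)|)), by positivity, fun M s => ?_⟩
  have hshift (m : ℕ) : (2 : ℝ) ^ (-(c * |(m : ℝ) - M|))
      ≤ 2 ^ c * 2 ^ (-(c * |((m - ⌊M⌋ : ℤ) : ℝ)|)) := by
    rw [← Real.rpow_add two_pos]
    gcongr
    · exact one_le_two
    have hfract : |(m : ℝ) - ⌊M⌋| ≤ |(m : ℝ) - M| + 1 := by
      refine (abs_sub_le _ M _).trans (add_le_add_right ?_ _)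
      rw [Int.self_sub_floor, Int.abs_fract]
      exact (Int.fract_lt_one M).le
    push_cast
    linarith [mul_le_mul_of_nonneg_left hfract hc.le]
  calc ∑ m ∈ s, (2 : ℝ) ^ (-(c * |(m : ℝ) - M|))
      ≤ ∑ m ∈ s, 2 ^ c * 2 ^ (-(c * |((m - ⌊M⌋ : ℤ) : ℝ)|)) := Finset.sum_le_sum fun m _ => hshift m
    _ = 2 ^ c * ∑ z ∈ s.image fun m : ℕ => (m - ⌊M⌋ : ℤ), 2 ^ (-(c * |(z : ℝ)|)) := by
        rw [← Finset.mul_sum, Finset.sum_image fun m _ n _ hmn => by simpa using hmn]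
    _ ≤ 2 ^ c * ∑' z : ℤ, (2 : ℝ) ^ (-(c * |(z : ℝ)|)) := by
        gcongr
        exact hsum.sum_le_tsum _ fun z _ => by positivity

end Levels

section Codecs

variable {I : Type*}

/-- The subsets `S` of a normed group for which some encoding/decoding pair of code-length `R` has
distortion at most `ε`. -/
def EncodableWithin [NormedAddCommGroup X] (S : Set X) (R : ℕ) (ε : ℝ) : Prop :=
  ∃ (E : S → (Fin R → Bool)) (D : (Fin R → Bool) → X), ∀ x : S, ‖(x : X) - D (E x)‖ ≤ ε

lemma encodableWithin_of_card_le [NormedAddCommGroup X] {S : Set X} {κ : Type*} [Fintype κ]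
    {R : ℕ} {ε : ℝ} (Q : S → κ) (hcard : Fintype.card κ ≤ 2 ^ R)
    (hcell : ∀ x y : S, Q x = Q y → ‖(x : X) - y‖ ≤ ε) : EncodableWithin S R ε := by
  classical
  obtain ⟨code⟩ : Nonempty (κ ↪ (Fin R → Bool)) :=
    Function.Embedding.nonempty_of_card_le (by simpa using hcard)
  refine ⟨fun x => code (Q x),
    fun w => if h : ∃ y : S, code (Q y) = w then (h.choose : X) else 0, fun x => ?_⟩
  have hx : ∃ y : S, code (Q y) = code (Q x) := ⟨x, rfl⟩
  simp only [dif_pos hx]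
  exact hcell _ _ (code.injective hx.choose_spec).symm

lemma compressibleAt_of_encodableWithin [NormedAddCommGroup X] {S : Set X} {s K : ℝ}
    (h : ∀ R : ℕ, 0 < R → EncodableWithin S R (K * (R : ℝ) ^ (-s))) : CompressibleAt S s := by
  have hpair (R : ℕ) : ∃ (E : S → (Fin R → Bool)) (D : (Fin R → Bool) → X),
      0 < R → ∀ x : S, ‖(x : X) - D (E x)‖ ≤ K * (R : ℝ) ^ (-s) := by
    rcases R.eq_zero_or_pos with hR | hR
    · exact ⟨fun _ _ => false, fun _ => 0, fun hpos => absurd hR hpos.ne'⟩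
    · obtain ⟨E, D, hED⟩ := h R hR
      exact ⟨E, D, fun _ => hED⟩
  choose E D hED using hpair
  refine ⟨E, D, K, fun R hR x => ?_⟩
  have hR0 : (0 : ℝ) < R := by exact_mod_cast hR
  calc (R : ℝ) ^ s * ‖(x : X) - D R (E R x)‖ ≤ (R : ℝ) ^ s * (K * (R : ℝ) ^ (-s)) := by
        gcongr
        exact hED R hR x
    _ = K := by rw [mul_left_comm, ← Real.rpow_add hR0, add_neg_cancel, Real.rpow_zero, mul_one]

lemma CompressibleAt.exists_codec [NormedAddCommGroup X] {S : Set X} {s : ℝ}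
    (h : CompressibleAt S s) :
    ∃ (E : (R : ℕ) → S → (Fin R → Bool)) (D : (R : ℕ) → (Fin R → Bool) → X) (K : ℝ), 0 < K ∧
      ∀ R : ℕ, 0 < R → ∀ x : S, ‖(x : X) - D R (E R x)‖ ≤ K * (R : ℝ) ^ (-s) := by
  obtain ⟨E, D, K, hK⟩ := h
  refine ⟨E, D, max K 1, by positivity, fun R hR x => ?_⟩
  have hR0 : (0 : ℝ) < (R : ℝ) ^ s := Real.rpow_pos_of_pos (by exact_mod_cast hR) s
  rw [Real.rpow_neg R.cast_nonneg, ← div_eq_mul_inv, le_div_iff₀' hR0]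
  exact (hK R hR x).trans (le_max_left _ _)

lemma CompressibleAt.totallyBounded [NormedAddCommGroup X] {S : Set X} {s : ℝ}
    (h : CompressibleAt S s) (hs : 0 < s) : TotallyBounded S := by
  obtain ⟨E, D, K, -, hED⟩ := h.exists_codec
  rw [Metric.totallyBounded_iff]
  intro ε hε
  have hlim : Filter.Tendsto (fun R : ℕ => K * (R : ℝ) ^ (-s)) Filter.atTop (nhds 0) := by
    simpa using ((tendsto_rpow_neg_atTop hs).comp tendsto_natCast_atTop_atTop).const_mul K
  obtain ⟨R, hRε, hR⟩ := ((hlim.eventually_lt_const hε).and (Filter.eventually_gt_atTop 0)).exists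
  refine ⟨Set.range (D R), Set.finite_range _, fun x hx => Set.mem_iUnion₂.2
    ⟨D R (E R ⟨x, hx⟩), Set.mem_range_self _, ?_⟩⟩
  rw [Metric.mem_ball, dist_eq_norm]
  exact (hED R hR ⟨x, hx⟩).trans_lt hRε

lemma CompressibleAt.ofReal_le_optRate [NormedAddCommGroup X] {S : Set X} {s : ℝ}
    (h : CompressibleAt S s) (hs : 0 ≤ s) : ENNReal.ofReal s ≤ optRate S :=
  le_sSup ⟨s, ⟨hs, h⟩, rfl⟩

lemma sum_le_of_cover {F : ℕ → Finset I} (hF : ∀ i, ∃ m, i ∈ F m) {g : I → ℝ}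
    (hg : ∀ i, 0 ≤ g i) {b : ℕ → ℝ} {C : ℝ} (hb : ∀ m, ∑ i ∈ F m, g i ≤ b m)
    (hC : ∀ n, ∑ m ∈ Finset.range n, b m ≤ C) (G : Finset I) : ∑ i ∈ G, g i ≤ C := by
  classical
  choose level hlevel using hF
  have hmaps : ∀ i ∈ G, level i ∈ Finset.range (G.sup level + 1) := fun i hi =>
    Finset.mem_range_succ_iff.2 (Finset.le_sup hi)
  rw [← Finset.sum_fiberwise_of_maps_to hmaps]
  refine (Finset.sum_le_sum fun m _ => ?_).trans (hC _)
  refine (Finset.sum_le_sum_of_subset_of_nonneg (fun i hi => ?_) fun i _ _ => hg i).trans (hb m)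
  exact (Finset.mem_filter.1 hi).2 ▸ hlevel i

/-- Since `b` is summable, all but finitely many of the quantizers are constant, so that the product
of the others already determines every block. -/
lemma encodableWithin_of_blockQuantizable {S : Set ℓ²(I)} {F : ℕ → Finset I}
    (hF : ∀ i, ∃ m, i ∈ F m) {T : ℕ → Set (I → ℝ)} (hS : ∀ f ∈ S, ∀ m, ⇑f ∈ T m) {b e : ℕ → ℝ}
    (hq : ∀ m, BlockQuantizable (F m) (T m) (b m) (e m)) {R : ℕ} {ε : ℝ} (hε : 0 ≤ ε)
    (hb0 : ∀ m, 0 ≤ b m) (hb : ∀ n, ∑ m ∈ Finset.range n, b m ≤ R * Real.log 2)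
    (he : ∀ n, ∑ m ∈ Finset.range n, e m ≤ ε ^ 2) : EncodableWithin S R ε := by
  choose n Q hn hQ using hq
  obtain ⟨L, hL⟩ : ∃ L, ∀ m ≥ L, n m ≤ 1 := by
    have hlim := (summable_of_sum_range_le hb0 hb).tendsto_atTop_zero
    refine Filter.eventually_atTop.1 <| (hlim.eventually_lt_const (Real.log_pos one_lt_two)).mono
      fun m hm => Nat.lt_succ_iff.1 ?_
    have hlt : (n m : ℝ) < 2 := (hn m).trans_lt ((Real.lt_log_iff_exp_lt two_pos).1 hm)
    exact_mod_cast hlt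
  refine encodableWithin_of_card_le (κ := (m : Fin L) → Fin (n m))
    (fun f m => Q m ⟨f, hS f f.2 m⟩) ?_ fun f g hfg => ?_
  · rw [Fintype.card_pi, ← Nat.cast_le (α := ℝ)]
    calc ((∏ m : Fin L, Fintype.card (Fin (n m)) : ℕ) : ℝ) ≤ ∏ m : Fin L, Real.exp (b m) := by
          push_cast
          exact Finset.prod_le_prod (fun m _ => by positivity) fun m _ => by simpa using hn m
      _ = Real.exp (∑ m ∈ Finset.range L, b m) := by rw [← Real.exp_sum, Finset.sum_range]
      _ ≤ Real.exp (R * Real.log 2) := Real.exp_le_exp.2 (hb L)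
      _ = ((2 ^ R : ℕ) : ℝ) := by rw [Real.exp_nat_mul, Real.exp_log two_pos]; norm_cast
  · have hcode : ∀ m, Q m ⟨f, hS f f.2 m⟩ = Q m ⟨g, hS g g.2 m⟩ := fun m => by
      rcases lt_or_ge m L with hm | hm
      · exact congr_fun hfg ⟨m, hm⟩
      · have := Fin.subsingleton_iff_le_one.2 (hL m hm)
        exact Subsingleton.elim _ _
    refine lp.norm_le_of_forall_sum_le (by norm_num) hε fun G => ?_
    simpa using sum_le_of_cover hF (fun i => sq_nonneg ((f : ℓ²(I)) i - (g : ℓ²(I)) i))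
      (fun m => hQ m _ _ (hcode m)) he G

/-- The parameter `t` is `2 ^ (d * M)` for the critical level `M`. -/
lemma exists_encodableWithin_of_mem_finsetLpBall {d p α A B : ℝ} (hd : 0 < d) (hp : 0 < p)
    (hp2 : p ≤ 2) (hα : 0 < α) (hA : 0 < A) (hB : 0 < B) {F : ℕ → Finset I}
    (hF : ∀ i, ∃ m, i ∈ F m) (hcard : ∀ m : ℕ, ((F m).card : ℝ) ≤ A * 2 ^ (d * m))
    {S : Set ℓ²(I)} (hS : ∀ f ∈ S, ∀ m : ℕ, ⇑f ∈ finsetLpBall p (F m) (B * 2 ^ (-(α * m)))) :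
    ∃ K : ℝ, 0 < K ∧ ∀ (t : ℝ) (R : ℕ), 0 < t → K * t ≤ R * Real.log 2 →
      EncodableWithin S R (√K * t ^ (-(α / d - (1 / 2 - 1 / p)))) := by
  obtain ⟨c, C, hc, hC, hquant⟩ :=
    exists_blockQuantizable_finsetLpBall_level (I := I) hd hp hp2 hα hA hB
  obtain ⟨C', hC', hsum⟩ := exists_sum_two_rpow_neg_abs_sub_le hc
  have hscale (u : ℝ) (hu : 0 ≤ u) (M : ℝ) (n : ℕ) :
      ∑ m ∈ Finset.range n, C * (u * 2 ^ (-(c * |(m : ℝ) - M|))) ≤ C * C' * u := by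
    calc ∑ m ∈ Finset.range n, C * (u * 2 ^ (-(c * |(m : ℝ) - M|)))
        = C * (u * ∑ m ∈ Finset.range n, 2 ^ (-(c * |(m : ℝ) - M|))) := by
          rw [Finset.mul_sum, Finset.mul_sum]
      _ ≤ C * (u * C') := by
          gcongr
          exact hsum M _
      _ = C * C' * u := by ring
  refine ⟨C * C', by positivity, fun t R ht hR => ?_⟩
  have hM : (2 : ℝ) ^ (d * (Real.logb 2 t / d)) = t := by
    rw [mul_div_cancel₀ _ hd.ne', Real.rpow_logb two_pos (by norm_num) ht]
  have hq := fun m : ℕ => hquant (Real.logb 2 t / d) m (F m) (hcard m)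
  rw [hM] at hq
  refine encodableWithin_of_blockQuantizable hF hS hq (by positivity) (fun m => by positivity)
    (fun n => (hscale _ ht.le _ n).trans hR)
    fun n => (hscale _ (by positivity) _ n).trans_eq ?_
  rw [mul_pow, Real.sq_sqrt (by positivity), ← Real.rpow_mul_natCast ht.le, Nat.cast_two, neg_mul,
    mul_comm 2]

lemma compressibleAt_of_mem_finsetLpBall {d p α A B : ℝ} (hd : 0 < d) (hp : 0 < p) (hp2 : p ≤ 2)
    (hα : 0 < α) (hA : 0 < A) (hB : 0 < B) {F : ℕ → Finset I} (hF : ∀ i, ∃ m, i ∈ F m)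
    (hcard : ∀ m : ℕ, ((F m).card : ℝ) ≤ A * 2 ^ (d * m)) {S : Set ℓ²(I)}
    (hS : ∀ f ∈ S, ∀ m : ℕ, ⇑f ∈ finsetLpBall p (F m) (B * 2 ^ (-(α * m)))) :
    CompressibleAt S (α / d - (1 / 2 - 1 / p)) := by
  obtain ⟨K, hK, hencode⟩ :=
    exists_encodableWithin_of_mem_finsetLpBall hd hp hp2 hα hA hB hF hcard hS
  have : 0 < Real.log 2 := Real.log_pos one_lt_two
  set s := α / d - (1 / 2 - 1 / p)
  refine compressibleAt_of_encodableWithin (K := √K * (Real.log 2 / K) ^ (-s)) fun R hR => ?_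
  rw [mul_assoc, ← Real.mul_rpow (by positivity) R.cast_nonneg]
  refine hencode _ R (by positivity) (le_of_eq ?_)
  field_simp

end Codecs

section MixedNorm

variable {I : Type*}

lemma le_seqLqNorm {q : ℝ≥0∞} (hq : 0 < q) (u : ℕ → ℝ≥0∞) (m : ℕ) : u m ≤ seqLqNorm q u := by
  unfold seqLqNorm
  split_ifs with h
  · exact le_iSup u m
  · rw [one_div, ENNReal.le_rpow_inv_iff (ENNReal.toReal_pos hq.ne' h)]
    exact ENNReal.le_tsum (f := fun m => u m ^ q.toReal) m

lemma finsetLpNorm_eq_eLpNorm_count {p : ℝ≥0∞} (hp : p ≠ 0) (F : Finset I) [MeasurableSpace F]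
    [MeasurableSingletonClass F] (x : I → ℝ) :
    finsetLpNorm p F x = eLpNorm (fun i : F => x i) p Measure.count := by
  rcases eq_or_ne p ∞ with rfl | hp'
  · rw [finsetLpNorm, if_pos rfl, eLpNorm_exponent_top, eLpNormEssSup, essSup_count, iSup_subtype]
    simp only [Real.enorm_eq_ofReal_abs]
  · rw [finsetLpNorm, if_neg hp', eLpNorm_eq_lintegral_rpow_enorm_toReal hp hp', lintegral_count,
      tsum_fintype, Finset.sum_coe_sort F fun i => ‖x i‖ₑ ^ p.toReal]
    simp only [Real.enorm_eq_ofReal_abs]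

lemma finsetLpNorm_le_finsetLpNorm_mul_card_rpow {r p : ℝ≥0∞} (hr : r ≠ 0) (hrp : r ≤ p)
    (F : Finset I) (x : I → ℝ) :
    finsetLpNorm r F x
      ≤ finsetLpNorm p F x * (F.card : ℝ≥0∞) ^ (1 / r.toReal - 1 / p.toReal) := by
  let _ : MeasurableSpace F := ⊤
  have hcount : Measure.count (Set.univ : Set F) = F.card := by simp [Measure.count_univ]
  rw [finsetLpNorm_eq_eLpNorm_count hr,
    finsetLpNorm_eq_eLpNorm_count (hr.bot_lt.trans_le hrp).ne', ← hcount]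
  exact eLpNorm_le_eLpNorm_mul_rpow_measure_univ hrp measurable_from_top.aestronglyMeasurable

lemma finsetLpNorm_le_of_mixedNorm_le {Pt : ℕ → Finset I} {p q : ℝ≥0∞} (hq : 0 < q) {α c : ℝ}
    {x : I → ℝ} (hx : mixedNorm Pt p q α 0 x ≤ ENNReal.ofReal c) (m : ℕ) :
    finsetLpNorm p (Pt (m + 1)) x
      ≤ ENNReal.ofReal ((2 : ℝ) ^ (-(α * ((m + 1 : ℕ) : ℝ))) * c) := by
  have hpos : (0 : ℝ) < 2 ^ (α * ((m + 1 : ℕ) : ℝ)) := by positivity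
  have hterm := (le_seqLqNorm hq _ m).trans hx
  rw [Real.rpow_zero, mul_one] at hterm
  rwa [Real.rpow_neg two_pos.le, ENNReal.ofReal_mul (by positivity), ENNReal.ofReal_inv_of_pos hpos,
    ← ENNReal.div_eq_inv_mul, ENNReal.le_div_iff_mul_le (Or.inl (ENNReal.ofReal_pos.2 hpos).ne')
      (Or.inl ENNReal.ofReal_ne_top), mul_comm]

lemma mem_finsetLpBall_of_finsetLpNorm_le {p : ℝ≥0∞} (hp : p ≠ 0) (hp' : p ≠ ∞) {F : Finset I}
    {x : I → ℝ} {ρ : ℝ} (hρ : 0 ≤ ρ) (h : finsetLpNorm p F x ≤ ENNReal.ofReal ρ) :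
    x ∈ finsetLpBall p.toReal F ρ := by
  have hp0 : 0 < p.toReal := ENNReal.toReal_pos hp hp'
  rw [finsetLpNorm, if_neg hp', one_div, ENNReal.rpow_inv_le_iff hp0,
    ENNReal.ofReal_rpow_of_nonneg hρ hp0.le] at h
  simp_rw [ENNReal.ofReal_rpow_of_nonneg (abs_nonneg _) hp0.le] at h
  rw [← ENNReal.ofReal_sum_of_nonneg fun i _ => by positivity] at h
  exact (ENNReal.ofReal_le_ofReal_iff (by positivity)).1 h

lemma one_div_toReal_le_one_div_toReal {r p : ℝ≥0∞} (hr : r ≠ 0) (hrp : r ≤ p) :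
    1 / p.toReal ≤ 1 / r.toReal := by
  rcases eq_or_ne p ∞ with rfl | hp
  · simp
  · exact one_div_le_one_div_of_le (ENNReal.toReal_pos hr (ne_top_of_le_ne_top hp hrp))
      (ENNReal.toReal_mono hp hrp)

lemma one_div_toReal_min_two_sub {p : ℝ≥0∞} (hp : p ≠ 0) :
    1 / (min p 2).toReal - 1 / p.toReal = max (1 / 2 - 1 / p.toReal) 0 := by
  rcases le_total p 2 with h | h
  · have hle := one_div_toReal_le_one_div_toReal hp h
    rw [ENNReal.toReal_ofNat] at hle
    rw [min_eq_left h, sub_self, max_eq_right (sub_nonpos.2 hle)]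
  · have hle := one_div_toReal_le_one_div_toReal two_ne_zero h
    rw [ENNReal.toReal_ofNat] at hle
    rw [min_eq_right h, ENNReal.toReal_ofNat, max_eq_left (sub_nonneg.2 hle)]

lemma mem_finsetLpBall_of_mixedNorm_le {d A : ℝ} {Pt : ℕ → Finset I} (hA : 0 ≤ A)
    (hcard : ∀ m : ℕ, 0 < m → ((Pt m).card : ℝ) ≤ A * 2 ^ (d * m)) {r p q : ℝ≥0∞} (hr : r ≠ 0)
    (hr' : r ≠ ∞) (hrp : r ≤ p) {w : ℝ} (hw : w = 1 / r.toReal - 1 / p.toReal) (hq : 0 < q)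
    {α c : ℝ} (hc : 0 ≤ c) {x : I → ℝ}
    (hx : mixedNorm Pt p q α 0 x ≤ ENNReal.ofReal c) (m : ℕ) :
    x ∈ finsetLpBall r.toReal (Pt (m + 1))
      (A ^ w * 2 ^ (-(α - d * w)) * c * 2 ^ (-((α - d * w) * m))) := by
  have hw0 : 0 ≤ w := hw ▸ sub_nonneg.2 (one_div_toReal_le_one_div_toReal hr hrp)
  refine mem_finsetLpBall_of_finsetLpNorm_le hr hr' (by positivity) ?_
  calc finsetLpNorm r (Pt (m + 1)) x
      ≤ finsetLpNorm p (Pt (m + 1)) x * ((Pt (m + 1)).card : ℝ≥0∞) ^ w :=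
        hw ▸ finsetLpNorm_le_finsetLpNorm_mul_card_rpow hr hrp _ x
    _ ≤ ENNReal.ofReal (2 ^ (-(α * ((m + 1 : ℕ) : ℝ))) * c)
        * ENNReal.ofReal ((A * 2 ^ (d * ((m + 1 : ℕ) : ℝ))) ^ w) := by
        rw [← ENNReal.ofReal_rpow_of_nonneg (by positivity) hw0, ← ENNReal.ofReal_natCast]
        gcongr
        · exact finsetLpNorm_le_of_mixedNorm_le hq hx m
        · exact hcard _ m.succ_pos
    _ = ENNReal.ofReal (A ^ w * 2 ^ (-(α - d * w)) * c * 2 ^ (-((α - d * w) * m))) := by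
        rw [← ENNReal.ofReal_mul (by positivity), Real.mul_rpow hA (by positivity),
          ← Real.rpow_mul two_pos.le]
        congr 1
        have hexp : (2 : ℝ) ^ (-(α * ((m + 1 : ℕ) : ℝ))) * 2 ^ (d * ((m + 1 : ℕ) : ℝ) * w)
            = 2 ^ (-(α - d * w)) * 2 ^ (-((α - d * w) * m)) := by
          rw [← Real.rpow_add two_pos, ← Real.rpow_add two_pos]
          push_cast
          ring_nf
        linear_combination A ^ w * c * hexp

/-- Hölder's inequality on each block trades `p` for `r = min p 2`, at the price of smoothness but
without changing the compression rate. -/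
lemma exists_mem_finsetLpBall_of_mixedNorm_le {d A : ℝ} {Pt : ℕ → Finset I} (hd : 0 < d)
    (hA : 0 < A) (hcard : ∀ m : ℕ, 0 < m → ((Pt m).card : ℝ) ≤ A * 2 ^ (d * m)) {p q : ℝ≥0∞}
    (hp : 0 < p) (hq : 0 < q) {α : ℝ} (hα : d * max (1 / 2 - 1 / p.toReal) 0 < α) :
    ∃ r β B : ℝ, 0 < r ∧ r ≤ 2 ∧ 0 < β ∧ 0 < B ∧
      β / d - (1 / 2 - 1 / r) = α / d - (1 / 2 - 1 / p.toReal) ∧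
      ∀ (x : I → ℝ) (c : ℝ), 0 ≤ c → mixedNorm Pt p q α 0 x ≤ ENNReal.ofReal c →
        ∀ m : ℕ, x ∈ finsetLpBall r (Pt (m + 1)) (B * c * 2 ^ (-(β * m))) := by
  have hr : min p 2 ≠ 0 := (lt_min hp two_pos).ne'
  have hr' : min p 2 ≠ ∞ := ne_top_of_le_ne_top ENNReal.ofNat_ne_top (min_le_right _ _)
  have hw := one_div_toReal_min_two_sub hp.ne'
  set w := max (1 / 2 - 1 / p.toReal) 0
  refine ⟨(min p 2).toReal, α - d * w, A ^ w * 2 ^ (-(α - d * w)), ENNReal.toReal_pos hr hr',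
    ENNReal.toReal_mono ENNReal.ofNat_ne_top (min_le_right _ _), sub_pos.2 hα, by positivity, ?_,
    fun x c hc hx m => mem_finsetLpBall_of_mixedNorm_le hA.le hcard hr hr' (min_le_left _ _) hw.symm
      hq hc hx m⟩
  rw [sub_div, mul_div_cancel_left₀ _ hd.ne']
  linarith

lemma sum_sq_le_of_mem_finsetLpBall {p ρ : ℝ} (hp : 0 < p) (hp2 : p ≤ 2) (hρ : 0 ≤ ρ)
    {F : Finset I} {x : I → ℝ} (hx : x ∈ finsetLpBall p F ρ) : ∑ i ∈ F, x i ^ 2 ≤ ρ ^ 2 := by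
  have hle : ∀ i ∈ F, |x i| ≤ ρ := fun i hi =>
    (Real.rpow_le_rpow_iff (abs_nonneg _) hρ hp).1 <|
      (Finset.single_le_sum (f := fun i => |x i| ^ p) (fun i _ => by positivity) hi).trans hx
  calc ∑ i ∈ F, x i ^ 2 ≤ ρ ^ (2 - p) * ∑ i ∈ F, |x i| ^ p :=
        sum_sq_le_rpow_mul_sum_rpow hp hp2 hle
    _ ≤ ρ ^ (2 - p) * ρ ^ p := by
        gcongr
        exact hx
    _ = ρ ^ 2 := by
        rw [← Real.rpow_add_of_nonneg hρ (sub_nonneg.2 hp2) hp.le, sub_add_cancel, Real.rpow_two]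

lemma exists_sum_sq_le_of_mem_finsetLpBall {p α : ℝ} (hp : 0 < p) (hp2 : p ≤ 2) (hα : 0 < α)
    {F : ℕ → Finset I} (hF : ∀ i, ∃ m, i ∈ F m) :
    ∃ C : ℝ, 0 < C ∧ ∀ (x : I → ℝ) (B : ℝ), 0 ≤ B →
      (∀ m : ℕ, x ∈ finsetLpBall p (F m) (B * 2 ^ (-(α * m)))) →
      ∀ G : Finset I, ∑ i ∈ G, x i ^ 2 ≤ (C * B) ^ 2 := by
  obtain ⟨C, hC, hsum⟩ := exists_sum_two_rpow_neg_abs_sub_le (c := α * 2) (by positivity)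
  refine ⟨√C, by positivity, fun x B hB hx => sum_le_of_cover hF (fun i => sq_nonneg _)
    (fun m => sum_sq_le_of_mem_finsetLpBall hp hp2 (by positivity) (hx m)) fun n => ?_⟩
  calc ∑ m ∈ Finset.range n, (B * 2 ^ (-(α * (m : ℝ)))) ^ 2
      = B ^ 2 * ∑ m ∈ Finset.range n, 2 ^ (-(α * 2 * |(m : ℝ) - 0|)) := by
        rw [Finset.mul_sum]
        refine Finset.sum_congr rfl fun m _ => ?_
        rw [mul_pow, ← Real.rpow_mul_natCast two_pos.le, Nat.cast_two, sub_zero, Nat.abs_cast,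
          neg_mul, mul_right_comm]
    _ ≤ B ^ 2 * C := by
        gcongr
        exact hsum 0 _
    _ = (√C * B) ^ 2 := by rw [mul_pow, Real.sq_sqrt hC.le, mul_comm]

lemma memℓp_two_and_tsum_sq_rpow_le {x : I → ℝ} {D : ℝ} (hD : 0 ≤ D)
    (h : ∀ G : Finset I, ∑ i ∈ G, x i ^ 2 ≤ D ^ 2) :
    Memℓp x 2 ∧ (∑' i, ENNReal.ofReal (x i ^ 2)) ^ ((1 : ℝ) / 2) ≤ ENNReal.ofReal D := by
  refine ⟨memℓp_gen' (C := D ^ 2) (by simpa using h), ?_⟩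
  rw [one_div, ENNReal.rpow_inv_le_iff two_pos, ENNReal.tsum_eq_iSup_sum, ENNReal.rpow_two,
    ← ENNReal.ofReal_pow hD]
  refine iSup_le fun G => ?_
  rw [← ENNReal.ofReal_sum_of_nonneg fun i _ => sq_nonneg _]
  exact ENNReal.ofReal_le_ofReal (h G)

lemma continuous_finsetLpNorm {p : ℝ≥0∞} (F : Finset I) :
    Continuous fun f : ℓ²(I) => finsetLpNorm p F ⇑f := by
  have hcoord : ∀ i, Continuous fun f : ℓ²(I) => ENNReal.ofReal |f i| :=
    fun i => ENNReal.continuous_ofReal.comp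
      (continuous_abs.comp ((continuous_apply i).comp lp.uniformContinuous_coe.continuous))
  unfold finsetLpNorm
  split_ifs
  · simp_rw [← Finset.sup_eq_iSup]
    exact Continuous.finset_sup_apply fun i _ => hcoord i
  · exact ENNReal.continuous_rpow_const.comp
      (continuous_finsetSum F fun i _ => ENNReal.continuous_rpow_const.comp (hcoord i))

lemma isClosed_mixedNorm_le_one (Pt : ℕ → Finset I) {p q : ℝ≥0∞} (hq : 0 < q) (α θ : ℝ) :
    IsClosed {f : ℓ²(I) | mixedNorm Pt p q α θ ⇑f ≤ 1} := by
  have hterm : ∀ m : ℕ, Continuous fun f : ℓ²(I) =>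
      ENNReal.ofReal ((2 : ℝ) ^ (α * ((m + 1 : ℕ) : ℝ)) * ((m + 1 : ℕ) : ℝ) ^ θ) *
        finsetLpNorm p (Pt (m + 1)) ⇑f :=
    fun m => ENNReal.continuous_const_mul ENNReal.ofReal_ne_top |>.comp
      (continuous_finsetLpNorm _)
  unfold mixedNorm seqLqNorm
  split_ifs with h
  · exact (lowerSemicontinuous_iSup fun m => (hterm m).lowerSemicontinuous).isClosed_preimage 1
  · simp_rw [one_div, ENNReal.rpow_inv_le_iff (ENNReal.toReal_pos hq.ne' h), ENNReal.one_rpow]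
    exact (lowerSemicontinuous_tsum fun m =>
      (ENNReal.continuous_rpow_const.comp (hterm m)).lowerSemicontinuous).isClosed_preimage 1

end MixedNorm

section UnitBall

variable {I : Type*} {d A α : ℝ} {Pt : ℕ → Finset I} {p q : ℝ≥0∞}

lemma exists_memℓp_two_and_le_mul_mixedNorm (hd : 0 < d) (hA : 0 < A)
    (hcover : ∀ i, ∃ m, i ∈ Pt (m + 1))
    (hcard : ∀ m : ℕ, 0 < m → ((Pt m).card : ℝ) ≤ A * 2 ^ (d * m)) (hp : 0 < p) (hq : 0 < q)
    (hα : d * max (1 / 2 - 1 / p.toReal) 0 < α) :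
    ∃ C : ℝ, 0 < C ∧ ∀ x : I → ℝ, mixedNorm Pt p q α 0 x ≠ ∞ →
      Memℓp x 2 ∧
        (∑' i, ENNReal.ofReal (x i ^ 2)) ^ ((1 : ℝ) / 2) ≤
          ENNReal.ofReal C * mixedNorm Pt p q α 0 x := by
  obtain ⟨r, β, B, hr, hr2, hβ, hB, -, hball⟩ :=
    exists_mem_finsetLpBall_of_mixedNorm_le hd hA hcard hp hq hα
  obtain ⟨C, hC, hsq⟩ := exists_sum_sq_le_of_mem_finsetLpBall hr hr2 hβ hcover
  refine ⟨C * B, by positivity, fun x hx => ?_⟩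
  have hx0 := ENNReal.toReal_nonneg (a := mixedNorm Pt p q α 0 x)
  rw [← ENNReal.ofReal_toReal hx, ← ENNReal.ofReal_mul (by positivity), mul_assoc]
  exact memℓp_two_and_tsum_sq_rpow_le (by positivity) <|
    hsq x _ (by positivity) (hball x _ hx0 (ENNReal.ofReal_toReal hx).ge)

lemma compressibleAt_mixedNorm_le_one (hd : 0 < d) (hA : 0 < A)
    (hcover : ∀ i, ∃ m, i ∈ Pt (m + 1))
    (hcard : ∀ m : ℕ, 0 < m → ((Pt m).card : ℝ) ≤ A * 2 ^ (d * m)) (hp : 0 < p) (hq : 0 < q)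
    (hα : d * max (1 / 2 - 1 / p.toReal) 0 < α) :
    CompressibleAt {f : ℓ²(I) | mixedNorm Pt p q α 0 ⇑f ≤ 1}
      (α / d - (1 / 2 - 1 / p.toReal)) := by
  obtain ⟨r, β, B, hr, hr2, hβ, hB, hrate, hball⟩ :=
    exists_mem_finsetLpBall_of_mixedNorm_le hd hA hcard hp hq hα
  have hcard_succ (m : ℕ) : ((Pt (m + 1)).card : ℝ) ≤ A * 2 ^ d * 2 ^ (d * m) := by
    refine (hcard _ m.succ_pos).trans_eq ?_
    rw [Nat.cast_succ, mul_add_one, add_comm, Real.rpow_add two_pos, mul_assoc]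
  rw [← hrate]
  exact compressibleAt_of_mem_finsetLpBall hd hr hr2 hβ (by positivity) hB hcover hcard_succ
    fun f hf m => by simpa using hball f 1 zero_le_one (by simpa using hf) m

end UnitBall

theorem statement11_general {I : Type*} {d : ℝ} (hd : 0 < d) {Pt : ℕ → Finset I} {A : ℝ}
    (hA : 0 < A) (hcover : ∀ i, ∃ m, 0 < m ∧ i ∈ Pt m)
    (hcard : ∀ m : ℕ, 0 < m → ((Pt m).card : ℝ) ≤ A * 2 ^ (d * m)) {p q : ℝ≥0∞} (hp : 0 < p)
    (hq : 0 < q) {α : ℝ} (hα : d * max (1 / 2 - 1 / p.toReal) 0 < α) :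
    (∃ C : ℝ, 0 < C ∧ ∀ x : I → ℝ, mixedNorm Pt p q α 0 x ≠ ∞ →
      Memℓp x 2 ∧
        (∑' i, ENNReal.ofReal (x i ^ 2)) ^ ((1 : ℝ) / 2) ≤
          ENNReal.ofReal C * mixedNorm Pt p q α 0 x) ∧
    IsCompact {f : ℓ²(I) | mixedNorm Pt p q α 0 ⇑f ≤ 1} ∧
    (∃ (E : (R : ℕ) → {f : ℓ²(I) | mixedNorm Pt p q α 0 ⇑f ≤ 1} →
          (Fin R → Bool))
       (D : (R : ℕ) → (Fin R → Bool) → ℓ²(I)) (K : ℝ), 0 < K ∧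
       ∀ R : ℕ, 0 < R → ∀ x : {f : ℓ²(I) | mixedNorm Pt p q α 0 ⇑f ≤ 1},
         ‖(x : ℓ²(I)) - D R (E R x)‖ ≤
           K * (R : ℝ) ^ (-(α / d - (1 / 2 - 1 / p.toReal)))) ∧
    ENNReal.ofReal (α / d - (1 / 2 - 1 / p.toReal)) ≤
      optRate {f : ℓ²(I) | mixedNorm Pt p q α 0 ⇑f ≤ 1} := by
  have hcover_succ : ∀ i, ∃ m, i ∈ Pt (m + 1) := fun i =>
    let ⟨m, hm, hi⟩ := hcover i
    ⟨m - 1, by rwa [Nat.sub_add_cancel hm]⟩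
  have hcompr := compressibleAt_mixedNorm_le_one hd hA hcover_succ hcard hp hq hα
  have hrate : 0 < α / d - (1 / 2 - 1 / p.toReal) :=
    sub_pos.2 ((le_max_left _ _).trans_lt ((lt_div_iff₀' hd).2 hα))
  exact ⟨exists_memℓp_two_and_le_mul_mixedNorm hd hA hcover_succ hcard hp hq hα,
    (hcompr.totallyBounded hrate).isCompact_of_isClosed (isClosed_mixedNorm_le_one Pt hq α 0),
    hcompr.exists_codec, hcompr.ofReal_le_optRate hrate.le⟩

theorem statement11 {I : Type*} [Countable I] [Infinite I]
    (d : ℕ) (hd : 0 < d) (Pt : ℕ → Finset I) (a A : ℝ)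
    (hreg : IsRegularPartition d Pt a A)
    (p q : ℝ≥0∞) (hp : 0 < p) (hq : 0 < q) (α : ℝ) (hα0 : 0 < α)
    (hα : (d : ℝ) * max (1 / 2 - 1 / p.toReal) 0 < α) :
    (∃ C : ℝ, 0 < C ∧ ∀ x : I → ℝ, mixedNorm Pt p q α 0 x ≠ ∞ →
      Memℓp x 2 ∧
        (∑' i, ENNReal.ofReal (x i ^ 2)) ^ ((1 : ℝ) / 2) ≤
          ENNReal.ofReal C * mixedNorm Pt p q α 0 x) ∧
    IsCompact {f : lp (fun _ : I => ℝ) 2 | mixedNorm Pt p q α 0 ⇑f ≤ 1} ∧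
    (∃ (E : (R : ℕ) → {f : lp (fun _ : I => ℝ) 2 | mixedNorm Pt p q α 0 ⇑f ≤ 1} →
          (Fin R → Bool))
       (D : (R : ℕ) → (Fin R → Bool) → lp (fun _ : I => ℝ) 2) (K : ℝ), 0 < K ∧
       ∀ R : ℕ, 0 < R → ∀ x : {f : lp (fun _ : I => ℝ) 2 | mixedNorm Pt p q α 0 ⇑f ≤ 1},
         ‖(x : lp (fun _ : I => ℝ) 2) - D R (E R x)‖ ≤
           K * (R : ℝ) ^ (-(α / (d : ℝ) - (1 / 2 - 1 / p.toReal)))) ∧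
    ENNReal.ofReal (α / (d : ℝ) - (1 / 2 - 1 / p.toReal)) ≤
      optRate {f : lp (fun _ : I => ℝ) 2 | mixedNorm Pt p q α 0 ⇑f ≤ 1} := by
  exact statement11_general (by exact_mod_cast hd) (hreg.a_pos.trans hreg.a_lt_A)
    (fun i => (hreg.partition i).exists) (fun m hm => by exact_mod_cast hreg.card_upper m hm)
    hp hq hα
end
end

section
/- Let d ∈ ℕ, let 𝒫 = (I_m)_{m∈ℕ} be a d-regular partition of a countably infinite index set I, let p ∈ (0,∞] and α, θ ∈ ℝ with α > d·(1/2 − 1/p)_+, and set s* := α/d − (1/2 − 1/p) and w_m := m^θ·2^{αm}. For each m ∈ ℕ, let μ_m be the uniform probability measure on the closed ball B̄(0, w_m^{−1}; ℓ^p(I_m)) ⊆ ℝ^{I_m} (Lebesgue measure restricted to this ball and normalized to total mass 1), and let P := ⊗_{m∈ℕ} μ_m be the product probability measure on ℝ^I = ∏_{m∈ℕ} ℝ^{I_m}, equipped with the product σ-algebra. Then for every s > s* there exist c, ε0 > 0 such that for every x ∈ ℓ²(I) and every ε ∈ (0, ε0): P({y ∈ ℝ^I : ‖y − x‖_{ℓ²(I)}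 ≤ ε}) ≤ 2^{−c·ε^{−1/s}} (the set in question belongs to the product σ-algebra). -/
open MeasureTheory Metric Set ENNReal

noncomputable section

/-- `‖y‖_{ℓ^p(F)} ∈ [0,∞]` for `F` a finite type. -/
def fintypeLpNorm {F : Type*} [Fintype F] (p : ℝ≥0∞) (y : F → ℝ) : ℝ≥0∞ :=
  if p = ∞ then ⨆ i, ENNReal.ofReal |y i|
  else (∑ i, ENNReal.ofReal |y i| ^ p.toReal) ^ (1 / p.toReal)

/-- The uniform probability measure on the closed ball `B̄(0, r; ℓ^p(F))` in `ℝ^F`: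
Lebesgue measure restricted to the ball and normalized to total mass `1`. -/
def uniformBallMeasure {F : Type*} [Fintype F] (p : ℝ≥0∞) (r : ℝ) : Measure (F → ℝ) :=
  (volume {y : F → ℝ | fintypeLpNorm p y ≤ ENNReal.ofReal r})⁻¹ •
    volume.restrict {y : F → ℝ | fintypeLpNorm p y ≤ ENNReal.ofReal r}

/-!
Restricting to a single block only enlarges the event: `P` gives an `ℓ²` ball of radius `ε` at most
the mass that `μ_m` gives an `ℓ²` ball of radius `ε` in `ℝ^{I_m}`. With `n = |I_m|`, a Euclidean
ball of radius `ε` has volume at most `(√(2πe/n) ε)^n` (Markov's inequality for a Gaussian), while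
the `ℓ^p` ball of radius `1/w_m` contains a cube of side `2 n^(-1/p) / w_m`. Hence this mass is at
most `(√(πe/2) n^(1/p-1/2) w_m ε)^n`. The base is `O(2^(dsm) ε)`, since `s > s*` leaves room for
the factor `m^θ`. Choosing `m` with `2^(dsm) ≈ 1/ε`, up to a constant making the base at most `1/2`,
gives the bound `2^(-n)` with `n ≳ 2^(dm) ≈ ε^(-1/s)`.
-/

section EuclideanVolume

variable {V : Type*} [NormedAddCommGroup V] [InnerProductSpace ℝ V] [FiniteDimensional ℝ V]
  [MeasurableSpace V] [BorelSpace V]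

lemma volume_real_closedBall_le_exp_mul_rpow (x : V) {b r : ℝ} (hb : 0 < b) (hr : 0 ≤ r) :
    volume.real (closedBall x r) ≤
      Real.exp (b * r ^ 2) * (Real.pi / b) ^ ((Module.finrank ℝ V : ℝ) / 2) := by
  have integral_eq := GaussianFourier.integral_rexp_neg_mul_sq_norm (V := V) hb
  have integrable : Integrable fun v : V => Real.exp (-b * ‖v‖ ^ 2) :=
    .of_integral_ne_zero (integral_eq ▸ by positivity)
  have superlevel : {v : V | Real.exp (-b * r ^ 2) ≤ Real.exp (-b * ‖v‖ ^ 2)} =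
      closedBall 0 r := by
    ext v
    simp [hb, sq_le_sq₀, hr]
  have markov := mul_meas_ge_le_integral_of_nonneg (μ := volume)
    (.of_forall fun v => (Real.exp_pos _).le) integrable (Real.exp (-b * r ^ 2))
  rw [superlevel, integral_eq, neg_mul, Real.exp_neg, inv_mul_le_iff₀ (Real.exp_pos _)] at markov
  rwa [measureReal_def, Measure.addHaar_closedBall_center, ← measureReal_def]

lemma volume_closedBall_le_pow [Nontrivial V] (x : V) {r : ℝ} (hr : 0 < r) :
    volume (closedBall x r) ≤
      ENNReal.ofReal ((√(2 * Real.pi * Real.exp 1 / Module.finrank ℝ V) * r) ^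
        Module.finrank ℝ V) := by
  set n := Module.finrank ℝ V
  have hn : (0 : ℝ) < n := mod_cast Module.finrank_pos (R := ℝ) (M := V)
  rw [← ofReal_measureReal measure_closedBall_lt_top.ne]
  refine ENNReal.ofReal_le_ofReal ?_
  -- `b = n / (2 r²)` minimises the right-hand side of the exponential bound.
  have hb : 0 < n / (2 * r ^ 2) := by positivity
  calc volume.real (closedBall x r)
      ≤ Real.exp (n / (2 * r ^ 2) * r ^ 2) *
          (Real.pi / (n / (2 * r ^ 2))) ^ ((n : ℝ) / 2) :=
        volume_real_closedBall_le_exp_mul_rpow x hb hr.le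
    _ = Real.exp 1 ^ ((n : ℝ) / 2) * (2 * Real.pi * r ^ 2 / n) ^ ((n : ℝ) / 2) := by
        rw [Real.exp_one_rpow]
        congr 2 <;> field_simp
    _ = (2 * Real.pi * Real.exp 1 / n * r ^ 2) ^ ((n : ℝ) / 2) := by
        rw [← Real.mul_rpow (by positivity) (by positivity)]
        ring_nf
    _ = (√(2 * Real.pi * Real.exp 1 / n) * r) ^ n := by
        rw [← Real.sqrt_sq hr.le, ← Real.sqrt_mul (by positivity), Real.sqrt_sq hr.le,
          Real.sqrt_eq_rpow, ← Real.rpow_mul_natCast (by positivity), one_div_mul_eq_div]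

end EuclideanVolume

/-- The closed `ℓ²` ball of radius `ε` around `x` in `ℝ^I`; neither the points nor the centre need
be square summable, as the distance takes values in `[0, ∞]`. -/
def l2ClosedBall {I : Type*} (x : I → ℝ) (ε : ℝ) : Set (I → ℝ) :=
  {y | (∑' i, ENNReal.ofReal ((y i - x i) ^ 2)) ^ ((1 : ℝ) / 2) ≤ ENNReal.ofReal ε}

lemma measurableSet_l2ClosedBall {I : Type*} [Countable I] (x : I → ℝ) (ε : ℝ) :
    MeasurableSet (l2ClosedBall x ε) :=
  measurableSet_le (.pow_const (.tsum fun i => by fun_prop) _) measurable_const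

lemma restrict_mem_l2ClosedBall {I : Type*} (J : Finset I) {x y : I → ℝ} {ε : ℝ}
    (hy : y ∈ l2ClosedBall x ε) : J.restrict y ∈ l2ClosedBall (J.restrict x) ε :=
  (ENNReal.rpow_le_rpow (ENNReal.tsum_comp_le_tsum_of_injective Subtype.val_injective
    fun i => ENNReal.ofReal ((y i - x i) ^ 2)) (by positivity)).trans hy

section FiniteDimensional

variable {F : Type*} [Fintype F]

lemma l2ClosedBall_eq_preimage_toLp (x : F → ℝ) {ε : ℝ} (hε : 0 ≤ ε) :
    l2ClosedBall x ε = WithLp.toLp 2 ⁻¹' closedBall (WithLp.toLp 2 x) ε := by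
  ext y
  rw [mem_preimage, mem_closedBall, ← edist_le_ofReal hε, EuclideanSpace.edist_eq]
  simp only [l2ClosedBall, mem_ofPred_eq, tsum_fintype, edist_dist, Real.dist_eq,
    ← ENNReal.ofReal_pow (abs_nonneg _), sq_abs]

lemma volume_l2ClosedBall_le [Nonempty F] (x : F → ℝ) {ε : ℝ} (hε : 0 < ε) :
    volume (l2ClosedBall x ε) ≤
      ENNReal.ofReal ((√(2 * Real.pi * Real.exp 1 / Fintype.card F) * ε) ^ Fintype.card F) := by
  rw [l2ClosedBall_eq_preimage_toLp x hε.le,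
    (PiLp.volume_preserving_toLp F).measure_preimage measurableSet_closedBall.nullMeasurableSet]
  simpa only [finrank_euclideanSpace] using volume_closedBall_le_pow (WithLp.toLp 2 x) hε

lemma fintypeLpNorm_le_card_rpow_mul {p : ℝ≥0∞} (hp : 0 < p) {y : F → ℝ} {t : ℝ}
    (hy : ∀ i, |y i| ≤ t) :
    fintypeLpNorm p y ≤ (Fintype.card F : ℝ≥0∞) ^ (1 / p.toReal) * ENNReal.ofReal t := by
  rw [fintypeLpNorm]
  split_ifs with htop
  · -- Here `1 / p.toReal = 1 / 0 = 0` is the intended `1 / ∞`.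
    simpa [htop] using fun i => ENNReal.ofReal_le_ofReal (hy i)
  · have hq : 0 < p.toReal := ENNReal.toReal_pos hp.ne' htop
    calc (∑ i, ENNReal.ofReal |y i| ^ p.toReal) ^ (1 / p.toReal)
        ≤ (∑ _i : F, ENNReal.ofReal t ^ p.toReal) ^ (1 / p.toReal) := by
          gcongr with i
          exact hy i
      _ = (Fintype.card F : ℝ≥0∞) ^ (1 / p.toReal) * ENNReal.ofReal t := by
          rw [Finset.sum_const, Finset.card_univ, nsmul_eq_mul,
            ENNReal.mul_rpow_of_nonneg _ _ (by positivity), ← ENNReal.rpow_mul,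
            mul_one_div_cancel hq.ne', ENNReal.rpow_one]

lemma ofReal_pow_le_volume_fintypeLpNorm_le [Nonempty F] {p : ℝ≥0∞} (hp : 0 < p) {r : ℝ}
    (hr : 0 ≤ r) :
    ENNReal.ofReal ((2 * (r / (Fintype.card F : ℝ) ^ (1 / p.toReal))) ^ Fintype.card F) ≤
      volume {y : F → ℝ | fintypeLpNorm p y ≤ ENNReal.ofReal r} := by
  have hn : (0 : ℝ) < Fintype.card F := mod_cast Fintype.card_pos
  rw [← Real.volume_pi_closedBall (0 : F → ℝ) (by positivity)]
  refine measure_mono fun y hy => ?_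
  rw [mem_closedBall_zero_iff, pi_norm_le_iff_of_nonneg (by positivity)] at hy
  refine (fintypeLpNorm_le_card_rpow_mul hp hy).trans_eq ?_
  rw [← ENNReal.ofReal_natCast, ENNReal.ofReal_rpow_of_pos hn, ← ENNReal.ofReal_mul (by positivity),
    mul_div_cancel₀ _ (by positivity)]

lemma uniformBallMeasure_le_volume_div (p : ℝ≥0∞) (r : ℝ) (S : Set (F → ℝ)) :
    uniformBallMeasure p r S ≤
      volume S / volume {y : F → ℝ | fintypeLpNorm p y ≤ ENNReal.ofReal r} := by
  rw [uniformBallMeasure, Measure.smul_apply, smul_eq_mul, ENNReal.div_eq_inv_mul]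
  gcongr
  exact Measure.restrict_le_self

lemma uniformBallMeasure_l2ClosedBall_le [Nonempty F] {p : ℝ≥0∞} (hp : 0 < p) {r : ℝ} (hr : 0 < r)
    (x : F → ℝ) {ε : ℝ} (hε : 0 < ε) :
    uniformBallMeasure p r (l2ClosedBall x ε) ≤
      ENNReal.ofReal ((√(Real.pi * Real.exp 1 / 2) *
        ((Fintype.card F : ℝ) ^ (1 / p.toReal - 1 / 2) / r) * ε) ^ Fintype.card F) := by
  set n := Fintype.card F
  have hn : (0 : ℝ) < n := mod_cast Fintype.card_pos
  have base_eq : √(2 * Real.pi * Real.exp 1 / n) * ε / (2 * (r / (n : ℝ) ^ (1 / p.toReal))) =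
      √(Real.pi * Real.exp 1 / 2) * ((n : ℝ) ^ (1 / p.toReal - 1 / 2) / r) * ε := by
    have sqrt_eq : √(2 * Real.pi * Real.exp 1 / n) = 2 * √(Real.pi * Real.exp 1 / 2) / √n := by
      rw [Real.sqrt_div (by positivity),
        show 2 * Real.pi * Real.exp 1 = 2 ^ 2 * (Real.pi * Real.exp 1 / 2) by ring,
        Real.sqrt_mul (by positivity), Real.sqrt_sq two_pos.le]
    rw [sqrt_eq, Real.rpow_sub hn, ← Real.sqrt_eq_rpow]
    field_simp
  calc uniformBallMeasure p r (l2ClosedBall x ε)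
      ≤ volume (l2ClosedBall x ε) /
          volume {y : F → ℝ | fintypeLpNorm p y ≤ ENNReal.ofReal r} :=
        uniformBallMeasure_le_volume_div p r _
    _ ≤ ENNReal.ofReal ((√(2 * Real.pi * Real.exp 1 / n) * ε) ^ n) /
          ENNReal.ofReal ((2 * (r / (n : ℝ) ^ (1 / p.toReal))) ^ n) := by
        gcongr
        · exact volume_l2ClosedBall_le x hε
        · exact ofReal_pow_le_volume_fintypeLpNorm_le hp hr.le
    _ = ENNReal.ofReal ((√(Real.pi * Real.exp 1 / 2) *
          ((n : ℝ) ^ (1 / p.toReal - 1 / 2) / r) * ε) ^ n) := by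
        rw [← ENNReal.ofReal_div_of_pos (by positivity), ← div_pow, base_eq]

end FiniteDimensional

section Marginals

variable {I : Type*}

lemma map_restrict_eq_of_forall_eq_prod {E : I → Type*} [∀ i, MeasurableSpace (E i)]
    {J : ℕ → Finset I} {P : Measure (∀ i, E i)} {ν : ∀ m, Measure (∀ i : J m, E i)}
    (hP : ∀ (n : ℕ) (B : ∀ m, Set (∀ i : J m, E i)), (∀ m, MeasurableSet (B m)) →
      P {y | ∀ m, 0 < m → m ≤ n → (J m).restrict y ∈ B m} = ∏ m ∈ Finset.Icc 1 n, ν m (B m))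
    {m : ℕ} (hm : 0 < m) : P.map (J m).restrict = ν m := by
  obtain ⟨k, rfl⟩ : ∃ k, m = k + 1 := ⟨m - 1, by lia⟩
  have measure_univ (n : ℕ) : P univ = ∏ j ∈ Finset.Icc 1 n, ν j univ := by
    simpa using hP n (fun _ => univ) fun _ => .univ
  ext S hS
  let B : ∀ j, Set (∀ i : J j, E i) := Function.update (fun _ => univ) (k + 1) S
  have hB : ∀ j, MeasurableSet (B j) :=
    (Function.forall_update_iff _ fun _ T => MeasurableSet T).2 ⟨hS, fun _ _ => .univ⟩
  have B_of_ne {j : ℕ} (hj : j ≠ k + 1) : B j = univ := Function.update_of_ne hj ..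
  have cylinder_eq : {y | ∀ j, 0 < j → j ≤ k + 1 → (J j).restrict y ∈ B j} =
      (J (k + 1)).restrict ⁻¹' S := by
    ext y
    refine ⟨fun h => by simpa [B] using h (k + 1) hm le_rfl, fun h j _ _ => ?_⟩
    obtain rfl | hj := eq_or_ne j (k + 1)
    · simpa [B] using h
    · simp [B_of_ne hj]
  calc P.map (J (k + 1)).restrict S
      = P {y | ∀ j, 0 < j → j ≤ k + 1 → (J j).restrict y ∈ B j} := by
        rw [Measure.map_apply (Finset.measurable_restrict _) hS, cylinder_eq]
    _ = (∏ j ∈ Finset.Icc 1 k, ν j (B j)) * ν (k + 1) (B (k + 1)) := by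
        rw [hP _ B hB, Finset.prod_Icc_succ_top (by lia)]
    _ = (∏ j ∈ Finset.Icc 1 k, ν j univ) * ν (k + 1) S := by
        congr 1
        · refine Finset.prod_congr rfl fun j hj => ?_
          rw [B_of_ne (by have := Finset.mem_Icc.1 hj; lia)]
        · simp [B]
    _ = ν (k + 1) S := by
        rw [← measure_univ k, measure_univ 0, Finset.Icc_eq_empty (by lia), Finset.prod_empty,
          one_mul]

lemma measure_l2ClosedBall_le_map_restrict (P : Measure (I → ℝ)) (J : Finset I) (x : I → ℝ)
    (ε : ℝ) : P (l2ClosedBall x ε) ≤ P.map J.restrict (l2ClosedBall (J.restrict x) ε) :=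
  (measure_mono fun _ => restrict_mem_l2ClosedBall J).trans
    (Measure.le_map_apply (Finset.measurable_restrict J).aemeasurable _)

lemma measure_l2ClosedBall_le_of_map_restrict_eq {P : Measure (I → ℝ)} {J : Finset I}
    (hJ : J.Nonempty) {p : ℝ≥0∞} (hp : 0 < p) {r : ℝ} (hr : 0 < r)
    (hP : P.map J.restrict = uniformBallMeasure p r) (x : I → ℝ) {ε : ℝ} (hε : 0 < ε) :
    P (l2ClosedBall x ε) ≤
      ENNReal.ofReal ((√(Real.pi * Real.exp 1 / 2) *
        ((J.card : ℝ) ^ (1 / p.toReal - 1 / 2) / r) * ε) ^ J.card) := by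
  have : Nonempty J := hJ.to_subtype
  calc P (l2ClosedBall x ε)
      ≤ uniformBallMeasure p r (l2ClosedBall (J.restrict x) ε) :=
        hP ▸ measure_l2ClosedBall_le_map_restrict P J x ε
    _ ≤ ENNReal.ofReal ((√(Real.pi * Real.exp 1 / 2) *
          ((J.card : ℝ) ^ (1 / p.toReal - 1 / 2) / r) * ε) ^ J.card) := by
        simpa only [Fintype.card_coe] using
          uniformBallMeasure_l2ClosedBall_le hp hr (J.restrict x) hε

end Marginals

/-- The weight `w_m = m^θ · 2^{αm}` of the `m`-th block; its `ℓ^p` ball has radius `w_m⁻¹`. -/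
def blockWeight (α θ : ℝ) (m : ℕ) : ℝ :=
  (m : ℝ) ^ θ * 2 ^ (α * (m : ℝ))

lemma blockWeight_pos (α θ : ℝ) {m : ℕ} (hm : 0 < m) : 0 < blockWeight α θ m := by
  unfold blockWeight
  positivity

lemma blockWeight_eq_mul_pow_rpow (α θ : ℝ) {d : ℕ} (hd : 0 < d) (m : ℕ) :
    blockWeight α θ m = (m : ℝ) ^ θ * (((2 : ℝ) ^ d) ^ m) ^ (α / d) := by
  rw [blockWeight, ← pow_mul, ← Real.rpow_natCast_mul two_pos.le, Nat.cast_mul]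
  field_simp

section Asymptotics

lemma exists_natCast_rpow_le_mul_pow_rpow (θ : ℝ) {B δ : ℝ} (hB : 1 < B) (hδ : 0 < δ) :
    ∃ K : ℝ, 0 < K ∧ ∀ m : ℕ, (m : ℝ) ^ θ ≤ K * (B ^ m) ^ δ := by
  have hrate : 0 < Real.log B * δ := mul_pos (Real.log_pos hB) hδ
  obtain ⟨K, hK, hle⟩ := Asymptotics.bound_of_isBigO_nat_atTop
    ((isLittleO_rpow_exp_pos_mul_atTop θ hrate).isBigO.comp_tendsto tendsto_natCast_atTop_atTop)
  refine ⟨K, hK, fun m => (Real.le_norm_self _).trans ?_⟩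
  have bound_pos : 0 < (B ^ m) ^ δ := by positivity
  have exp_eq : Real.exp (Real.log B * δ * m) = (B ^ m) ^ δ := by
    rw [← Real.rpow_natCast, ← Real.rpow_mul (by positivity), Real.rpow_def_of_pos (by positivity)]
    ring_nf
  simpa [exp_eq, abs_of_pos bound_pos] using hle (Real.exp_ne_zero (Real.log B * δ * m))

lemma rpow_le_add_mul_rpow {a A n u : ℝ} (ha : 0 < a) (hu : 0 < u) (hl : a * u ≤ n)
    (hr : n ≤ A * u) (β : ℝ) : n ^ β ≤ (a ^ β + A ^ β) * u ^ β := by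
  have hn : 0 < n := (mul_pos ha hu).trans_le hl
  have hA : 0 < A := pos_of_mul_pos_left (hn.trans_le hr) hu.le
  rw [add_mul, ← Real.mul_rpow ha.le hu.le, ← Real.mul_rpow hA.le hu.le]
  obtain hβ | hβ := le_total 0 β
  · exact (Real.rpow_le_rpow hn.le hr hβ).trans (le_add_of_nonneg_left (by positivity))
  · exact (Real.rpow_le_rpow_of_nonpos (by positivity) hl hβ).trans
      (le_add_of_nonneg_right (by positivity))

lemma exists_rpow_mul_rpow_mul_rpow_le {a A B : ℝ} (ha : 0 < a) (hA : 0 < A) (hB : 1 < B)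
    (θ : ℝ) {β τ s : ℝ} (hs : β + τ < s) :
    ∃ K : ℝ, 0 < K ∧ ∀ (m : ℕ) (n : ℝ), a * B ^ m ≤ n → n ≤ A * B ^ m →
      n ^ β * ((m : ℝ) ^ θ * (B ^ m) ^ τ) ≤ K * (B ^ m) ^ s := by
  obtain ⟨K, hK, hθ⟩ := exists_natCast_rpow_le_mul_pow_rpow θ hB (sub_pos.2 hs)
  refine ⟨(a ^ β + A ^ β) * K, by positivity, fun m n hl hr => ?_⟩
  have hu : 0 < B ^ m := by positivity
  calc n ^ β * ((m : ℝ) ^ θ * (B ^ m) ^ τ)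
      ≤ (a ^ β + A ^ β) * (B ^ m) ^ β * (K * (B ^ m) ^ (s - (β + τ)) * (B ^ m) ^ τ) := by
        gcongr
        · exact rpow_le_add_mul_rpow ha hu hl hr β
        · exact hθ m
    _ = (a ^ β + A ^ β) * K * ((B ^ m) ^ β * (B ^ m) ^ (s - (β + τ)) * (B ^ m) ^ τ) := by ring
    _ = (a ^ β + A ^ β) * K * (B ^ m) ^ s := by
        rw [← Real.rpow_add hu, ← Real.rpow_add hu]
        ring_nf

lemma exists_pow_scale {B K s : ℝ} (hB : 1 < B) (hK : 0 < K) (hs : 0 < s) :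
    ∃ c ε₀ : ℝ, 0 < c ∧ 0 < ε₀ ∧ ∀ ε : ℝ, 0 < ε → ε < ε₀ →
      ∃ m : ℕ, 0 < m ∧ K * (B ^ m) ^ s * ε ≤ 2⁻¹ ∧ c * ε ^ (-1 / s) ≤ B ^ m := by
  have hB0 : 0 < B := one_pos.trans hB
  refine ⟨(2 * K) ^ (-1 / s) / B, (2 * K * B ^ s)⁻¹, by positivity, by positivity,
    fun ε hε hε₀ => ?_⟩
  have large : B ^ s < (2 * K * ε)⁻¹ := by
    rw [← one_div, lt_div_iff₀ (by positivity)] at hε₀ ⊢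
    linarith
  have one_lt : 1 < B ^ s := Real.one_lt_rpow hB hs
  obtain ⟨m, hm_le, lt_hm⟩ := exists_nat_pow_near (one_lt.trans large).le one_lt
  rw [Real.rpow_pow_comm hB0.le] at hm_le lt_hm
  refine ⟨m, Nat.pos_of_ne_zero ?_, ?_, ?_⟩
  · rintro rfl
    simp only [zero_add, pow_one] at lt_hm
    exact lt_hm.not_gt large
  · calc K * (B ^ m) ^ s * ε ≤ K * (2 * K * ε)⁻¹ * ε := by gcongr
      _ = 2⁻¹ := by field_simp
  · rw [div_mul_eq_mul_div, div_le_iff₀ hB0, ← pow_succ, ← Real.mul_rpow (by positivity) hε.le,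
      neg_div, one_div, Real.rpow_neg (by positivity), ← Real.inv_rpow (by positivity),
      Real.rpow_inv_le_iff_of_pos (by positivity) (by positivity) hs]
    exact lt_hm.le

lemma exists_block_scale {d : ℕ} (hd : 0 < d) {a A : ℝ} (ha : 0 < a) {n : ℕ → ℝ}
    (lower : ∀ m : ℕ, 0 < m → a * 2 ^ (d * m) ≤ n m)
    (upper : ∀ m : ℕ, 0 < m → n m ≤ A * 2 ^ (d * m))
    (α θ : ℝ) {β s C : ℝ} (hs0 : 0 < s) (hs : β + α / d < s) (hC : 0 < C) :
    ∃ c ε₀ : ℝ, 0 < c ∧ 0 < ε₀ ∧ ∀ ε : ℝ, 0 < ε → ε < ε₀ →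
      ∃ m : ℕ, 0 < m ∧ C * (n m ^ β * blockWeight α θ m) * ε ≤ 2⁻¹ ∧
        c * ε ^ (-1 / s) ≤ n m := by
  have hB : (1 : ℝ) < 2 ^ d := one_lt_pow₀ _root_.one_lt_two hd.ne'
  simp only [pow_mul] at lower upper
  have hA : 0 < A := by
    have upper_pos := (mul_pos ha (by positivity)).trans_le
      ((lower 1 one_pos).trans (upper 1 one_pos))
    exact pos_of_mul_pos_left upper_pos (by positivity)
  obtain ⟨K, hK, base_le⟩ := exists_rpow_mul_rpow_mul_rpow_le ha hA hB θ hs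
  obtain ⟨c, ε₀, hc, hε₀, scale⟩ := exists_pow_scale hB (mul_pos hC hK) hs0
  refine ⟨a * c, ε₀, by positivity, hε₀, fun ε hε hlt => ?_⟩
  obtain ⟨m, hm, half_bound, dim_bound⟩ := scale ε hε hlt
  refine ⟨m, hm, ?_, ?_⟩
  · rw [mul_assoc C K] at half_bound
    refine le_trans ?_ half_bound
    rw [blockWeight_eq_mul_pow_rpow α θ hd]
    have := base_le m (n m) (lower m hm) (upper m hm)
    gcongr
  · rw [mul_assoc]
    exact (mul_le_mul_of_nonneg_left dim_bound ha.le).trans (lower m hm)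

end Asymptotics

theorem statement12_general {I : Type*} [Countable I] {d : ℕ} (hd : 0 < d) {Pt : ℕ → Finset I}
    {a A : ℝ} (ha : 0 < a)
    (card_lower : ∀ m : ℕ, 0 < m → a * 2 ^ (d * m) ≤ ((Pt m).card : ℝ))
    (card_upper : ∀ m : ℕ, 0 < m → ((Pt m).card : ℝ) ≤ A * 2 ^ (d * m))
    {p : ℝ≥0∞} (hp : 0 < p) {α θ : ℝ} {P : Measure (I → ℝ)}
    (hP : ∀ m : ℕ, 0 < m → P.map (Pt m).restrict = uniformBallMeasure p (blockWeight α θ m)⁻¹)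
    {s : ℝ} (hs0 : 0 < s) (hs : α / (d : ℝ) - (1 / 2 - 1 / p.toReal) < s) :
    ∃ c ε₀ : ℝ, 0 < c ∧ 0 < ε₀ ∧ ∀ (x : I → ℝ) (ε : ℝ), 0 < ε → ε < ε₀ →
      MeasurableSet (l2ClosedBall x ε) ∧
        P (l2ClosedBall x ε) ≤ ENNReal.ofReal (2 ^ (-(c * ε ^ (-1 / s)))) := by
  have exponent_lt : 1 / p.toReal - 1 / 2 + α / d < s := by linarith
  obtain ⟨c, ε₀, hc, hε₀, scale⟩ := exists_block_scale hd ha card_lower card_upper α θ hs0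
    exponent_lt (C := √(Real.pi * Real.exp 1 / 2)) (by positivity)
  refine ⟨c, ε₀, hc, hε₀, fun x ε hε hlt => ⟨measurableSet_l2ClosedBall x ε, ?_⟩⟩
  obtain ⟨m, hm, base_le_half, exponent_le⟩ := scale ε hε hlt
  have weight_pos := blockWeight_pos α θ hm
  have card_pos : 0 < (Pt m).card :=
    Nat.cast_pos.1 ((by positivity : 0 < c * ε ^ (-1 / s)).trans_le exponent_le)
  calc P (l2ClosedBall x ε)
      ≤ ENNReal.ofReal ((√(Real.pi * Real.exp 1 / 2) *
          (((Pt m).card : ℝ) ^ (1 / p.toReal - 1 / 2) * blockWeight α θ m) * ε) ^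
            (Pt m).card) := by
        simpa only [div_inv_eq_mul] using measure_l2ClosedBall_le_of_map_restrict_eq
          (Finset.card_pos.1 card_pos) hp (inv_pos.2 weight_pos) (hP m hm) x hε
    _ ≤ ENNReal.ofReal (2⁻¹ ^ (Pt m).card) := by gcongr
    _ ≤ ENNReal.ofReal (2 ^ (-(c * ε ^ (-1 / s)))) := by
        refine ENNReal.ofReal_le_ofReal ?_
        rw [inv_pow, ← Real.rpow_natCast, ← Real.rpow_neg two_pos.le]
        exact Real.rpow_le_rpow_of_exponent_le _root_.one_le_two (neg_le_neg exponent_le)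

theorem statement12 {I : Type*} [Countable I] [Infinite I]
    (d : ℕ) (hd : 0 < d) (Pt : ℕ → Finset I) (a A : ℝ)
    (hreg : IsRegularPartition d Pt a A)
    (p : ℝ≥0∞) (hp : 0 < p) (α θ : ℝ)
    (hα : (d : ℝ) * max (1 / 2 - 1 / p.toReal) 0 < α)
    (P : Measure (I → ℝ)) [IsProbabilityMeasure P]
    (hP : ∀ (n : ℕ) (B : (m : ℕ) → Set (↥(Pt m) → ℝ)),
      (∀ m, MeasurableSet (B m)) →
      P {y : I → ℝ | ∀ m : ℕ, 0 < m → m ≤ n → (fun i : ↥(Pt m) => y ↑i) ∈ B m} =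
        ∏ m ∈ Finset.Icc 1 n,
          uniformBallMeasure p (((m : ℝ) ^ θ * 2 ^ (α * (m : ℝ)))⁻¹) (B m)) :
    ∀ s : ℝ, α / (d : ℝ) - (1 / 2 - 1 / p.toReal) < s →
      ∃ c ε₀ : ℝ, 0 < c ∧ 0 < ε₀ ∧
        ∀ x : I → ℝ, Memℓp x 2 → ∀ ε : ℝ, 0 < ε → ε < ε₀ →
          MeasurableSet {y : I → ℝ |
              (∑' i, ENNReal.ofReal ((y i - x i) ^ 2)) ^ ((1 : ℝ) / 2) ≤ ENNReal.ofReal ε} ∧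
          P {y : I → ℝ |
              (∑' i, ENNReal.ofReal ((y i - x i) ^ 2)) ^ ((1 : ℝ) / 2) ≤ ENNReal.ofReal ε} ≤
            ENNReal.ofReal ((2 : ℝ) ^ (-(c * ε ^ (-(1 : ℝ) / s)))) := by
  intro s hs
  have hs0 : 0 < s := by
    have : max (1 / 2 - 1 / p.toReal) 0 < α / d := (lt_div_iff₀' (mod_cast hd)).2 hα
    linarith [le_max_left (1 / 2 - 1 / p.toReal) 0]
  obtain ⟨c, ε₀, hc, hε₀, hball⟩ := statement12_general hd hreg.a_pos hreg.card_lower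
    hreg.card_upper hp (fun _ => map_restrict_eq_of_forall_eq_prod (E := fun _ => ℝ)
      (ν := fun m => uniformBallMeasure p (blockWeight α θ m)⁻¹) hP) hs0 hs
  exact ⟨c, ε₀, hc, hε₀, fun x _ => hball x⟩
end
end

section
/- Let X be a real Banach space and let S ⊆ X be nonempty, closed, bounded, and convex, and suppose s* := s*(S, X) < ∞. Then for every codec C = (E_R, D_R)_{R∈ℕ} for S there exists x ∈ S such that for every ℓ ∈ ℕ the set {R ∈ ℕ : ‖x − D_R(E_R(x))‖ ≥ R^{−(s* + 1/ℓ)}} is infinite. -/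
open MeasureTheory Metric Set ENNReal

noncomputable section

variable {X : Type*}

/-!
A bounded convex set contains shrunken copies of itself in all its nonempty relatively open pieces.
Compressibility passes to subsets and to Lipschitz images, so for `s > s*` no such piece of `S` is
compressible at rate `s`. The points of `S` that lie within `R ^ (-s)` of a codeword for all lengths
`R > N` form a relatively closed set, which therefore has empty relative interior. Baire's theorem
excludes these sets for all `N` and for countably many rates `s ↓ s*` at once.
-/

open Filter

section CompressibleAt

variable {Y : Type*} [NormedAddCommGroup X] [NormedAddCommGroup Y] {S T : Set X} {s : ℝ}

theorem compressibleAt_iff_exists_decoder :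
    CompressibleAt S s ↔ ∃ (D : (R : ℕ) → (Fin R → Bool) → X) (K : ℝ),
      ∀ R : ℕ, 0 < R → ∀ x ∈ S, ∃ c, (R : ℝ) ^ s * ‖x - D R c‖ ≤ K := by
  constructor
  · rintro ⟨E, D, K, hK⟩
    exact ⟨D, K, fun R hR x hx => ⟨E R ⟨x, hx⟩, hK R hR ⟨x, hx⟩⟩⟩
  · rintro ⟨D, K, hK⟩
    have hcode : ∀ (R : ℕ) (x : S), ∃ c, 0 < R → (R : ℝ) ^ s * ‖(x : X) - D R c‖ ≤ K := by
      intro R x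
      rcases R.eq_zero_or_pos with rfl | hR
      · exact ⟨default, fun h => absurd h (lt_irrefl 0)⟩
      · exact (hK R hR x x.2).imp fun _ hc _ => hc
    choose E hE using hcode
    exact ⟨E, D, K, fun R hR x => hE R x hR⟩

theorem CompressibleAt.mono (hT : CompressibleAt T s) (hST : S ⊆ T) : CompressibleAt S s := by
  obtain ⟨D, K, hK⟩ := compressibleAt_iff_exists_decoder.1 hT
  exact compressibleAt_iff_exists_decoder.2 ⟨D, K, fun R hR x hx => hK R hR x (hST hx)⟩

theorem CompressibleAt.image {f : X → Y} {L : NNReal} (hS : CompressibleAt S s)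
    (hf : LipschitzWith L f) : CompressibleAt (f '' S) s := by
  obtain ⟨D, K, hK⟩ := compressibleAt_iff_exists_decoder.1 hS
  refine compressibleAt_iff_exists_decoder.2 ⟨fun R c => f (D R c), L * K, fun R hR => ?_⟩
  rintro _ ⟨x, hx, rfl⟩
  obtain ⟨c, hc⟩ := hK R hR x hx
  refine ⟨c, ?_⟩
  calc (R : ℝ) ^ s * ‖f x - f (D R c)‖
      ≤ (R : ℝ) ^ s * (L * ‖x - D R c‖) := by gcongr; exact hf.norm_sub_le x (D R c)
    _ = L * ((R : ℝ) ^ s * ‖x - D R c‖) := by ring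
    _ ≤ L * K := by gcongr

theorem not_compressibleAt_of_optRate_lt (h : optRate S < ENNReal.ofReal s) :
    ¬ CompressibleAt S s := fun hS =>
  have hs : 0 < s := ENNReal.ofReal_pos.1 (pos_of_gt h)
  h.not_ge (le_sSup ⟨s, ⟨hs.le, hS⟩, rfl⟩)

end CompressibleAt

section Homothety

variable [NormedAddCommGroup X] [NormedSpace ℝ X] {S : Set X} {x₀ : X} {r s : ℝ}

theorem exists_homothety_image_subset_ball_inter (hbdd : Bornology.IsBounded S)
    (hstar : StarConvex ℝ x₀ S) (hr : 0 < r) :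
    ∃ t : ℝ, t ≠ 0 ∧ AffineMap.homothety x₀ t '' S ⊆ ball x₀ r ∩ S := by
  obtain ⟨ρ, hrρ, hS⟩ := hbdd.subset_ball_lt r x₀
  have hρ : 0 < ρ := hr.trans hrρ
  have ht : 0 < r / ρ := div_pos hr hρ
  refine ⟨r / ρ, ht.ne', ?_⟩
  rintro _ ⟨x, hx, rfl⟩
  constructor
  · calc dist (AffineMap.homothety x₀ (r / ρ) x) x₀
        = r / ρ * dist x x₀ := by
          rw [dist_homothety_center, Real.norm_of_nonneg ht.le, dist_comm]
      _ < r / ρ * ρ := by gcongr; exact hS hx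
      _ = r := div_mul_cancel₀ r hρ.ne'
  · rw [AffineMap.homothety_apply, vsub_eq_sub, vadd_eq_add, add_comm]
    exact hstar.add_smul_sub_mem hx ht.le ((div_le_one hρ).2 hrρ.le)

theorem compressibleAt_of_ball_inter (hbdd : Bornology.IsBounded S) (hstar : StarConvex ℝ x₀ S)
    (hr : 0 < r) (h : CompressibleAt (ball x₀ r ∩ S) s) : CompressibleAt S s := by
  obtain ⟨t, ht, hsub⟩ := exists_homothety_image_subset_ball_inter hbdd hstar hr
  have hlip : LipschitzWith ‖t⁻¹‖₊ (AffineMap.homothety x₀ t⁻¹ : X → X) :=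
    LipschitzWith.of_dist_le_mul fun x y => by
      simp only [AffineMap.homothety_apply, vsub_eq_sub, vadd_eq_add, dist_add_right, dist_smul₀,
        dist_sub_right, coe_nnnorm, le_refl]
  refine ((h.mono hsub).image hlip).mono fun x hx => ⟨_, mem_image_of_mem _ hx, ?_⟩
  rw [← AffineMap.homothety_mul_apply, inv_mul_cancel₀ ht, AffineMap.homothety_one,
    AffineMap.id_apply]

end Homothety

section Residual

variable [NormedAddCommGroup X] {S : Set X} {D : (R : ℕ) → (Fin R → Bool) → X} {s : ℝ} {N : ℕ}

/-- The points that, for every code length `R > N`, lie within `R ^ (-s)` of some codeword of the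
decoder `D R`. The union of these sets over `N` exhausts the points that `D` approximates at rate
`s`; the strict inequality keeps the junk value of `R ^ (-s)` at `R = 0` out. -/
def codewordNhd (D : (R : ℕ) → (Fin R → Bool) → X) (s : ℝ) (N : ℕ) : Set X :=
  ⋂ R > N, ⋃ c, closedBall (D R c) ((R : ℝ) ^ (-s))

theorem mem_codewordNhd {x : X} :
    x ∈ codewordNhd D s N ↔ ∀ R > N, ∃ c, ‖x - D R c‖ ≤ (R : ℝ) ^ (-s) := by
  simp only [codewordNhd, mem_iInter, mem_iUnion, mem_closedBall, dist_eq_norm]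

theorem isClosed_codewordNhd : IsClosed (codewordNhd D s N) :=
  isClosed_biInter fun _ _ => isClosed_iUnion_of_finite fun _ => isClosed_closedBall

theorem compressibleAt_of_subset_codewordNhd (hbdd : Bornology.IsBounded S)
    (hS : S ⊆ codewordNhd D s N) : CompressibleAt S s := by
  obtain ⟨M, hM⟩ := hbdd.exists_norm_le
  obtain ⟨K, hK⟩ := ((finite_Iic N).image fun R : ℕ => (R : ℝ) ^ s * M).bddAbove
  refine compressibleAt_iff_exists_decoder.2
    ⟨fun R c => if N < R then D R c else 0, max 1 K, fun R hR x hx => ?_⟩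
  rcases lt_or_ge N R with hNR | hRN
  · obtain ⟨c, hc⟩ := mem_codewordNhd.1 (hS hx) R hNR
    refine ⟨c, le_max_of_le_left ?_⟩
    calc (R : ℝ) ^ s * ‖x - if N < R then D R c else 0‖
        ≤ (R : ℝ) ^ s * (R : ℝ) ^ (-s) := by rw [if_pos hNR]; gcongr
      _ = 1 := by rw [← Real.rpow_add (Nat.cast_pos.2 hR), add_neg_cancel, Real.rpow_zero]
  · refine ⟨default, le_max_of_le_right ?_⟩
    calc (R : ℝ) ^ s * ‖x - if N < R then D R default else 0‖
        ≤ (R : ℝ) ^ s * M := by rw [if_neg hRN.not_gt, sub_zero]; gcongr; exact hM x hx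
      _ ≤ K := hK (mem_image_of_mem _ hRN)

theorem eventually_residual_notMem_codewordNhd
    (hloc : ∀ x ∈ S, ∀ r > 0, ¬ CompressibleAt (ball x r ∩ S) s) :
    ∀ᶠ x : S in residual S, (x : X) ∉ codewordNhd D s N := by
  have hclosed : IsClosed ((↑) ⁻¹' codewordNhd D s N : Set S) :=
    isClosed_codewordNhd.preimage continuous_subtype_val
  have hint : interior ((↑) ⁻¹' codewordNhd D s N : Set S) = ∅ := by
    refine eq_empty_of_forall_notMem fun x hx => ?_
    rw [mem_interior_iff_mem_nhds, preimage_coe_mem_nhds_subtype, Metric.mem_nhdsWithin_iff] at hx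
    obtain ⟨r, hr, hsub⟩ := hx
    exact hloc x x.2 r hr
      (compressibleAt_of_subset_codewordNhd (isBounded_ball.subset inter_subset_left) hsub)
  exact residual_of_dense_open hclosed.isOpen_compl (interior_eq_empty_iff_dense_compl.1 hint)

theorem eventually_residual_frequently_forall_rpow_lt (D : (R : ℕ) → (Fin R → Bool) → X)
    (hloc : ∀ x ∈ S, ∀ r > 0, ¬ CompressibleAt (ball x r ∩ S) s) :
    ∀ᶠ x : S in residual S, ∃ᶠ R : ℕ in atTop, ∀ c, (R : ℝ) ^ (-s) < ‖(x : X) - D R c‖ := by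
  filter_upwards [eventually_countable_forall.2 fun N =>
    eventually_residual_notMem_codewordNhd (D := D) (N := N) hloc] with x hx
  refine frequently_atTop'.2 fun N => ?_
  simpa only [mem_codewordNhd, not_forall, not_exists, not_le, exists_prop] using hx N

end Residual

theorem exists_of_eventually_residual {α : Type*} [UniformSpace α]
    [(uniformity α).IsCountablyGenerated] {S : Set α} {p : S → Prop} (hcomplete : IsComplete S)
    (hne : S.Nonempty) (h : ∀ᶠ x in residual S, p x) : ∃ x, p x :=
  have : CompleteSpace S := hcomplete.completeSpace_coe
  have : Nonempty S := hne.to_subtype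
  (dense_of_mem_residual h).nonempty

theorem statement15_general [NormedAddCommGroup X] [NormedSpace ℝ X] (S : Set X)
    (hbdd : Bornology.IsBounded S) (hconv : Convex ℝ S) (sStar : ℝ) (hsStar : 0 ≤ sStar)
    (hopt : optRate S = ENNReal.ofReal sStar) (D : (R : ℕ) → (Fin R → Bool) → X) :
    ∀ᶠ x : S in residual S, ∀ ℓ : ℕ, 0 < ℓ →
      {R : ℕ | 0 < R ∧ ∀ c, (R : ℝ) ^ (-(sStar + 1 / (ℓ : ℝ))) ≤ ‖(x : X) - D R c‖}.Infinite := by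
  refine eventually_countable_forall.2 fun ℓ => eventually_imp_distrib_left.2 fun hℓ => ?_
  have hrate : optRate S < ENNReal.ofReal (sStar + 1 / (ℓ : ℝ)) := by
    have : 0 < 1 / (ℓ : ℝ) := by positivity
    rw [hopt]
    exact (ENNReal.ofReal_lt_ofReal_iff (by positivity)).2 (lt_add_of_pos_right sStar this)
  have hloc : ∀ x ∈ S, ∀ r > 0, ¬ CompressibleAt (ball x r ∩ S) (sStar + 1 / (ℓ : ℝ)) :=
    fun x hx r hr h => not_compressibleAt_of_optRate_lt hrate
      (compressibleAt_of_ball_inter hbdd (hconv.starConvex hx) hr h)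
  filter_upwards [eventually_residual_frequently_forall_rpow_lt D hloc] with x hx
  exact Nat.frequently_atTop_iff_infinite.1
    (((eventually_gt_atTop 0).and_frequently hx).mono fun R hR => ⟨hR.1, fun c => (hR.2 c).le⟩)

theorem statement15 {X : Type*} [NormedAddCommGroup X] [NormedSpace ℝ X] [CompleteSpace X]
    (S : Set X) (hne : S.Nonempty) (hclosed : IsClosed S)
    (hbdd : Bornology.IsBounded S) (hconv : Convex ℝ S)
    (sStar : ℝ) (hsStar : 0 ≤ sStar) (hopt : optRate S = ENNReal.ofReal sStar)
    (E : (R : ℕ) → S → (Fin R → Bool)) (D : (R : ℕ) → (Fin R → Bool) → X) :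
    ∃ x : S, ∀ ℓ : ℕ, 0 < ℓ →
      {R : ℕ | 0 < R ∧ (R : ℝ) ^ (-(sStar + 1 / (ℓ : ℝ))) ≤ ‖(x : X) - D R (E R x)‖}.Infinite := by
  obtain ⟨x, hx⟩ := exists_of_eventually_residual hclosed.isComplete hne
    (statement15_general S hbdd hconv sStar hsStar hopt D)
  exact ⟨x, fun ℓ hℓ => (hx ℓ hℓ).mono fun R hR => ⟨hR.1, hR.2 (E R x)⟩⟩
end
end

section
/- Let X be a real Banach space, S ⊆ X, and suppose s* := s*(S, X) < ∞. Let P be a Borel probability measure on S of growth order s*. Then for every codec C = (E_R, D_R)_{R∈ℕ} for S, the set S \ ⋃_{s > s*} A^s(C), i.e., the set of all x ∈ S such that sup_{R∈ℕ} R^s·‖x − D_R(E_R(x))‖ = ∞ for every s > s*, is uncountable. -/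
open MeasureTheory Metric Set ENNReal

noncomputable section

variable {X : Type*}

/-!
Fix a rate `s` above the growth order `s₀` and a constant `K`. The points whose `R`-bit code is
decoded with error at most `K * R ^ (-s)` lie in `2 ^ R` balls of that radius. For `s₀ < t < s` the
growth order bounds the mass of each ball by `2 ^ (-c' * R ^ (s / t))`, and since `1 < s / t` the
total mass tends to zero. So every approximation class of rate above `s₀` is null, and so is their
union, which is monotone in the rate. Points are null too: a point lies in every approximation class
of the codec that always decodes to it. A set of full measure is therefore uncountable.
-/

open Filter Topology

theorem tendsto_rpow_sub_const_mul_rpow_atBot {α β c : ℝ} (hαβ : α < β) (hβ : 0 < β) (hc : 0 < c) :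
    Tendsto (fun x : ℝ => x ^ α - c * x ^ β) atTop atBot := by
  have hfactor : Tendsto (fun x : ℝ => x ^ (-(β - α)) - c) atTop (𝓝 (0 - c)) :=
    (tendsto_rpow_neg_atTop (sub_pos.2 hαβ)).sub_const c
  refine ((tendsto_rpow_atTop hβ).atTop_mul_neg (by linarith) hfactor).congr' ?_
  filter_upwards [eventually_gt_atTop 0] with x hx
  rw [mul_sub, ← Real.rpow_add hx, mul_comm c]
  congr 2
  ring

theorem measure_dist_decode_encode_le {α β ι : Type*} [MeasurableSpace α] [PseudoMetricSpace β]
    [Fintype ι] {μ : Measure α} {f : α → β} (encode : α → ι) (decode : ι → β) {ε : ℝ} {m : ℝ≥0∞}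
    (hball : ∀ i, μ (f ⁻¹' closedBall (decode i) ε) ≤ m) :
    μ {x | dist (f x) (decode (encode x)) ≤ ε} ≤ Fintype.card ι * m := by
  have hcover : {x | dist (f x) (decode (encode x)) ≤ ε} ⊆
      ⋃ i, f ⁻¹' closedBall (decode i) ε :=
    fun x hx => mem_iUnion.2 ⟨encode x, hx⟩
  calc μ {x | dist (f x) (decode (encode x)) ≤ ε}
      ≤ ∑ i, μ (f ⁻¹' closedBall (decode i) ε) :=
        (measure_mono hcover).trans (measure_iUnion_fintype_le _ _)
    _ ≤ Fintype.card ι * m := by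
        simpa using Finset.sum_le_card_nsmul Finset.univ _ m fun i _ => hball i

section Codec

variable [NormedAddCommGroup X] {S : Set X}
  (E : (R : ℕ) → S → (Fin R → Bool)) (D : (R : ℕ) → (Fin R → Bool) → X)

theorem approxClass_antitone : Antitone (approxClass S E D) := by
  rintro s t hst x ⟨K, hK⟩
  refine ⟨K, fun R hR => le_trans ?_ (hK R hR)⟩
  gcongr
  exact Nat.one_le_cast.2 hR

theorem mem_approxClass_const (x : S) (s : ℝ) : x ∈ approxClass S E (fun _ _ => (x : X)) s :=
  ⟨0, fun R _ => by simp⟩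

namespace HasGrowthOrder

variable [MeasurableSpace X] {P : Measure S} {s₀ : ℝ}

theorem exists_eventually_measure_error_le (hP : HasGrowthOrder S P s₀) {s t K : ℝ} (ht : s₀ < t)
    (hs : 0 < s) (hK : 0 < K) :
    ∃ c > 0, ∀ᶠ R : ℕ in atTop, P {x : S | (R : ℝ) ^ s * ‖(x : X) - D R (E R x)‖ ≤ K} ≤
      ENNReal.ofReal (2 ^ ((R : ℝ) - c * (R : ℝ) ^ (s / t))) := by
  obtain ⟨ε₀, c, hε₀, hc, hball⟩ := hP t ht
  have hradius : Tendsto (fun R : ℕ => K * (R : ℝ) ^ (-s)) atTop (𝓝 0) := by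
    simpa using ((tendsto_rpow_neg_atTop hs).comp tendsto_natCast_atTop_atTop).const_mul K
  refine ⟨c * K ^ (-(1 : ℝ) / t), by positivity, ?_⟩
  filter_upwards [hradius.eventually_lt_const hε₀, eventually_gt_atTop 0] with R hR hR0
  have hRpos : (0 : ℝ) < R := Nat.cast_pos.2 hR0
  have herror : {x : S | (R : ℝ) ^ s * ‖(x : X) - D R (E R x)‖ ≤ K} =
      {x : S | dist (x : X) (D R (E R x)) ≤ K * (R : ℝ) ^ (-s)} := by
    ext x
    rw [mem_ofPred_eq, mem_ofPred_eq, dist_eq_norm, Real.rpow_neg hRpos.le, ← div_eq_mul_inv,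
      le_div_iff₀' (by positivity)]
  have hexponent : (K * (R : ℝ) ^ (-s)) ^ (-(1 : ℝ) / t) =
      K ^ (-(1 : ℝ) / t) * (R : ℝ) ^ (s / t) := by
    rw [Real.mul_rpow hK.le (by positivity), ← Real.rpow_mul hRpos.le]
    congr 2
    ring
  rw [herror]
  refine (measure_dist_decode_encode_le (E R) (D R)
    fun b => hball (D R b) _ (by positivity) hR).trans_eq ?_
  rw [hexponent, sub_eq_add_neg, Real.rpow_add two_pos, Real.rpow_natCast,
    ENNReal.ofReal_mul (by positivity)]
  simp [mul_assoc]

theorem tendsto_measure_error_le (hP : HasGrowthOrder S P s₀) (hs₀ : 0 ≤ s₀) {s K : ℝ}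
    (hs : s₀ < s) (hK : 0 < K) :
    Tendsto (fun R : ℕ => P {x : S | (R : ℝ) ^ s * ‖(x : X) - D R (E R x)‖ ≤ K}) atTop (𝓝 0) := by
  obtain ⟨t, hst, hts⟩ := exists_between hs
  have ht : 0 < t := hs₀.trans_lt hst
  obtain ⟨c, hc, hle⟩ := hP.exists_eventually_measure_error_le E D hst (ht.trans hts) hK
  have hone : 1 < s / t := (one_lt_div ht).2 hts
  have hexponent : Tendsto (fun R : ℕ => (R : ℝ) - c * (R : ℝ) ^ (s / t)) atTop atBot := by
    simpa only [Real.rpow_one, Function.comp_def] using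
      (tendsto_rpow_sub_const_mul_rpow_atBot hone (one_pos.trans hone) hc).comp
        tendsto_natCast_atTop_atTop
  have hbound := ENNReal.tendsto_ofReal
    ((tendsto_rpow_atBot_of_base_gt_one 2 one_lt_two).comp hexponent)
  rw [ENNReal.ofReal_zero] at hbound
  exact tendsto_of_tendsto_of_tendsto_of_le_of_le' tendsto_const_nhds hbound
    (.of_forall fun _ => zero_le) hle

theorem measure_approxClass_eq_zero (hP : HasGrowthOrder S P s₀) (hs₀ : 0 ≤ s₀) {s : ℝ}
    (hs : s₀ < s) : P (approxClass S E D s) = 0 := by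
  have hcover : approxClass S E D s ⊆ ⋃ N : ℕ, {x : S | ∀ R : ℕ, 0 < R →
      (R : ℝ) ^ s * ‖(x : X) - D R (E R x)‖ ≤ (N : ℝ) + 1} := by
    rintro x ⟨K, hK⟩
    obtain ⟨N, hN⟩ := exists_nat_ge K
    exact mem_iUnion.2 ⟨N, fun R hR => (hK R hR).trans (by linarith)⟩
  refine measure_mono_null hcover <| measure_iUnion_null fun N => ?_
  refine le_antisymm (ge_of_tendsto (hP.tendsto_measure_error_le E D hs₀ hs N.cast_add_one_pos) ?_)
    zero_le
  filter_upwards [eventually_gt_atTop 0] with R hR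
  exact measure_mono fun x hx => hx R hR

theorem nullSingletonClass (hP : HasGrowthOrder S P s₀) (hs₀ : 0 ≤ s₀) :
    NullSingletonClass P where
  measure_singleton x :=
    measure_mono_null (singleton_subset_iff.2 (mem_approxClass_const (fun _ _ _ => false) x _))
      (hP.measure_approxClass_eq_zero _ _ hs₀ (lt_add_one s₀))

theorem ae_forall_notMem_approxClass (hP : HasGrowthOrder S P s₀) (hs₀ : 0 ≤ s₀) :
    ∀ᵐ x ∂P, ∀ s : ℝ, s₀ < s → x ∉ approxClass S E D s := by
  have hseq : ∀ᵐ x ∂P, ∀ n : ℕ, x ∉ approxClass S E D (s₀ + 1 / ((n : ℝ) + 1)) :=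
    ae_all_iff.2 fun n => measure_eq_zero_iff_ae_notMem.1 <|
      hP.measure_approxClass_eq_zero E D hs₀ (lt_add_of_pos_right _ Nat.one_div_pos_of_nat)
  filter_upwards [hseq] with x hx s hs hxs
  obtain ⟨n, hn⟩ := exists_nat_one_div_lt (sub_pos.2 hs)
  exact hx n (approxClass_antitone E D (by linarith) hxs)

end HasGrowthOrder

theorem statement17_general [MeasurableSpace X] {P : Measure S} [NeZero P] {s₀ : ℝ}
    (hs₀ : 0 ≤ s₀) (hP : HasGrowthOrder S P s₀) :
    ¬ {x : S | ∀ s : ℝ, s₀ < s → x ∉ approxClass S E D s}.Countable := by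
  intro hcountable
  have := hP.nullSingletonClass hs₀
  obtain ⟨x, hx, hx'⟩ :=
    ((hP.ae_forall_notMem_approxClass E D hs₀).and (hcountable.ae_notMem P)).exists
  exact hx' hx

end Codec

theorem statement17 {X : Type*} [NormedAddCommGroup X] [NormedSpace ℝ X] [CompleteSpace X]
    [MeasurableSpace X] [BorelSpace X]
    (S : Set X) (sStar : ℝ) (hsStar : 0 ≤ sStar)
    (hopt : optRate S = ENNReal.ofReal sStar)
    (P : Measure S) [IsProbabilityMeasure P] (hP : HasGrowthOrder S P sStar)
    (E : (R : ℕ) → S → (Fin R → Bool)) (D : (R : ℕ) → (Fin R → Bool) → X) :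
    ¬ ({x : S | ∀ s : ℝ, sStar < s → x ∉ approxClass S E D s}).Countable :=
  statement17_general E D hsStar hP
end
end

section
/- Fix s > 0, and in the real Hilbert space H := ℓ²(ℕ) with standard orthonormal basis (e_n)_{n∈ℕ}, let x_0 := 0 and x_n := (log₂(n+1))^{−s}·e_n for n ∈ ℕ, and set S := {x_n : n ∈ ℕ₀}. Then: (a) the optimal compression rate of S satisfies s*(S, H) = s; yet (b) there exists a single codec C = (E_R, D_R)_{R∈ℕ} for S such that for every σ > 0 and every x ∈ S one has sup_{R∈ℕ} R^σ·‖x − D_R(E_R(x))‖ < ∞, i.e., A^σ(C) = S for every σ > 0. -/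
open MeasureTheory Metric Set ENNReal

noncomputable section

variable {X : Type*}

/-- The sequence `x_0 = 0`, `x_n = (log₂(n+1))^(-s) · e_n` for `n ≥ 1`,
viewed in the Hilbert space `H = ℓ²(ℕ)`. -/
def xseq (s : ℝ) (n : ℕ) : lp (fun _ : ℕ => ℝ) 2 :=
  if n = 0 then 0 else (Real.logb 2 ((n : ℝ) + 1)) ^ (-s) • lp.single 2 n (1 : ℝ)

/- No rate above `s` is possible because `x_0, …, x_{2^R}` are pairwise `(2R)^{-s}`-separated, while
two of these `2^R + 1` points share a code word of length `R`. Conversely, store the index `n` if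
`n < 2^R` and the index `0` otherwise: the worst error is then at most `‖x_{2^R}‖ ≤ R^{-s}`, but
each single point is reproduced exactly as soon as `2^R > n`, so pointwise every rate is attained.
-/

/-- An enumeration of the bit strings of length `R` by the natural numbers below `2 ^ R`; which one
is immaterial. -/
def bitStringEquivFin (R : ℕ) : (Fin R → Bool) ≃ Fin (2 ^ R) :=
  Fintype.equivFinOfCardEq (by simp)

/-- The encoder of the truncation codec of a sequence `x`: it stores an index of the given point,
chosen once and for all by `Set.rangeSplitting`, if this index is below `2 ^ R`, and `0`
otherwise. -/
def indexEncoder (x : ℕ → X) (R : ℕ) (y : Set.range x) : Fin R → Bool :=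
  (bitStringEquivFin R).symm
    (if h : Set.rangeSplitting x y < 2 ^ R then ⟨Set.rangeSplitting x y, h⟩ else 0)

/-- The decoder of the truncation codec of a sequence `x`: it returns the term of `x` at the index
stored by `indexEncoder`. -/
def indexDecoder (x : ℕ → X) (R : ℕ) (b : Fin R → Bool) : X :=
  x (bitStringEquivFin R b)

lemma indexDecoder_indexEncoder_of_lt {x : ℕ → X} {R : ℕ} {y : Set.range x}
    (h : Set.rangeSplitting x y < 2 ^ R) : indexDecoder x R (indexEncoder x R y) = y := by
  simp [indexDecoder, indexEncoder, h, Set.apply_rangeSplitting]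

lemma indexDecoder_indexEncoder_of_le {x : ℕ → X} {R : ℕ} {y : Set.range x}
    (h : 2 ^ R ≤ Set.rangeSplitting x y) : indexDecoder x R (indexEncoder x R y) = x 0 := by
  simp [indexDecoder, indexEncoder, h.not_gt]

section NormedGroup

variable [NormedAddCommGroup X] {S : Set X} {s σ : ℝ}

lemma optRate_eq_ofReal_of_isGreatest
    (h : IsGreatest {σ : ℝ | 0 ≤ σ ∧ CompressibleAt S σ} s) : optRate S = ENNReal.ofReal s :=
  (ENNReal.ofReal_mono.map_isGreatest h).isLUB.sSup_eq

lemma approxClass_eq_univ_of_eventually_decode_encode_eq {E : (R : ℕ) → S → (Fin R → Bool)}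
    {D : (R : ℕ) → (Fin R → Bool) → X} (h : ∀ x : S, ∀ᶠ R in Filter.atTop, D R (E R x) = x)
    (σ : ℝ) : approxClass S E D σ = Set.univ := by
  refine Set.eq_univ_of_forall fun x => ?_
  have hzero : ∀ᶠ R : ℕ in Filter.atTop, (R : ℝ) ^ σ * ‖(x : X) - D R (E R x)‖ ≤ 0 := by
    filter_upwards [h x] with R hR
    rw [hR, sub_self, norm_zero, mul_zero]
  obtain ⟨K, hK⟩ := (Filter.isBoundedUnder_of_eventually_le hzero).bddAbove_range
  exact ⟨K, fun R _ => hK (Set.mem_range_self R)⟩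

lemma CompressibleAt.exists_ne_rpow_mul_norm_sub_le (h : CompressibleAt S σ) :
    ∃ C : ℝ, ∀ R : ℕ, 0 < R → ∀ f : Fin (2 ^ R + 1) → S,
      ∃ i j, i ≠ j ∧ (R : ℝ) ^ σ * ‖(f i : X) - f j‖ ≤ C := by
  obtain ⟨E, D, K, hK⟩ := h
  refine ⟨K + K, fun R hR f => ?_⟩
  obtain ⟨i, j, hij, hcode⟩ :=
    Fintype.exists_ne_map_eq_of_card_lt (fun k => E R (f k)) (by simp)
  refine ⟨i, j, hij, ?_⟩
  calc (R : ℝ) ^ σ * ‖(f i : X) - f j‖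
      ≤ (R : ℝ) ^ σ * (‖(f i : X) - D R (E R (f i))‖ + ‖(f j : X) - D R (E R (f i))‖) := by
        gcongr
        rw [norm_sub_rev (f j : X)]
        exact norm_sub_le_norm_sub_add_norm_sub _ _ _
    _ = (R : ℝ) ^ σ * ‖(f i : X) - D R (E R (f i))‖
          + (R : ℝ) ^ σ * ‖(f j : X) - D R (E R (f j))‖ := by
        rw [mul_add, show E R (f i) = E R (f j) from hcode]
    _ ≤ K + K := add_le_add (hK R hR (f i)) (hK R hR (f j))

lemma CompressibleAt.le_of_separated (h : CompressibleAt S σ) {c : ℝ} (hc : 0 < c)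
    (hsep : ∀ R : ℕ, 0 < R → ∃ f : Fin (2 ^ R + 1) → S,
      Pairwise fun i j => c * (R : ℝ) ^ (-s) ≤ ‖(f i : X) - f j‖) : σ ≤ s := by
  obtain ⟨C, hC⟩ := h.exists_ne_rpow_mul_norm_sub_le
  by_contra! hσ
  have hbound : ∀ R : ℕ, 0 < R → c * (R : ℝ) ^ (σ - s) ≤ C := by
    intro R hR
    obtain ⟨f, hf⟩ := hsep R hR
    obtain ⟨i, j, hij, hle⟩ := hC R hR f
    calc c * (R : ℝ) ^ (σ - s) = (R : ℝ) ^ σ * (c * (R : ℝ) ^ (-s)) := by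
          rw [sub_eq_add_neg, Real.rpow_add (Nat.cast_pos.mpr hR), mul_left_comm]
      _ ≤ (R : ℝ) ^ σ * ‖(f i : X) - f j‖ := by gcongr; exact hf hij
      _ ≤ C := hle
  have hlim : Filter.Tendsto (fun R : ℕ => c * (R : ℝ) ^ (σ - s)) Filter.atTop Filter.atTop :=
    ((tendsto_rpow_atTop (sub_pos.mpr hσ)).comp tendsto_natCast_atTop_atTop).const_mul_atTop hc
  obtain ⟨R, hgt, hR⟩ :=
    ((hlim.eventually_gt_atTop C).and (Filter.eventually_gt_atTop 0)).exists
  exact (hbound R hR).not_gt hgt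

lemma approxClass_indexEncoder_indexDecoder (x : ℕ → X) (σ : ℝ) :
    approxClass (Set.range x) (indexEncoder x) (indexDecoder x) σ = Set.univ := by
  refine approxClass_eq_univ_of_eventually_decode_encode_eq (fun y => ?_) σ
  filter_upwards [Filter.eventually_ge_atTop (Set.rangeSplitting x y)] with R hR
  exact indexDecoder_indexEncoder_of_lt (hR.trans_lt R.lt_two_pow_self)

lemma compressibleAt_range_of_rpow_mul_norm_sub_le {x : ℕ → X} {K : ℝ}
    (h : ∀ R n : ℕ, 0 < R → 2 ^ R ≤ n → (R : ℝ) ^ σ * ‖x n - x 0‖ ≤ K) :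
    CompressibleAt (Set.range x) σ := by
  refine ⟨indexEncoder x, indexDecoder x, K, fun R hR y => ?_⟩
  rcases lt_or_ge (Set.rangeSplitting x y) (2 ^ R) with hlt | hle
  · have hK : 0 ≤ K := le_trans (by positivity) (h R (2 ^ R) hR le_rfl)
    rwa [indexDecoder_indexEncoder_of_lt hlt, sub_self, norm_zero, mul_zero]
  · rw [indexDecoder_indexEncoder_of_le hle, ← Set.apply_rangeSplitting x y]
    exact h R _ hR hle

end NormedGroup

section LogarithmicDecay

lemma le_logb_two_natCast_add_one {R n : ℕ} (h : 2 ^ R ≤ n) :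
    (R : ℝ) ≤ Real.logb 2 ((n : ℝ) + 1) := by
  rw [Real.le_logb_iff_rpow_le one_lt_two (by positivity), Real.rpow_natCast]
  exact_mod_cast h.trans n.le_succ

lemma logb_two_natCast_add_one_le {R n : ℕ} (hR : 0 < R) (h : n ≤ 2 ^ R) :
    Real.logb 2 ((n : ℝ) + 1) ≤ 2 * R := by
  have hpow : n + 1 ≤ 2 ^ (2 * R) :=
    calc n + 1 ≤ 2 ^ R + 2 ^ R := add_le_add h Nat.one_le_two_pow
      _ = 2 ^ (R + 1) := by ring
      _ ≤ 2 ^ (2 * R) := Nat.pow_le_pow_right two_pos (by lia)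
  rw [Real.logb_le_iff_le_rpow one_lt_two (by positivity)]
  exact_mod_cast hpow

variable {s : ℝ} {R n : ℕ}

lemma xseq_zero (s : ℝ) : xseq s 0 = 0 := if_pos rfl

lemma norm_xseq (s : ℝ) (hn : n ≠ 0) : ‖xseq s n‖ = Real.logb 2 ((n : ℝ) + 1) ^ (-s) := by
  have hlog : 0 ≤ Real.logb 2 ((n : ℝ) + 1) := Real.logb_nonneg one_lt_two (by simp)
  rw [xseq, if_neg hn, norm_smul, lp.norm_single two_pos, norm_one, mul_one,
    Real.norm_of_nonneg (by positivity)]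

lemma rpow_mul_norm_xseq_le_one (hs : 0 ≤ s) (hR : 0 < R) (hn : 2 ^ R ≤ n) :
    (R : ℝ) ^ s * ‖xseq s n‖ ≤ 1 := by
  have hR' : (0 : ℝ) < R := Nat.cast_pos.mpr hR
  calc (R : ℝ) ^ s * ‖xseq s n‖ = (R : ℝ) ^ s * Real.logb 2 ((n : ℝ) + 1) ^ (-s) := by
        rw [norm_xseq s ((Nat.two_pow_pos R).trans_le hn).ne']
    _ ≤ (R : ℝ) ^ s * (R : ℝ) ^ (-s) := by
        gcongr ?_ * ?_
        exact Real.rpow_le_rpow_of_nonpos hR' (le_logb_two_natCast_add_one hn) (neg_nonpos.mpr hs)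
    _ = 1 := by rw [← Real.rpow_add hR', add_neg_cancel, Real.rpow_zero]

lemma le_norm_xseq (hs : 0 ≤ s) (hR : 0 < R) (hn₀ : n ≠ 0) (hn : n ≤ 2 ^ R) :
    2 ^ (-s) * (R : ℝ) ^ (-s) ≤ ‖xseq s n‖ := by
  have hlog : 0 < Real.logb 2 ((n : ℝ) + 1) :=
    Real.logb_pos one_lt_two (by simpa using Nat.pos_of_ne_zero hn₀)
  rw [← Real.mul_rpow zero_le_two R.cast_nonneg, norm_xseq s hn₀]
  exact Real.rpow_le_rpow_of_nonpos hlog (logb_two_natCast_add_one_le hR hn) (neg_nonpos.mpr hs)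

lemma xseq_apply_of_ne (s : ℝ) {m : ℕ} (h : m ≠ n) : xseq s n m = 0 := by
  unfold xseq
  split_ifs
  · rfl
  · simp [Pi.single_eq_of_ne h]

lemma norm_xseq_apply_self (s : ℝ) (n : ℕ) : ‖xseq s n n‖ = ‖xseq s n‖ := by
  unfold xseq
  split_ifs
  · simp
  · simp [norm_smul, lp.norm_single]

lemma norm_xseq_le_norm_sub (s : ℝ) {m : ℕ} (h : m ≠ n) : ‖xseq s n‖ ≤ ‖xseq s m - xseq s n‖ :=
  calc ‖xseq s n‖ = ‖(xseq s m - xseq s n) n‖ := by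
        rw [lp.coeFn_sub, Pi.sub_apply, xseq_apply_of_ne s h.symm, zero_sub, norm_neg,
          norm_xseq_apply_self]
    _ ≤ ‖xseq s m - xseq s n‖ := lp.norm_apply_le_norm two_ne_zero _ _

lemma le_norm_xseq_sub_xseq (hs : 0 ≤ s) (hR : 0 < R) {m : ℕ} (hm : m ≤ 2 ^ R) (hn : n ≤ 2 ^ R)
    (hmn : m ≠ n) : 2 ^ (-s) * (R : ℝ) ^ (-s) ≤ ‖xseq s m - xseq s n‖ := by
  rcases eq_or_ne n 0 with hn₀ | hn₀
  · rw [norm_sub_rev]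
    exact (le_norm_xseq hs hR (hn₀ ▸ hmn) hm).trans (norm_xseq_le_norm_sub s hmn.symm)
  · exact (le_norm_xseq hs hR hn₀ hn).trans (norm_xseq_le_norm_sub s hmn)

lemma compressibleAt_range_xseq (hs : 0 ≤ s) : CompressibleAt (Set.range (xseq s)) s :=
  compressibleAt_range_of_rpow_mul_norm_sub_le fun _ _ hR hn => by
    rw [xseq_zero, sub_zero]
    exact rpow_mul_norm_xseq_le_one hs hR hn

lemma le_of_compressibleAt_range_xseq {σ : ℝ} (hs : 0 ≤ s)
    (h : CompressibleAt (Set.range (xseq s)) σ) : σ ≤ s :=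
  h.le_of_separated (Real.rpow_pos_of_pos two_pos (-s)) fun _ hR =>
    ⟨fun k => ⟨xseq s k, Set.mem_range_self _⟩, fun i j hij =>
      le_norm_xseq_sub_xseq hs hR i.is_le j.is_le (Fin.val_ne_of_ne hij)⟩

end LogarithmicDecay

theorem statement18 (s : ℝ) (hs : 0 < s) :
    optRate (Set.range (xseq s)) = ENNReal.ofReal s ∧
    ∃ (E : (R : ℕ) → (Set.range (xseq s)) → (Fin R → Bool))
      (D : (R : ℕ) → (Fin R → Bool) → lp (fun _ : ℕ => ℝ) 2),
      ∀ σ : ℝ, 0 < σ → approxClass (Set.range (xseq s)) E D σ = Set.univ := by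
  have hgreatest : IsGreatest {σ : ℝ | 0 ≤ σ ∧ CompressibleAt (Set.range (xseq s)) σ} s :=
    ⟨⟨hs.le, compressibleAt_range_xseq hs.le⟩,
      fun _ hσ => le_of_compressibleAt_range_xseq hs.le hσ.2⟩
  exact ⟨optRate_eq_ofReal_of_isGreatest hgreatest, indexEncoder (xseq s), indexDecoder (xseq s),
    fun σ _ => approxClass_indexEncoder_indexDecoder (xseq s) σ⟩
end
end

section
/- Let d ∈ ℕ, let Ω ⊆ ℝ^d be measurable, let ρ : ℝ → ℝ be measurable with ρ(0) = 0, and let σ ∈ ℕ. Then there exists a codec C = (E_R, D_R)_{R∈ℕ} for L²(Ω) (in the Banach space L²(Ω)), depending only on d, Ω, ρ, σ, with the following property: for every τ > 0, every δ ∈ (0, 1/τ), and every f ∈ L²(Ω) for which there exists K > 0 with W_ε^{σ,ρ}(f) ≤ K·ε^{−τ} for all ε ∈ (0,1), one has sup_{R∈ℕ} R^{1/τ − δ}·‖f − D_R(E_R(f))‖_{L²(Ω)} < ∞. -/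
open MeasureTheory ENNReal

noncomputable section

/-- A (fully connected feed-forward) neural network with `L` layers and architecture
`N 0, N 1, …, N L` (the data `A ℓ, b ℓ, N ℓ` for `ℓ` beyond the `L` used layers is
irrelevant: it enters neither the realization nor the weight count). -/
structure NeuralNet where
  L : ℕ
  N : ℕ → ℕ
  A : (ℓ : ℕ) → Matrix (Fin (N (ℓ + 1))) (Fin (N ℓ)) ℝ
  b : (ℓ : ℕ) → Fin (N (ℓ + 1)) → ℝ

namespace NeuralNet

/-- The intermediate values `x^(ℓ)` of the forward pass (activation applied after
each affine map). -/
def hidden (ρ : ℝ → ℝ) (Φ : NeuralNet) : (ℓ : ℕ) → (Fin (Φ.N 0) → ℝ) → (Fin (Φ.N ℓ) → ℝ)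
  | 0, x => x
  | ℓ + 1, x => fun i => ρ ((Φ.A ℓ).mulVec (Φ.hidden ρ ℓ x) i + Φ.b ℓ i)

/-- The realization `R_ρ Φ` of the network: the last layer is affine, with no
activation (meaningful when `0 < Φ.L`). -/
def realize (ρ : ℝ → ℝ) (Φ : NeuralNet) (x : Fin (Φ.N 0) → ℝ) :
    Fin (Φ.N (Φ.L - 1 + 1)) → ℝ :=
  fun i => (Φ.A (Φ.L - 1)).mulVec (Φ.hidden ρ (Φ.L - 1) x) i + Φ.b (Φ.L - 1) i

open Classical in
/-- `W(Φ)`: the number of nonzero entries of the matrices `A ℓ` and vectors `b ℓ`. -/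
def weights (Φ : NeuralNet) : ℕ :=
  ∑ ℓ ∈ Finset.range Φ.L,
    ((((Finset.univ : Finset (Fin (Φ.N (ℓ + 1)) × Fin (Φ.N ℓ))).filter
        fun ij => Φ.A ℓ ij.1 ij.2 ≠ 0).card) +
      (((Finset.univ : Finset (Fin (Φ.N (ℓ + 1)))).filter fun i => Φ.b ℓ i ≠ 0).card))

/-- `Φ` is `(σ, W)`-quantized: all entries of the matrices and bias vectors belong to
`[-W^(σ⌈log₂ W⌉), W^(σ⌈log₂ W⌉)] ∩ 2^(-σ⌈log₂ W⌉²) ℤ`. -/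
def IsQuantized (σ W : ℕ) (Φ : NeuralNet) : Prop :=
  ∀ ℓ < Φ.L,
    (∀ i j, |Φ.A ℓ i j| ≤ (W : ℝ) ^ (σ * Nat.clog 2 W) ∧
      ∃ k : ℤ, Φ.A ℓ i j = (k : ℝ) * 2 ^ (-(σ * (Nat.clog 2 W) ^ 2 : ℤ))) ∧
    (∀ i, |Φ.b ℓ i| ≤ (W : ℝ) ^ (σ * Nat.clog 2 W) ∧
      ∃ k : ℤ, Φ.b ℓ i = (k : ℝ) * 2 ^ (-(σ * (Nat.clog 2 W) ^ 2 : ℤ)))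

end NeuralNet

/-- The class `NN_{d,W}^{σ,ρ}` of functions `ℝ^d → ℝ` computed by `(σ, W)`-quantized
networks with at most `W` nonzero weights, input dimension `d` and output dimension `1`. -/
def NNclass (ρ : ℝ → ℝ) (d σ W : ℕ) : Set ((Fin d → ℝ) → ℝ) :=
  {f | ∃ (Φ : NeuralNet) (_ : 0 < Φ.L) (hin : Φ.N 0 = d)
        (hout : Φ.N (Φ.L - 1 + 1) = 1),
        Φ.weights ≤ W ∧ Φ.IsQuantized σ W ∧
        ∀ x : Fin d → ℝ,
          f x = Φ.realize ρ (fun j => x (Fin.cast hin j)) ⟨0, by omega⟩}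

/-- `W_ε^{σ,ρ}(f) ∈ ℕ ∪ {∞}`: the minimal number `W` of nonzero weights of a
`(σ, W)`-quantized network approximating `f` in `L²(Ω)` to within `ε`. -/
def minWeights (ρ : ℝ → ℝ) (d σ : ℕ) (Ω : Set (Fin d → ℝ))
    (f : Lp ℝ 2 (volume.restrict Ω)) (ε : ℝ) : ℕ∞ :=
  sInf ((fun W : ℕ => (W : ℕ∞)) ''
    {W : ℕ | ∃ g ∈ NNclass ρ d σ W,
      eLpNorm (fun z => f z - g z) 2 (volume.restrict Ω) ≤ ENNReal.ofReal ε})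

/-!
Neither the depth nor the width of a network is bounded by its number of nonzero weights, so
networks are counted through an encoding by circuits: the nonzero weights become a list of at most
`W` labelled edges, and only the at most `W` neurons fed by a nonzero weight need a label of their
own, because all other neurons carry the same constant `ρ 0`. Updating all neurons of the circuit
simultaneously recovers the network after as many steps as it has layers. Hence
`NN_{d,W}^{σ,ρ}` has at most `2 ^ O(W log² W)` elements, and `R` bits suffice to point to a best
approximation of `f` among the networks with `W = R ^ (1 - o(1))` weights. The exponent loss
`o(1)` is what `δ` pays for.
-/

section NearestPointCodec

open Filter Asymptotics

lemma exists_nearest_point_codec {X κ : Type*} [PseudoMetricSpace X] [Finite κ] {S : Set X}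
    (hS : S.Nonempty) (hcard : S.encard ≤ ENat.card κ) :
    ∃ (E : X → κ) (D : κ → X), ∀ f, dist f (D (E f)) ≤ Metric.infDist f S := by
  have : Nonempty X := hS.to_type
  rw [← Set.encard_univ] at hcard
  have hfin : S.Finite :=
    Set.encard_lt_top_iff.1 (hcard.trans_lt (Set.encard_lt_top_iff.2 Set.finite_univ))
  have : Nonempty κ := by
    rw [Set.nonempty_iff_univ_nonempty, ← Set.encard_pos]
    exact (Set.encard_pos.2 hS).trans_le hcard
  obtain ⟨code, -, hcode⟩ := hfin.exists_injOn_of_encard_le hcard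
  set D : κ → X := Function.invFunOn code S
  choose E hE using fun f : X => Finite.exists_min fun c => dist f (D c)
  refine ⟨E, D, fun f => (Metric.le_infDist hS).2 fun y hy => ?_⟩
  simpa only [D, hcode.leftInvOn_invFunOn hy] using hE f (code y)

/-- The largest index `n ≤ R` whose description length `b n` fits into `R` bits (and `0` if there
is none). -/
def budget (b : ℕ → ℕ) (R : ℕ) : ℕ := Nat.findGreatest (fun n => b n ≤ R) R

lemma eventually_apply_budget_le (b : ℕ → ℕ) : ∀ᶠ R in atTop, b (budget b R) ≤ R := by
  filter_upwards [eventually_ge_atTop (b 0)] with R hR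
  exact Nat.findGreatest_spec (P := fun n => b n ≤ R) (Nat.zero_le R) hR

lemma tendsto_budget_atTop (b : ℕ → ℕ) : Tendsto (budget b) atTop atTop := by
  refine tendsto_atTop.2 fun n => ?_
  filter_upwards [eventually_ge_atTop n, eventually_ge_atTop (b n)] with R hnR hbR
  exact Nat.le_findGreatest hnR hbR

lemma le_apply_budget_succ_add (b : ℕ → ℕ) (R : ℕ) :
    R ≤ b (budget b R + 1) + (budget b R + 1) := by
  by_contra! h
  exact Nat.findGreatest_is_greatest (P := fun n => b n ≤ R) (Nat.lt_add_one (budget b R))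
    (by omega) (by omega)

lemma isBigO_natCast_add_one_rpow {s : ℝ} (hs : 0 ≤ s) :
    (fun n : ℕ => ((n : ℝ) + 1) ^ s) =O[atTop] fun n : ℕ => (n : ℝ) ^ s := by
  refine IsBigO.rpow hs (.of_forall fun n => n.cast_nonneg) (IsBigO.of_bound 2 ?_)
  filter_upwards [eventually_ge_atTop 1] with n hn
  have : (1 : ℝ) ≤ n := by exact_mod_cast hn
  rw [Real.norm_of_nonneg (by positivity), Real.norm_of_nonneg (by positivity)]
  linarith

lemma isBigO_natCast_budget_rpow {b : ℕ → ℕ} {s : ℝ} (hs : 1 ≤ s)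
    (hb : (fun n => (b n : ℝ)) =O[atTop] fun n : ℕ => (n : ℝ) ^ s) :
    (fun R : ℕ => (R : ℝ)) =O[atTop] fun R => (budget b R : ℝ) ^ s := by
  have hid : (fun n : ℕ => (n : ℝ)) =O[atTop] fun n : ℕ => (n : ℝ) ^ s := by
    refine IsBigO.of_bound' ?_
    filter_upwards [eventually_ge_atTop 1] with n hn
    rw [Real.norm_of_nonneg (by positivity), Real.norm_of_nonneg (by positivity)]
    exact Real.self_le_rpow_of_one_le (by exact_mod_cast hn) hs
  have hshift : (fun n : ℕ => (b (n + 1) : ℝ) + (n + 1 : ℕ)) =O[atTop]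
      fun n : ℕ => (n : ℝ) ^ s := by
    refine ((hb.add hid).comp_tendsto (tendsto_add_atTop_nat 1)).trans ?_
    simpa [Function.comp_def] using isBigO_natCast_add_one_rpow (by linarith)
  refine (IsBigO.of_bound' (.of_forall fun R => ?_)).trans
    (hshift.comp_tendsto (tendsto_budget_atTop b))
  rw [Real.norm_of_nonneg (by positivity), Function.comp_apply,
    Real.norm_of_nonneg (by positivity)]
  exact_mod_cast le_apply_budget_succ_add b R

lemma isBigO_budget_rpow_neg {b : ℕ → ℕ} {α β : ℝ} (hβ : 0 < β) (hβα : β < α)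
    (hb : ∀ s : ℝ, 1 < s → (fun n => (b n : ℝ)) =O[atTop] fun n : ℕ => (n : ℝ) ^ s) :
    (fun R => (budget b R : ℝ) ^ (-α)) =O[atTop] fun R : ℕ => (R : ℝ) ^ (-β) := by
  have hs : 1 < α / β := (one_lt_div hβ).2 hβα
  have hpow : (fun R : ℕ => (R : ℝ) ^ β) =O[atTop] fun R => (budget b R : ℝ) ^ α := by
    have h := (isBigO_natCast_budget_rpow hs.le (hb _ hs)).rpow hβ.le
      (.of_forall fun R => by positivity)
    simpa only [← Real.rpow_mul (Nat.cast_nonneg _), div_mul_cancel₀ _ hβ.ne'] using h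
  simp only [Real.rpow_neg (Nat.cast_nonneg _)]
  refine hpow.inv_rev ?_
  filter_upwards [eventually_gt_atTop 0] with R hR h
  exact absurd h (by positivity)

theorem exists_codec_of_encard_le {X : Type*} [PseudoMetricSpace X] {A : ℕ → Set X} {b : ℕ → ℕ}
    (hne : ∀ n, (A n).Nonempty) (hcard : ∀ n, (A n).encard ≤ 2 ^ b n)
    (hb : ∀ s : ℝ, 1 < s → (fun n => (b n : ℝ)) =O[atTop] fun n : ℕ => (n : ℝ) ^ s) :
    ∃ (E : (R : ℕ) → X → (Fin R → Bool)) (D : (R : ℕ) → (Fin R → Bool) → X),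
      ∀ α β : ℝ, 0 < β → β < α → ∀ f,
        (fun n => Metric.infDist f (A n)) =O[atTop] (fun n : ℕ => (n : ℝ) ^ (-α)) →
        (fun R => dist f (D R (E R f))) =O[atTop] fun R : ℕ => (R : ℝ) ^ (-β) := by
  have : Nonempty X := (hne 0).to_type
  have hcodec (R : ℕ) : ∃ (E : X → (Fin R → Bool)) (D : (Fin R → Bool) → X),
      b (budget b R) ≤ R → ∀ f, dist f (D (E f)) ≤ Metric.infDist f (A (budget b R)) := by
    by_cases hR : b (budget b R) ≤ R
    · have hbits : (A (budget b R)).encard ≤ ENat.card (Fin R → Bool) := by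
        refine (hcard _).trans ?_
        simpa using pow_le_pow_right₀ (one_le_two (α := ℕ∞)) hR
      obtain ⟨E, D, h⟩ := exists_nearest_point_codec (hne _) hbits
      exact ⟨E, D, fun _ => h⟩
    · exact ⟨Classical.arbitrary _, Classical.arbitrary _, fun h => absurd h hR⟩
  choose E D hED using hcodec
  refine ⟨E, D, fun α β hβ hβα f hf => ?_⟩
  have herr : (fun R => dist f (D R (E R f))) =O[atTop]
      fun R => Metric.infDist f (A (budget b R)) := by
    refine IsBigO.of_bound' ?_
    filter_upwards [eventually_apply_budget_le b] with R hR
    rw [Real.norm_of_nonneg dist_nonneg, Real.norm_of_nonneg Metric.infDist_nonneg]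
    exact hED R hR f
  exact (herr.trans (hf.comp_tendsto (tendsto_budget_atTop b))).trans
    (isBigO_budget_rpow_neg hβ hβα hb)

end NearestPointCodec

/-- An edge `(target, source, weight)` between neurons labelled by `ι`, input coordinates labelled
by `κ`, and the constant `1`, with weight in `V`. The source `none` is the constant `1`, so that
the edges starting there are biases. -/
abbrev CircuitEdge (ι κ : Type*) (V : Set ℝ) : Type _ := ι × Option (ι ⊕ κ) × V

/-- A circuit: a list of edges, possibly with cycles, and an output neuron. The list is indexed
by `E`, and its entries `none` are blanks. -/
structure Circuit (E ι κ : Type*) (V : Set ℝ) where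
  edge : E → Option (CircuitEdge ι κ V)
  output : ι

namespace Circuit

variable {E ι κ : Type*} {V : Set ℝ}

/-- The value carried by the source of an edge when the neurons have values `v` and the input
is `x`. -/
def sourceValue (x : κ → ℝ) (v : ι → ℝ) (s : Option (ι ⊕ κ)) : ℝ := s.elim 1 (Sum.elim v x)

section Dynamics

variable [Fintype E] [DecidableEq ι]

/-- The value fed into the activation function of the neuron `i` when the neurons have values `v`
and the input is `x`. -/
def preactivation (c : Circuit E ι κ V) (x : κ → ℝ) (v : ι → ℝ) (i : ι) : ℝ :=
  ∑ k, (c.edge k).elim 0 fun e => if e.1 = i then e.2.2 * sourceValue x v e.2.1 else 0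

/-- The values of the neurons after a number of synchronous updates, starting from `0`. -/
def state (ρ : ℝ → ℝ) (c : Circuit E ι κ V) (x : κ → ℝ) : ℕ → ι → ℝ
  | 0 => 0
  | n + 1 => fun i => ρ (c.preactivation x (c.state ρ x n) i)

/-- The circuit `c` computes `g` if the preactivation of the output neuron, on which no activation
function acts, eventually stabilizes at the value of `g`. -/
def Computes (ρ : ℝ → ℝ) (c : Circuit E ι κ V) (g : (κ → ℝ) → ℝ) : Prop :=
  ∀ x, ∀ᶠ n in Filter.atTop, c.preactivation x (c.state ρ x n) c.output = g x

lemma Computes.unique {ρ : ℝ → ℝ} {c : Circuit E ι κ V} {g g' : (κ → ℝ) → ℝ}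
    (h : c.Computes ρ g) (h' : c.Computes ρ g') : g = g' := by
  funext x
  obtain ⟨n, hn, hn'⟩ := ((h x).and (h' x)).exists
  exact hn.symm.trans hn'

end Dynamics

variable (E ι κ V) in
/-- A circuit is the pair of its edge list and its output neuron. -/
def equivProd : Circuit E ι κ V ≃ (E → Option (CircuitEdge ι κ V)) × ι where
  toFun c := (c.edge, c.output)
  invFun p := ⟨p.1, p.2⟩

instance [Finite E] [Finite ι] [Finite κ] [Finite V] : Finite (Circuit E ι κ V) :=
  Finite.of_equiv _ (equivProd E ι κ V).symm

lemma natCard_eq [Finite E] :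
    Nat.card (Circuit E ι κ V) =
      Nat.card (Option (CircuitEdge ι κ V)) ^ Nat.card E * Nat.card ι := by
  rw [Nat.card_congr (equivProd E ι κ V), Nat.card_prod, Nat.card_fun]

end Circuit

section QuantizedWeights

/-- The grid `[-W^(σ⌈log₂ W⌉), W^(σ⌈log₂ W⌉)] ∩ 2^(-σ⌈log₂ W⌉²) ℤ` of the weights of
`(σ, W)`-quantized networks. -/
def quantizedWeights (σ W : ℕ) : Set ℝ :=
  {a | |a| ≤ (W : ℝ) ^ (σ * Nat.clog 2 W) ∧
    ∃ k : ℤ, a = (k : ℝ) * 2 ^ (-(σ * (Nat.clog 2 W) ^ 2 : ℤ))}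

lemma zero_mem_quantizedWeights (σ W : ℕ) : (0 : ℝ) ∈ quantizedWeights σ W :=
  ⟨by simp, 0, by simp⟩

lemma quantizedWeights_mono (σ : ℕ) {W W' : ℕ} (h : W ≤ W') :
    quantizedWeights σ W ⊆ quantizedWeights σ W' := by
  rintro _ ⟨hb, k, rfl⟩
  have hc : Nat.clog 2 W ≤ Nat.clog 2 W' := Nat.clog_mono_right 2 h
  refine ⟨hb.trans ?_, k * 2 ^ (σ * Nat.clog 2 W' ^ 2 - σ * Nat.clog 2 W ^ 2), ?_⟩
  · rcases W'.eq_zero_or_pos with rfl | hW'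
    · rw [Nat.le_zero.1 h]
    · have h1 : (1 : ℝ) ≤ W' := by exact_mod_cast hW'
      calc (W : ℝ) ^ (σ * Nat.clog 2 W) ≤ (W' : ℝ) ^ (σ * Nat.clog 2 W) := by gcongr
        _ ≤ (W' : ℝ) ^ (σ * Nat.clog 2 W') := pow_le_pow_right₀ h1 (by gcongr)
  · have hle : σ * Nat.clog 2 W ^ 2 ≤ σ * Nat.clog 2 W' ^ 2 := by gcongr
    push_cast
    rw [mul_assoc, ← zpow_natCast, ← zpow_add₀ two_ne_zero]
    congr 2
    push_cast [hle]
    ring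

lemma quantizedWeights_subset_image_Icc (σ W : ℕ) :
    quantizedWeights σ W ⊆
      (fun k : ℤ => (k : ℝ) * 2 ^ (-(σ * (Nat.clog 2 W) ^ 2 : ℤ))) ''
        (Finset.Icc (-(2 ^ (2 * (σ * Nat.clog 2 W ^ 2)) : ℕ) : ℤ)
          (2 ^ (2 * (σ * Nat.clog 2 W ^ 2)) : ℕ)) := by
  rintro _ ⟨hb, k, rfl⟩
  refine ⟨k, ?_, rfl⟩
  have hW : (W : ℝ) ≤ 2 ^ Nat.clog 2 W := by exact_mod_cast Nat.le_pow_clog one_lt_two W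
  have hpos : (0 : ℝ) < 2 ^ (σ * Nat.clog 2 W ^ 2) := by positivity
  have hscale : (2 : ℝ) ^ (-(σ * (Nat.clog 2 W) ^ 2 : ℤ)) = (2 ^ (σ * Nat.clog 2 W ^ 2))⁻¹ := by
    rw [zpow_neg]
    norm_cast
  rw [hscale, abs_mul, abs_inv, abs_of_pos hpos, ← div_eq_mul_inv, div_le_iff₀ hpos] at hb
  have hk : (|k| : ℝ) ≤ 2 ^ (2 * (σ * Nat.clog 2 W ^ 2)) := by
    calc (|k| : ℝ) ≤ (2 ^ Nat.clog 2 W) ^ (σ * Nat.clog 2 W) * 2 ^ (σ * Nat.clog 2 W ^ 2) := by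
          refine hb.trans ?_
          gcongr
      _ = 2 ^ (2 * (σ * Nat.clog 2 W ^ 2)) := by
          rw [← pow_mul, ← pow_add]
          ring
  rw [Finset.mem_coe, Finset.mem_Icc, ← abs_le]
  exact_mod_cast hk

lemma finite_quantizedWeights (σ W : ℕ) : (quantizedWeights σ W).Finite :=
  ((Finset.finite_toSet _).image _).subset (quantizedWeights_subset_image_Icc σ W)

lemma ncard_quantizedWeights_le (σ W : ℕ) :
    (quantizedWeights σ W).ncard ≤ 2 ^ (2 * (σ * Nat.clog 2 W ^ 2) + 2) := by
  set M : ℕ := 2 ^ (2 * (σ * Nat.clog 2 W ^ 2)) with hM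
  calc (quantizedWeights σ W).ncard
      ≤ (Finset.Icc (-(M : ℤ)) M).card := by
        rw [← Set.ncard_coe_finset]
        exact (Set.ncard_le_ncard (quantizedWeights_subset_image_Icc σ W)
          ((Finset.finite_toSet _).image _)).trans (Set.ncard_image_le (Finset.finite_toSet _))
    _ = 2 * M + 1 := by
        rw [Int.card_Icc]
        omega
    _ ≤ 2 ^ (2 * (σ * Nat.clog 2 W ^ 2) + 2) := by
        have : 1 ≤ M := Nat.one_le_two_pow
        rw [pow_add, ← hM]
        omega

end QuantizedWeights

namespace NeuralNet

section CircuitEncoding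

/-- The neurons of all layers except the input layer. -/
abbrev Neuron (Φ : NeuralNet) : Type := Σ ℓ : Fin Φ.L, Fin (Φ.N (ℓ + 1))

/-- The positions of all weights, each given by its layer, its row, and its column; the column
`none` stands for the bias. -/
abbrev Position (Φ : NeuralNet) : Type :=
  Σ ℓ : Fin Φ.L, Fin (Φ.N (ℓ + 1)) × Option (Fin (Φ.N ℓ))

variable (Φ : NeuralNet)

/-- The weight at a given position. -/
def weightAt (p : Φ.Position) : ℝ := p.2.2.elim (Φ.b p.1 p.2.1) (Φ.A p.1 p.2.1)

/-- The neuron into which a weight feeds. -/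
def target (p : Φ.Position) : Φ.Neuron := ⟨p.1, p.2.1⟩

open Classical in
/-- The positions of the nonzero weights. -/
def support : Finset Φ.Position := Finset.univ.filter fun p => Φ.weightAt p ≠ 0

lemma card_support : Φ.support.card = Φ.weights := by
  classical
  rw [support, Finset.card_filter, weights, Finset.sum_range, Fintype.sum_sigma]
  refine Finset.sum_congr rfl fun ℓ _ => ?_
  simp only [Finset.card_filter, Fintype.sum_prod_type, Fintype.sum_option, weightAt,
    Option.elim, Finset.sum_add_distrib]
  rw [add_comm]
  congr!

/-- A labelling of the neurons that gives every neuron fed by a nonzero weight a label of its own.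
The remaining neurons may share their labels, since they all have the same constant value. -/
def IsLabelling {ι : Type*} (label : Φ.Neuron → ι) : Prop :=
  ∀ p ∈ Φ.support, ∀ u, label (Φ.target p) = label u → Φ.target p = u

lemma exists_isLabelling {W : ℕ} (hW : Φ.weights ≤ W) :
    ∃ label : Φ.Neuron → Fin (W + 1), Φ.IsLabelling label := by
  classical
  set fed := Φ.support.image Φ.target
  have hcard : fed.card ≤ W := Finset.card_image_le.trans (Φ.card_support.trans_le hW)
  obtain ⟨e⟩ : Nonempty (fed ↪ Fin W) :=
    Function.Embedding.nonempty_of_card_le (by simpa using hcard)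
  refine ⟨fun u => if h : u ∈ fed then (e ⟨u, h⟩).castSucc else Fin.last W, fun p hp u h => ?_⟩
  have hpa : Φ.target p ∈ fed := Finset.mem_image_of_mem _ hp
  by_cases hu : u ∈ fed
  · simpa [hpa, hu] using h
  · simp only [hpa, hu, dif_pos, dif_neg, not_false_eq_true] at h
    exact absurd h (Fin.castSucc_lt_last _).ne

variable {E ι : Type*}

/-- The label of the `j`-th neuron of layer `ℓ`, where the neurons of layer `0` are the input
coordinates. -/
def layerLabel (label : Φ.Neuron → ι) :
    (ℓ : ℕ) → ℓ < Φ.L → Fin (Φ.N ℓ) → ι ⊕ Fin (Φ.N 0)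
  | 0, _, j => Sum.inr j
  | ℓ + 1, h, j => Sum.inl (label ⟨⟨ℓ, by omega⟩, j⟩)

/-- The label of the source of a weight. -/
def sourceLabel (label : Φ.Neuron → ι) (p : Φ.Position) : Option (ι ⊕ Fin (Φ.N 0)) :=
  p.2.2.map (Φ.layerLabel label p.1 p.1.2)

/-- The circuit whose edges are the nonzero weights of `Φ`, written into the entries of the edge
list given by `slot`. -/
def toCircuit {V : Set ℝ} (label : Φ.Neuron → ι) (slot : Φ.support → E)
    (hV : ∀ p, Φ.weightAt p ∈ V) (out : Φ.Neuron) : Circuit E ι (Fin (Φ.N 0)) V where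
  edge := Function.extend slot
    (fun p => some (label (Φ.target p), Φ.sourceLabel label p, ⟨Φ.weightAt p, hV p⟩))
    fun _ => none
  output := label out

lemma sum_ite_target_eq (F : Φ.Position → ℝ) (ℓ : Fin Φ.L) (i : Fin (Φ.N (ℓ + 1))) :
    (∑ p, if Φ.target p = ⟨ℓ, i⟩ then F p else 0) =
      ∑ j, F ⟨ℓ, i, some j⟩ + F ⟨ℓ, i, none⟩ := by
  rw [Fintype.sum_sigma, Finset.sum_eq_single ℓ, Fintype.sum_prod_type, Finset.sum_eq_single i,
    Fintype.sum_option]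
  · simp [target, add_comm]
  · intro i' _ hi'
    simp [target, hi']
  · simp
  · intro ℓ' _ hℓ'
    exact Finset.sum_eq_zero fun y _ => if_neg fun h => hℓ' (congrArg Sigma.fst h)
  · simp

variable [Fintype E] [DecidableEq ι] {V : Set ℝ} {label : Φ.Neuron → ι} {slot : Φ.support → E}

lemma preactivation_toCircuit_eq_sum (hlabel : Φ.IsLabelling label) (hslot : slot.Injective)
    (hV : ∀ p, Φ.weightAt p ∈ V) (out u : Φ.Neuron) (x : Fin (Φ.N 0) → ℝ) (v : ι → ℝ) :
    (Φ.toCircuit label slot hV out).preactivation x v (label u) =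
      ∑ p, if Φ.target p = u then
        Φ.weightAt p * Circuit.sourceValue x v (Φ.sourceLabel label p) else 0 := by
  set F : Φ.Position → ℝ := fun p => if Φ.target p = u then
    Φ.weightAt p * Circuit.sourceValue x v (Φ.sourceLabel label p) else 0
  have hsupport : ∑ p : Φ.support, F p = ∑ p, F p := by
    rw [Finset.sum_coe_sort Φ.support F]
    refine Finset.sum_subset (Finset.subset_univ _) fun p _ hp => ?_
    have : Φ.weightAt p = 0 := by simpa [support] using hp
    simp [F, this]
  refine Eq.trans (Eq.symm ?_) hsupport
  refine Fintype.sum_of_injective slot hslot _ _ (fun k hk => ?_) fun p => ?_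
  · simp only [toCircuit]
    rw [Function.extend_apply' _ _ _ (by simpa using hk)]
    rfl
  · have htarget : label (Φ.target p) = label u ↔ Φ.target p = u :=
      ⟨hlabel p p.2 u, congrArg label⟩
    simp only [toCircuit, hslot.extend_apply, Option.elim, htarget, F]

lemma preactivation_toCircuit (hlabel : Φ.IsLabelling label) (hslot : slot.Injective)
    (hV : ∀ p, Φ.weightAt p ∈ V) (out : Φ.Neuron) (x : Fin (Φ.N 0) → ℝ) (v : ι → ℝ)
    (ℓ : Fin Φ.L) (i : Fin (Φ.N (ℓ + 1))) :
    (Φ.toCircuit label slot hV out).preactivation x v (label ⟨ℓ, i⟩) =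
      (Φ.A ℓ).mulVec
        (fun j => Circuit.sourceValue x v (some (Φ.layerLabel label ℓ ℓ.2 j))) i + Φ.b ℓ i := by
  rw [Φ.preactivation_toCircuit_eq_sum hlabel hslot, sum_ite_target_eq]
  simp [weightAt, sourceLabel, Circuit.sourceValue, Matrix.mulVec, dotProduct]

lemma sourceValue_state_toCircuit (hlabel : Φ.IsLabelling label) (hslot : slot.Injective)
    (hV : ∀ p, Φ.weightAt p ∈ V) (out : Φ.Neuron) (ρ : ℝ → ℝ) (x : Fin (Φ.N 0) → ℝ)
    {ℓ n : ℕ} (hℓ : ℓ < Φ.L) (hn : ℓ ≤ n) (j : Fin (Φ.N ℓ)) :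
    Circuit.sourceValue x ((Φ.toCircuit label slot hV out).state ρ x n)
      (some (Φ.layerLabel label ℓ hℓ j)) = Φ.hidden ρ ℓ x j := by
  induction ℓ generalizing n with
  | zero => rfl
  | succ ℓ ih =>
    obtain ⟨n, rfl⟩ := Nat.exists_eq_add_of_le' (Nat.one_le_of_lt hn)
    change ρ ((Φ.toCircuit label slot hV out).preactivation x _ (label ⟨⟨ℓ, by omega⟩, j⟩)) =
      ρ ((Φ.A ℓ).mulVec (Φ.hidden ρ ℓ x) j + Φ.b ℓ j)
    rw [Φ.preactivation_toCircuit hlabel hslot]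
    simp only [ih (Nat.lt_of_succ_lt hℓ) (Nat.le_of_succ_le_succ hn)]

lemma computes_toCircuit (hlabel : Φ.IsLabelling label) (hslot : slot.Injective)
    (hV : ∀ p, Φ.weightAt p ∈ V) (ρ : ℝ → ℝ) (hL : 0 < Φ.L) (i : Fin (Φ.N (Φ.L - 1 + 1))) :
    (Φ.toCircuit label slot hV ⟨⟨Φ.L - 1, by omega⟩, i⟩).Computes ρ
      fun x => Φ.realize ρ x i := by
  intro x
  filter_upwards [Filter.eventually_ge_atTop (Φ.L - 1)] with n hn
  refine (Φ.preactivation_toCircuit hlabel hslot hV _ x _ ⟨Φ.L - 1, by omega⟩ i).trans ?_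
  simp only [Φ.sourceValue_state_toCircuit hlabel hslot hV _ ρ x _ hn, realize]

end CircuitEncoding

lemma measurable_hidden {ρ : ℝ → ℝ} (hρ : Measurable ρ) (Φ : NeuralNet) (ℓ : ℕ) :
    Measurable (Φ.hidden ρ ℓ) := by
  induction ℓ with
  | zero => exact measurable_id
  | succ ℓ ih =>
    have hA : Measurable (Φ.A ℓ).mulVec :=
      (continuous_const.matrix_mulVec continuous_id).measurable
    exact measurable_pi_lambda _ fun i =>
      hρ.comp (((measurable_pi_apply i).comp (hA.comp ih)).add_const _)

lemma measurable_realize {ρ : ℝ → ℝ} (hρ : Measurable ρ) (Φ : NeuralNet) :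
    Measurable (Φ.realize ρ) := by
  have hA : Measurable (Φ.A (Φ.L - 1)).mulVec :=
    (continuous_const.matrix_mulVec continuous_id).measurable
  exact measurable_pi_lambda _ fun i =>
    ((measurable_pi_apply i).comp (hA.comp (Φ.measurable_hidden hρ _))).add_const _

end NeuralNet

section Counting

open Filter Asymptotics

lemma exists_circuit_computes {ρ : ℝ → ℝ} {d σ W : ℕ} {g : (Fin d → ℝ) → ℝ}
    (hg : g ∈ NNclass ρ d σ W) :
    ∃ c : Circuit (Fin W) (Fin (W + 1)) (Fin d) (quantizedWeights σ W), c.Computes ρ g := by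
  obtain ⟨Φ, hL, rfl, hout, hW, hΦ, hg⟩ := hg
  obtain ⟨label, hlabel⟩ := Φ.exists_isLabelling hW
  obtain ⟨slot⟩ : Nonempty (Φ.support ↪ Fin W) :=
    Function.Embedding.nonempty_of_card_le (by simpa [Φ.card_support] using hW)
  have hV : ∀ p, Φ.weightAt p ∈ quantizedWeights σ W := by
    rintro ⟨ℓ, i, _ | j⟩
    · exact (hΦ ℓ ℓ.2).2 i
    · exact (hΦ ℓ ℓ.2).1 i j
  rw [funext hg]
  exact ⟨_, Φ.computes_toCircuit hlabel slot.injective hV ρ hL _⟩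

/-- A number of bits that suffices to describe the functions in `NNclass ρ d σ W`. -/
def codeLength (d σ W : ℕ) : ℕ := (2 * σ + d + 6) * ((W + 1) * (Nat.clog 2 W + 1) ^ 2)

lemma succ_le_two_pow_clog_succ (n : ℕ) : n + 1 ≤ 2 ^ (Nat.clog 2 n + 1) := by
  have hn : n ≤ 2 ^ Nat.clog 2 n := Nat.le_pow_clog one_lt_two n
  have hone : 1 ≤ 2 ^ Nat.clog 2 n := Nat.one_le_two_pow
  omega

lemma natCard_option_circuitEdge_le (d σ W : ℕ) :
    Nat.card (Option (CircuitEdge (Fin (W + 1)) (Fin d) (quantizedWeights σ W))) ≤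
      2 ^ (2 * Nat.clog 2 W + d + 6 + 2 * (σ * Nat.clog 2 W ^ 2)) := by
  have := (finite_quantizedWeights σ W).to_subtype
  set c := Nat.clog 2 W
  have htarget : W + 1 ≤ 2 ^ (c + 1) := succ_le_two_pow_clog_succ W
  have hsource : W + 1 + d + 1 ≤ 2 ^ (c + 1 + d + 1) := by
    have : d < 2 ^ d := Nat.lt_two_pow_self
    have : 1 ≤ 2 ^ (c + 1) := Nat.one_le_two_pow
    rw [pow_succ, pow_add]
    nlinarith
  simp only [Finite.card_option, Nat.card_prod, Nat.card_sum, Nat.card_fin, Nat.card_coe_set_eq]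
  calc (W + 1) * ((W + 1 + d + 1) * (quantizedWeights σ W).ncard) + 1
      ≤ 2 ^ (c + 1) * (2 ^ (c + 1 + d + 1) * 2 ^ (2 * (σ * c ^ 2) + 2)) +
        2 ^ (c + 1) * (2 ^ (c + 1 + d + 1) * 2 ^ (2 * (σ * c ^ 2) + 2)) := by
        gcongr
        · exact ncard_quantizedWeights_le σ W
        · exact Nat.succ_le_of_lt (by positivity)
    _ = 2 ^ (2 * c + d + 6 + 2 * (σ * c ^ 2)) := by ring

lemma natCard_circuit_le (d σ W : ℕ) :
    Nat.card (Circuit (Fin W) (Fin (W + 1)) (Fin d) (quantizedWeights σ W)) ≤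
      2 ^ codeLength d σ W := by
  set c := Nat.clog 2 W with hc
  have hedge : 2 * c + d + 6 + 2 * (σ * c ^ 2) ≤ (2 * σ + d + 6) * (c + 1) ^ 2 := by nlinarith
  have hlabel : c + 1 ≤ (2 * σ + d + 6) * (c + 1) ^ 2 := by nlinarith
  rw [Circuit.natCard_eq, Nat.card_fin, Nat.card_fin]
  calc Nat.card (Option (CircuitEdge (Fin (W + 1)) (Fin d) (quantizedWeights σ W))) ^ W * (W + 1)
      ≤ (2 ^ (2 * c + d + 6 + 2 * (σ * c ^ 2))) ^ W * 2 ^ (c + 1) := by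
        gcongr
        · exact natCard_option_circuitEdge_le d σ W
        · exact succ_le_two_pow_clog_succ W
    _ ≤ (2 ^ ((2 * σ + d + 6) * (c + 1) ^ 2)) ^ W * 2 ^ ((2 * σ + d + 6) * (c + 1) ^ 2) := by
        gcongr <;> exact one_le_two
    _ = 2 ^ codeLength d σ W := by
        rw [← pow_mul, ← pow_add, codeLength, ← hc]
        ring

theorem encard_NNclass_le (ρ : ℝ → ℝ) (d σ W : ℕ) :
    (NNclass ρ d σ W).encard ≤ 2 ^ codeLength d σ W := by
  have := (finite_quantizedWeights σ W).to_subtype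
  choose code hcode using fun g : NNclass ρ d σ W => exists_circuit_computes g.2
  have hinj : code.Injective := fun g g' h =>
    Subtype.ext ((hcode g).unique (h ▸ hcode g'))
  calc (NNclass ρ d σ W).encard
      ≤ ENat.card (Circuit (Fin W) (Fin (W + 1)) (Fin d) (quantizedWeights σ W)) :=
        ENat.card_le_card_of_injective hinj
    _ ≤ 2 ^ codeLength d σ W := by
        rw [ENat.card_eq_coe_natCard]
        exact_mod_cast natCard_circuit_le d σ W

lemma isBigO_clog_add_one_rpow {r : ℝ} (hr : 0 < r) :
    (fun n : ℕ => (Nat.clog 2 n : ℝ) + 1) =O[atTop] fun n : ℕ => (n : ℝ) ^ r := by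
  have hconst : (fun _ : ℕ => (2 : ℝ)) =O[atTop] fun n : ℕ => (n : ℝ) ^ r :=
    (isLittleO_const_left.2 (.inr (tendsto_norm_atTop_atTop.comp
      ((tendsto_rpow_atTop hr).comp tendsto_natCast_atTop_atTop)))).isBigO
  have hlog : (fun n : ℕ => Real.logb 2 n) =O[atTop] fun n : ℕ => (n : ℝ) ^ r := by
    simp only [Real.logb, div_eq_inv_mul]
    exact ((isLittleO_log_rpow_atTop hr).isBigO.comp_tendsto
      tendsto_natCast_atTop_atTop).const_mul_left _
  refine IsBigO.trans (IsBigO.of_bound' ?_) (hlog.add hconst)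
  filter_upwards [eventually_ge_atTop 1] with n hn
  have hlogb : 0 ≤ Real.logb 2 n := Real.logb_nonneg one_lt_two (by exact_mod_cast hn)
  have hceil : (Nat.clog 2 n : ℝ) < Real.logb 2 n + 1 := by
    rw [← Real.natCeil_logb_natCast]
    exact_mod_cast Nat.ceil_lt_add_one hlogb
  rw [Real.norm_of_nonneg (by positivity), Real.norm_of_nonneg (by positivity)]
  linarith

lemma isBigO_codeLength_rpow (d σ : ℕ) {s : ℝ} (hs : 1 < s) :
    (fun n => (codeLength d σ n : ℝ)) =O[atTop] fun n : ℕ => (n : ℝ) ^ s := by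
  have hlin : (fun n : ℕ => (n : ℝ) + 1) =O[atTop] fun n : ℕ => (n : ℝ) := by
    simpa only [Real.rpow_one] using isBigO_natCast_add_one_rpow zero_le_one
  have hclog := isBigO_clog_add_one_rpow (r := (s - 1) / 2) (by linarith)
  refine ((hlin.mul (hclog.pow 2)).const_mul_left (2 * σ + d + 6)).congr'
    (.of_forall fun n => by push_cast [codeLength]; rfl) ?_
  filter_upwards [eventually_gt_atTop 0] with n hn
  have hn' : (0 : ℝ) < n := by exact_mod_cast hn
  rw [← Real.rpow_natCast, ← Real.rpow_mul hn'.le]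
  nth_rw 1 [← Real.rpow_one (n : ℝ)]
  rw [← Real.rpow_add hn']
  congr 1
  push_cast
  ring

end Counting

section BestApproximation

open Filter Asymptotics

lemma measurable_of_mem_NNclass {ρ : ℝ → ℝ} (hρ : Measurable ρ) {d σ W : ℕ}
    {g : (Fin d → ℝ) → ℝ} (hg : g ∈ NNclass ρ d σ W) : Measurable g := by
  obtain ⟨Φ, -, rfl, hout, -, -, hg⟩ := hg
  rw [funext hg]
  exact measurable_pi_iff.1 (Φ.measurable_realize hρ) _

lemma zero_mem_NNclass (ρ : ℝ → ℝ) (d σ W : ℕ) : (fun _ => 0) ∈ NNclass ρ d σ W := by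
  refine ⟨⟨1, fun n => if n = 0 then d else 1, fun _ => 0, fun _ => 0⟩, one_pos, rfl, rfl,
    ?_, fun ℓ _ => ⟨fun _ _ => zero_mem_quantizedWeights σ W,
      fun _ => zero_mem_quantizedWeights σ W⟩, fun x => ?_⟩
  · simp [NeuralNet.weights]
  · simp only [NeuralNet.realize, Matrix.mulVec, dotProduct, Matrix.zero_apply, zero_mul,
      Finset.sum_const_zero, Pi.zero_apply, add_zero]

lemma NNclass_mono (ρ : ℝ → ℝ) (d σ : ℕ) {W W' : ℕ} (h : W ≤ W') :
    NNclass ρ d σ W ⊆ NNclass ρ d σ W' := by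
  rintro g ⟨Φ, hL, hin, hout, hW, hΦ, hg⟩
  exact ⟨Φ, hL, hin, hout, hW.trans h,
    fun ℓ hℓ => ⟨fun i j => quantizedWeights_mono σ h ((hΦ ℓ hℓ).1 i j),
      fun i => quantizedWeights_mono σ h ((hΦ ℓ hℓ).2 i)⟩, hg⟩

/-- The elements of `Lᵖ(μ)` that are represented by a function in `S`. -/
def lpClasses {α F : Type*} [MeasurableSpace α] [NormedAddCommGroup F] (S : Set (α → F))
    (p : ℝ≥0∞) (μ : Measure α) : Set (Lp F p μ) :=
  {h | ∃ g ∈ S, h =ᵐ[μ] g}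

section LpClasses

variable {α F : Type*} [MeasurableSpace α] [NormedAddCommGroup F] {S : Set (α → F)}
  {p : ℝ≥0∞} {μ : Measure α}

lemma encard_lpClasses_le : (lpClasses S p μ).encard ≤ S.encard := by
  choose! rep hrep using fun (h : Lp F p μ) (hh : h ∈ lpClasses S p μ) => hh
  exact Set.encard_le_encard_of_injOn (fun h hh => (hrep h hh).1) fun h hh h' hh' heq =>
    Lp.ext ((hrep h hh).2.trans (heq ▸ (hrep h' hh').2.symm))

lemma infDist_lpClasses_le [Fact (1 ≤ p)] {f : Lp F p μ} {g : α → F} {ε : ℝ} (hε : 0 ≤ ε)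
    (hg : g ∈ S) (hgm : AEStronglyMeasurable g μ)
    (hfg : eLpNorm (fun z => f z - g z) p μ ≤ ENNReal.ofReal ε) :
    Metric.infDist f (lpClasses S p μ) ≤ ε := by
  have hdiff : MemLp (fun z => f z - g z) p μ :=
    ⟨(Lp.aestronglyMeasurable f).sub hgm, hfg.trans_lt ENNReal.ofReal_lt_top⟩
  have hmem : MemLp g p μ := by
    simpa [Pi.sub_def] using (Lp.memLp f).sub hdiff
  have hclass : hmem.toLp g ∈ lpClasses S p μ := ⟨g, hg, hmem.coeFn_toLp⟩
  refine (Metric.infDist_le_dist_of_mem hclass).trans ?_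
  rw [Lp.dist_def]
  refine ENNReal.toReal_le_of_le_ofReal hε (le_of_eq_of_le (eLpNorm_congr_ae ?_) hfg)
  exact (EventuallyEq.refl _ f).sub hmem.coeFn_toLp

end LpClasses

variable {ρ : ℝ → ℝ} {d σ : ℕ} {Ω : Set (Fin d → ℝ)} {f : Lp ℝ 2 (volume.restrict Ω)}

lemma exists_mem_NNclass_of_minWeights_le {ε : ℝ} {W : ℕ} (h : minWeights ρ d σ Ω f ε ≤ W) :
    ∃ g ∈ NNclass ρ d σ W,
      eLpNorm (fun z => f z - g z) 2 (volume.restrict Ω) ≤ ENNReal.ofReal ε := by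
  have hlt (m : ℕ∞) : m < W + 1 ↔ m ≤ W := ENat.lt_add_one_iff (ENat.natCast_ne_top W)
  obtain ⟨_, ⟨W', ⟨g, hg, hfg⟩, rfl⟩, hW'⟩ := sInf_lt_iff.1 ((hlt _).2 h)
  exact ⟨g, NNclass_mono ρ d σ (Nat.cast_le.1 ((hlt _).1 hW')) hg, hfg⟩

lemma infDist_le_of_minWeights_le (hρ : Measurable ρ) {ε : ℝ} (hε : 0 ≤ ε) {W : ℕ}
    (h : minWeights ρ d σ Ω f ε ≤ W) :
    Metric.infDist f (lpClasses (NNclass ρ d σ W) 2 (volume.restrict Ω)) ≤ ε := by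
  obtain ⟨g, hg, hfg⟩ := exists_mem_NNclass_of_minWeights_le h
  exact infDist_lpClasses_le hε hg (measurable_of_mem_NNclass hρ hg).aestronglyMeasurable hfg

lemma isBigO_infDist_of_minWeights_le (hρ : Measurable ρ) {τ K : ℝ} (hτ : 0 < τ) (hK : 0 < K)
    (hf : ∀ ε : ℝ, 0 < ε → ε < 1 →
      ENat.toENNReal (minWeights ρ d σ Ω f ε) ≤ ENNReal.ofReal (K * ε ^ (-τ))) :
    (fun W => Metric.infDist f (lpClasses (NNclass ρ d σ W) 2 (volume.restrict Ω)))
      =O[atTop] fun W : ℕ => (W : ℝ) ^ (-(1 / τ)) := by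
  refine IsBigO.of_bound (K ^ (1 / τ)) ?_
  filter_upwards [tendsto_natCast_atTop_atTop.eventually_gt_atTop K] with W hKW
  have hW : (0 : ℝ) < W := hK.trans hKW
  have hε : 0 < (K / W) ^ (1 / τ) := by positivity
  have hε1 : (K / W) ^ (1 / τ) < 1 :=
    Real.rpow_lt_one (by positivity) ((div_lt_one hW).2 hKW) (by positivity)
  have hvalue : K * ((K / W) ^ (1 / τ)) ^ (-τ) = W := by
    rw [← Real.rpow_mul (by positivity), show 1 / τ * -τ = -1 by field_simp, Real.rpow_neg_one]
    field_simp
  have hmin : minWeights ρ d σ Ω f ((K / W) ^ (1 / τ)) ≤ W := by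
    rw [← ENat.toENNReal_le]
    simpa only [hvalue, ENNReal.ofReal_natCast, ENat.toENNReal_coe] using hf _ hε hε1
  rw [Real.norm_of_nonneg Metric.infDist_nonneg, Real.norm_of_nonneg (by positivity)]
  calc Metric.infDist f (lpClasses (NNclass ρ d σ W) 2 (volume.restrict Ω))
      ≤ (K / W) ^ (1 / τ) := infDist_le_of_minWeights_le hρ hε.le hmin
    _ = K ^ (1 / τ) * (W : ℝ) ^ (-(1 / τ)) := by
      rw [Real.div_rpow hK.le hW.le, Real.rpow_neg hW.le, div_eq_mul_inv]

end BestApproximation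

theorem statement19_general (d : ℕ) (Ω : Set (Fin d → ℝ)) (ρ : ℝ → ℝ) (hρ : Measurable ρ)
    (σ : ℕ) :
    ∃ (E : (R : ℕ) → Lp ℝ 2 (volume.restrict Ω) → (Fin R → Bool))
      (D : (R : ℕ) → (Fin R → Bool) → Lp ℝ 2 (volume.restrict Ω)),
      ∀ τ : ℝ, 0 < τ → ∀ δ : ℝ, 0 < δ → δ < 1 / τ →
        ∀ f : Lp ℝ 2 (volume.restrict Ω),
          (∃ K : ℝ, 0 < K ∧ ∀ ε : ℝ, 0 < ε → ε < 1 →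
            ENat.toENNReal (minWeights ρ d σ Ω f ε) ≤ ENNReal.ofReal (K * ε ^ (-τ))) →
          ∃ K' : ℝ, ∀ R : ℕ, 0 < R →
            (R : ℝ) ^ (1 / τ - δ) * ‖f - D R (E R f)‖ ≤ K' := by
  obtain ⟨E, D, hED⟩ := exists_codec_of_encard_le
    (A := fun W => lpClasses (NNclass ρ d σ W) 2 (volume.restrict Ω))
    (fun W => ⟨0, _, zero_mem_NNclass ρ d σ W, Lp.coeFn_zero ℝ 2 _⟩)
    (fun W => encard_lpClasses_le.trans (encard_NNclass_le ρ d σ W))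
    (fun s hs => isBigO_codeLength_rpow d σ hs)
  refine ⟨E, D, fun τ hτ δ hδ hδτ f ⟨K, hK, hf⟩ => ?_⟩
  obtain ⟨K', -, hK'⟩ := Asymptotics.bound_of_isBigO_nat_atTop <|
    hED (1 / τ) (1 / τ - δ) (sub_pos.2 hδτ) (sub_lt_self _ hδ) f
      (isBigO_infDist_of_minWeights_le hρ hτ hK hf)
  refine ⟨K', fun R hR => ?_⟩
  have hpos : (0 : ℝ) < (R : ℝ) ^ (1 / τ - δ) := by positivity
  have hbound := hK' (x := R) (by rw [Real.rpow_neg R.cast_nonneg]; positivity)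
  rwa [Real.rpow_neg R.cast_nonneg, norm_inv, Real.norm_of_nonneg hpos.le,
    Real.norm_of_nonneg dist_nonneg, ← div_eq_mul_inv, le_div_iff₀' hpos, dist_eq_norm] at hbound

theorem statement19 (d : ℕ) (hd : 0 < d) (Ω : Set (Fin d → ℝ)) (hΩ : MeasurableSet Ω)
    (ρ : ℝ → ℝ) (hρ : Measurable ρ) (hρ0 : ρ 0 = 0) (σ : ℕ) (hσ : 0 < σ) :
    ∃ (E : (R : ℕ) → Lp ℝ 2 (volume.restrict Ω) → (Fin R → Bool))
      (D : (R : ℕ) → (Fin R → Bool) → Lp ℝ 2 (volume.restrict Ω)),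
      ∀ τ : ℝ, 0 < τ → ∀ δ : ℝ, 0 < δ → δ < 1 / τ →
        ∀ f : Lp ℝ 2 (volume.restrict Ω),
          (∃ K : ℝ, 0 < K ∧ ∀ ε : ℝ, 0 < ε → ε < 1 →
            ENat.toENNReal (minWeights ρ d σ Ω f ε) ≤ ENNReal.ofReal (K * ε ^ (-τ))) →
          ∃ K' : ℝ, ∀ R : ℕ, 0 < R →
            (R : ℝ) ^ (1 / τ - δ) * ‖f - D R (E R f)‖ ≤ K' :=
  statement19_general d Ω ρ hρ σ
end
end
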